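/- Case D: Let l be a prime with l ≡ 3 (mod 4) and l > 3, let r ≥ 1, and let N = 2 l^r (so p is odd). Assume f = φ(N)/2, and set h = h(Q(√-l)). If l ≡ 7 (mod 8) then G(χ) = (-1)^{r(p-1)/2} · √p* · p^{(f-1)/2}. If l ≡ 3 (mod 8) then there exist integers a, b with 4p^h = a² + l b² and a ≡ -2 p^{(l-1+2h)/4} (mod l) such that G(χ) = (-1)^{(r+1)(p-1)/2} · √p* · p^{(f-1)/2 - h} · ((a + b √-l)/2)². -/

import Mathlib

open Complex Polynomial IntermediateField

/-- The complex primitive `p`-th root of unity `exp(2πi/p)`. -/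
noncomputable def zetaP (p : ℕ) : ℂ := Complex.exp (2 * Real.pi * Complex.I / p)

/-- The Gauss sum `G(χ^λ) = ∑_{x ∈ F, x ≠ 0} χ^λ(x) ζ_p^{T(x)}`, where
`T` is the trace map from `F` down to `ZMod p`. -/
noncomputable def gaussSumN (p : ℕ) {F : Type} [Field F] [Fintype F] [Algebra (ZMod p) F]
    (χ : MulChar F ℂ) (lam : ℕ) : ℂ :=
  letI : DecidableEq F := Classical.decEq F
  ∑ x ∈ Finset.univ.filter (fun x : F => x ≠ 0),
    (χ ^ lam) x * zetaP p ^ (Algebra.trace (ZMod p) F x).val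

/-- `√-m = i√m ∈ ℂ`. -/
noncomputable def sqrtNeg (m : ℕ) : ℂ := Real.sqrt m * Complex.I

theorem sqrtNeg_sq (m : ℕ) : sqrtNeg m ^ 2 = -(m : ℂ) := by
  have h : ((Real.sqrt m : ℝ) : ℂ) ^ 2 = ((m : ℝ) : ℂ) := by
    rw [← Complex.ofReal_pow, Real.sq_sqrt (by positivity)]
  simp only [sqrtNeg, mul_pow, Complex.I_sq, h]
  push_cast
  ring

theorem isIntegral_sqrtNeg (m : ℕ) : IsIntegral ℚ (sqrtNeg m) := by
  refine ⟨X ^ 2 + C (m : ℚ), monic_X_pow_add_C _ (by norm_num), ?_⟩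
  simp [sqrtNeg_sq]

/-- The class number `h(ℚ(√-m))` of the quadratic field `ℚ(√-m) ⊆ ℂ`. -/
noncomputable def classNumSqrtNeg (m : ℕ) : ℕ :=
  haveI : FiniteDimensional ℚ ℚ⟮sqrtNeg m⟯ :=
    IntermediateField.adjoin.finiteDimensional (isIntegral_sqrtNeg m)
  haveI : CharZero ℚ⟮sqrtNeg m⟯ :=
    charZero_of_injective_algebraMap (algebraMap ℚ ℚ⟮sqrtNeg m⟯).injective
  haveI : NumberField ℚ⟮sqrtNeg m⟯ := ⟨⟩
  NumberField.classNumber ℚ⟮sqrtNeg m⟯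

/-- `√p* = √p` if `p ≡ 1 (mod 4)` and `i√p` if `p ≡ 3 (mod 4)`. -/
noncomputable def sqrtPStar (p : ℕ) : ℂ :=
  if p % 4 = 1 then (Real.sqrt p : ℂ) else (Real.sqrt p : ℂ) * Complex.I


section basics
variable {p : ℕ} [hp : Fact p.Prime]

theorem zetaP_prim : IsPrimitiveRoot (zetaP p) p := Complex.isPrimitiveRoot_exp p hp.out.ne_zero

variable (p) in
/-- the standard additive character on `F`. -/
noncomputable def psiF (F : Type) [Field F] [Algebra (ZMod p) F] : AddChar F ℂ :=
  (AddChar.zmodChar p (zetaP_prim (p := p)).pow_eq_one).compAddMonoidHom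
    (Algebra.trace (ZMod p) F).toAddMonoidHom

variable {F : Type} [Field F] [Algebra (ZMod p) F]

theorem psiF_apply (x : F) : psiF p F x = zetaP p ^ (Algebra.trace (ZMod p) F x).val := by
  simp [psiF, AddChar.zmodChar_apply]

variable [Fintype F]

theorem gaussSumN_eq (χ : MulChar F ℂ) : gaussSumN p χ 1 = gaussSum χ (psiF p F) := by
  classical
  unfold gaussSumN gaussSum
  rw [Finset.sum_filter]
  refine Finset.sum_congr rfl fun x _ => ?_
  rw [psiF_apply, pow_one]
  split_ifs with h
  · rfl
  · push Not at h
    rw [h, MulChar.map_zero, zero_mul]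

theorem psiF_ne_one : psiF p F ≠ 1 := by
  intro h
  obtain ⟨x, hx⟩ := Algebra.trace_surjective (ZMod p) F 1
  have h1 := psiF_apply (p := p) x
  rw [h, hx] at h1
  have := hp.out.one_lt
  have hF : Fact (1 < p) := ⟨this⟩
  rw [ZMod.val_one, AddChar.one_apply, pow_one] at h1
  exact (zetaP_prim (p := p)).ne_one this h1.symm

theorem psiF_prim : (psiF p F).IsPrimitive := AddChar.IsPrimitive.of_ne_one psiF_ne_one

theorem psiF_frob (x : F) : psiF p F (x ^ p) = psiF p F x := by
  have : CharP F p := charP_of_injective_algebraMap (algebraMap (ZMod p) F).injective p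
  rw [psiF_apply, psiF_apply]
  congr 2
  have := Algebra.trace_eq_of_algEquiv (FiniteField.frobeniusAlgEquivOfAlgebraic (ZMod p) F) x
  simpa [ZMod.card] using this

end basics

section partE

theorem integral_of_valuation (x : ℂ) (h : ∀ V : ValuationSubring ℂ, x ∈ V) : IsIntegral ℤ x := by
  have h1 : x ∈ (⨅ V : {V : ValuationSubring ℂ // (∅ : Set ℂ) ⊆ V.toSubring}, V.1.toSubring) := by
    rw [Subring.mem_iInf]
    intro V
    exact h V.1
  rw [iInf_valuationSubring_superset] at h1
  have h2 : IsIntegral (Subring.closure (∅ : Set ℂ)) x := h1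
  obtain ⟨P, hP, hPx⟩ := h2
  have hsurj : Function.Surjective (Int.castRingHom (Subring.closure (∅ : Set ℂ))) := by
    rintro ⟨y, hy⟩
    rw [Subring.closure_empty] at hy
    obtain ⟨n, hn⟩ := Subring.mem_bot.1 hy
    exact ⟨n, Subtype.ext (by simpa using hn)⟩
  have hlift : P ∈ Polynomial.lifts (Int.castRingHom (Subring.closure (∅ : Set ℂ))) := by
    rw [Polynomial.lifts_iff_coeff_lifts]
    exact fun n => hsurj _
  obtain ⟨Q, hQ, -, hQm⟩ := Polynomial.lifts_and_degree_eq_and_monic hlift hP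
  refine ⟨Q, hQm, ?_⟩
  rw [← hQ, Polynomial.eval₂_map] at hPx
  have h3 : (algebraMap ℤ ℂ) = (algebraMap (Subring.closure (∅ : Set ℂ)) ℂ).comp
      (Int.castRingHom (Subring.closure (∅ : Set ℂ))) := RingHom.ext_int _ _
  rw [h3]
  exact hPx

theorem isAlgClosed_residue (V : ValuationSubring ℂ) : IsAlgClosed (IsLocalRing.ResidueField V) := by
  refine IsAlgClosed.of_exists_root _ fun P hP hirr => ?_
  have hlift : P ∈ Polynomial.lifts (IsLocalRing.residue V) := by
    rw [Polynomial.lifts_iff_coeff_lifts]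
    exact fun n => IsLocalRing.residue_surjective _
  obtain ⟨Q, hQ, hdeg, hQm⟩ := Polynomial.lifts_and_degree_eq_and_monic hlift hP
  have hd : (Q.map (algebraMap V ℂ)).degree ≠ 0 := by
    rw [hQm.degree_map, hdeg]
    exact (Polynomial.degree_pos_of_irreducible hirr).ne'
  obtain ⟨z, hz⟩ := IsAlgClosed.exists_root _ hd
  have hzint : IsIntegral V z := ⟨Q, hQm, by rwa [Polynomial.IsRoot, Polynomial.eval_map] at hz⟩
  obtain ⟨y, rfl⟩ := IsIntegrallyClosed.isIntegral_iff.1 hzint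
  refine ⟨IsLocalRing.residue V y, ?_⟩
  rw [Polynomial.IsRoot, Polynomial.eval_map, Polynomial.eval₂_at_apply] at hz
  have : Polynomial.eval y Q = 0 := by
    exact (FaithfulSMul.algebraMap_injective V ℂ) (by simpa using hz)
  rw [← hQ, Polynomial.eval_map, Polynomial.eval₂_at_apply, this, map_zero]

variable {p : ℕ} [hp : Fact p.Prime] {F : Type} [Field F] [Algebra (ZMod p) F] [Fintype F]

theorem mem_of_pow_eq_one (V : ValuationSubring ℂ) {z : ℂ} {n : ℕ} (hn : 0 < n) (hz : z ^ n = 1) :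
    z ∈ V := by
  have hzint : IsIntegral V z := IsIntegral.of_pow hn (by rw [hz]; exact isIntegral_one)
  obtain ⟨y, rfl⟩ := IsIntegrallyClosed.isIntegral_iff.1 hzint
  exact y.2

theorem exists_teich (V : ValuationSubring ℂ) (hV : V.valuation (p : ℂ) < 1) :
    ∃ (ι : F →+* IsLocalRing.ResidueField V) (ω : MulChar F ℂ) (ωV : F → V),
      (∀ x, ω x = ωV x) ∧ (∀ x, IsLocalRing.residue V (ωV x) = ι x) ∧
      (∀ χ : MulChar F ℂ, ∃ k : ℕ, χ = ω ^ k) ∧ orderOf ω = Fintype.card F - 1 := by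
  classical
  have := isAlgClosed_residue V
  have hchar : CharP (IsLocalRing.ResidueField V) p := by
    refine (CharP.charP_iff_prime_eq_zero hp.out).2 ?_
    have : ((p : V) : ℂ) = (p : ℂ) := by simp
    rw [← this, ← ValuationSubring.valuation_lt_one_iff] at hV
    rw [← map_natCast (IsLocalRing.residue V), IsLocalRing.residue_eq_zero_iff]
    exact hV
  let _ : Algebra (ZMod p) (IsLocalRing.ResidueField V) := ZMod.algebra _ p
  let ι : F →+* IsLocalRing.ResidueField V :=
    (IsAlgClosed.lift (R := ZMod p) (S := F) (M := IsLocalRing.ResidueField V)).toRingHom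
  obtain ⟨g, hg⟩ := IsCyclic.exists_generator (α := Fˣ)
  set n := Fintype.card F - 1 with hn
  have hn0 : 0 < n := by have := Fintype.one_lt_card (α := F); omega
  have hnz : NeZero n := ⟨hn0.ne'⟩
  have hcardu : Fintype.card Fˣ = n := by rw [Fintype.card_units]
  -- primitive root in V
  have hξ := Complex.isPrimitiveRoot_exp n hn0.ne'
  set ξ := Complex.exp (2 * Real.pi * Complex.I / n)
  have hξV : ξ ∈ V := mem_of_pow_eq_one V hn0 hξ.pow_eq_one
  have hξ' : IsPrimitiveRoot (⟨ξ, hξV⟩ : V) n :=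
    IsPrimitiveRoot.of_map_of_injective (f := algebraMap V ℂ) (by exact hξ)
      (FaithfulSMul.algebraMap_injective V ℂ)
  have hprod := congrArg (Polynomial.eval₂ (IsLocalRing.residue V) (ι g))
    (Polynomial.X_pow_sub_one_eq_prod hn0 hξ')
  have hgn : (g : F) ^ n = 1 := by
    rw [← hcardu, ← Units.val_pow_eq_pow_val, pow_card_eq_one, Units.val_one]
  rw [Polynomial.eval₂_finsetProd] at hprod
  simp only [Polynomial.eval₂_sub, Polynomial.eval₂_X_pow, Polynomial.eval₂_one, Polynomial.eval₂_X,
    Polynomial.eval₂_C, ← map_pow, hgn, map_one, sub_self] at hprod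
  obtain ⟨η, hη, hηg⟩ := Finset.prod_eq_zero_iff.1 hprod.symm
  rw [Polynomial.mem_nthRootsFinset hn0] at hη
  replace hηg : IsLocalRing.residue V η = ι g := (sub_eq_zero.1 hηg).symm
  have hordg : orderOf g = n := by
    rw [orderOf_eq_card_of_forall_mem_zpowers hg, Nat.card_eq_fintype_card, hcardu]
  have hηprim : IsPrimitiveRoot (η : ℂ) n := by
    refine ⟨by exact_mod_cast congrArg (Subtype.val) hη, fun m hm => ?_⟩
    have hm' : η ^ m = 1 := Subtype.ext (by exact_mod_cast hm)
    have h2 := congrArg (IsLocalRing.residue V) hm'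
    rw [map_pow, hηg, map_one, ← map_pow, ← map_one ι] at h2
    have h3 := ι.injective h2
    rw [← hordg]
    apply orderOf_dvd_of_pow_eq_one
    ext
    simpa using h3
  have hμ : hηprim.toRootsOfUnity.1 ∈ rootsOfUnity (Fintype.card Fˣ) ℂ := by
    rw [hcardu]; exact hηprim.toRootsOfUnity.2
  let ω : MulChar F ℂ := MulChar.ofRootOfUnity hμ hg
  have hωg : ω g = η := by
    have := MulChar.ofRootOfUnity_spec hμ hg
    rw [this]; rfl
  have hall : ∀ χ : MulChar F ℂ, ∃ k : ℕ, χ = ω ^ k := by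
    intro χ
    have h1 : (χ g) ^ n = 1 := by rw [← map_pow, hgn, map_one]
    obtain ⟨k, -, hk⟩ := hηprim.eq_pow_of_pow_eq_one h1
    refine ⟨k, (MulChar.eq_iff hg _ _).2 ?_⟩
    rw [MulChar.pow_apply_coe, hωg, hk]
  have hωV : ∀ x, ω x ∈ V := by
    intro x
    by_cases hx : x = 0
    · rw [hx, MulChar.map_zero]; exact V.zero_mem
    · refine mem_of_pow_eq_one V hn0 ?_
      rw [← map_pow, hn, FiniteField.pow_card_sub_one_eq_one x hx, map_one]
  refine ⟨ι, ω, fun x => ⟨ω x, hωV x⟩, fun x => rfl, ?_, hall, ?_⟩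
  · intro x
    by_cases hx : x = 0
    · subst hx
      rw [map_zero]
      convert map_zero (IsLocalRing.residue V)
      exact Subtype.ext (MulChar.map_zero ω)
    · obtain ⟨m, hm⟩ := (mem_powers_iff_mem_zpowers.2 (hg (Units.mk0 x hx)))
      have hxm : x = (g : F) ^ m := by
        have := congrArg Units.val hm
        simpa using this.symm
      have : (⟨ω x, hωV x⟩ : V) = η ^ m := by
        apply Subtype.ext
        simp only [hxm, map_pow, hωg]
        norm_cast
      change IsLocalRing.residue V (⟨ω x, hωV x⟩ : V) = ι x
      rw [this, map_pow, hηg, hxm, map_pow]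
  · apply Nat.dvd_antisymm
    · apply orderOf_dvd_of_pow_eq_one
      rw [MulChar.eq_iff hg, MulChar.pow_apply_coe, hωg]
      rw [hηprim.pow_eq_one]; simp
    · have := congrArg (fun χ : MulChar F ℂ => χ g) (pow_orderOf_eq_one ω)
      simp only [MulChar.pow_apply_coe, hωg, MulChar.one_apply_coe] at this
      exact hηprim.dvd_of_pow_eq_one _ this

end partE

section partE2
variable {p : ℕ} [hp : Fact p.Prime]

theorem val_le_of_prim (V : ValuationSubring ℂ) {z w : ℂ} (hz : IsPrimitiveRoot z p)
    (hw : IsPrimitiveRoot w p) : V.valuation (1 - w) ≤ V.valuation (1 - z) := by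
  have : NeZero p := ⟨hp.out.ne_zero⟩
  obtain ⟨i, -, hi⟩ := hz.eq_pow_of_pow_eq_one hw.pow_eq_one
  have hzV : z ∈ V := mem_of_pow_eq_one V hp.out.pos hz.pow_eq_one
  have h1 : (1 - w) = (1 - z) * ∑ j ∈ Finset.range i, z ^ j := by
    rw [mul_neg_geom_sum, hi]
  rw [h1, map_mul]
  refine mul_le_of_le_one_right' ?_
  rw [ValuationSubring.valuation_le_one_iff]
  exact sum_mem fun j _ => pow_mem hzV j

theorem val_p (V : ValuationSubring ℂ) :
    V.valuation (p : ℂ) = V.valuation (1 - zetaP p) ^ (p - 1) := by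
  have hz := zetaP_prim (p := p)
  have h1 : (p : ℂ) = ∏ μ ∈ primitiveRoots p ℂ, (1 - μ) := by
    have h2 := Polynomial.eval_one_cyclotomic_prime (R := ℂ) (p := p)
    rw [Polynomial.cyclotomic_eq_prod_X_sub_primitiveRoots hz, Polynomial.eval_prod] at h2
    simpa using h2.symm
  rw [h1, map_prod, Finset.prod_congr rfl (g := fun _ => V.valuation (1 - zetaP p)),
    Finset.prod_const, hz.card_primitiveRoots, Nat.totient_prime hp.out]
  intro μ hμ
  have hμ' := (mem_primitiveRoots hp.out.pos).1 hμ
  exact le_antisymm (val_le_of_prim V hz hμ') (val_le_of_prim V hμ' hz)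

variable {F : Type} [Field F] [Algebra (ZMod p) F] [Fintype F]

theorem psiF_expand (V : ValuationSubring ℂ) (n : ℕ) :
    ∃ y ∈ V, zetaP p ^ n = 1 + (zetaP p - 1) * n + (zetaP p - 1) ^ 2 * y := by
  have hzV : zetaP p ∈ V := mem_of_pow_eq_one V hp.out.pos (zetaP_prim (p := p)).pow_eq_one
  induction n with
  | zero => exact ⟨0, V.zero_mem, by simp⟩
  | succ n ih =>
    obtain ⟨y, hy, h⟩ := ih
    have hn : (n : ℂ) ∈ V := natCast_mem V n
    refine ⟨zetaP p * y + n, V.add_mem _ _ (V.mul_mem _ _ hzV hy) hn, ?_⟩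
    rw [pow_succ, h]
    push_cast
    ring

theorem sum_inv_trace {f : ℕ} (hf : 0 < f) (hcard : Fintype.card F = p ^ f) :
    ∑ x : F, x⁻¹ * algebraMap (ZMod p) F (Algebra.trace (ZMod p) F x) = -1 := by
  have hfr : Module.finrank (ZMod p) F = f := by
    have h := Module.card_eq_pow_finrank (K := ZMod p) (V := F)
    rw [ZMod.card, hcard] at h
    exact (Nat.pow_right_injective hp.out.two_le h).symm
  have h1 : ∀ x : F, x⁻¹ * algebraMap (ZMod p) F (Algebra.trace (ZMod p) F x)
      = ∑ i ∈ Finset.range f, x ^ (p ^ i) * x⁻¹ := by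
    intro x
    rw [FiniteField.algebraMap_trace_eq_sum_pow, hfr, Nat.card_eq_fintype_card, ZMod.card,
      Finset.mul_sum]
    exact Finset.sum_congr rfl fun i _ => mul_comm _ _
  rw [Finset.sum_congr rfl fun x _ => h1 x, Finset.sum_comm]
  have h2 : ∀ i ∈ Finset.range f, ∑ x : F, x ^ (p ^ i) * x⁻¹ = if i = 0 then -1 else 0 := by
    intro i hi
    split_ifs with h0
    · subst h0
      classical
      have h4 := FiniteField.sum_pow_units F 0
      simp only [pow_zero, dvd_zero, if_true] at h4
      rw [← h4]
      have h5 : ∀ x : F, x ^ (p ^ 0) * x⁻¹ = if x ≠ 0 then 1 else 0 := by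
        intro x
        split_ifs with hx
        · simp [hx]
        · simp at hx; simp [hx]
      rw [Finset.sum_congr rfl fun x _ => h5 x]
      rw [Finset.sum_boole, Finset.sum_const, Finset.card_univ, Fintype.card_units, nsmul_eq_mul,
        mul_one, Finset.filter_ne', Finset.card_erase_of_mem (Finset.mem_univ _), Finset.card_univ]
    · have hpi : 1 < p ^ i := Nat.one_lt_pow h0 hp.out.one_lt
      have h5 : ∀ x : F, x ^ (p ^ i) * x⁻¹ = x ^ (p ^ i - 1) := by
        intro x
        by_cases hx : x = 0
        · subst hx; rw [zero_pow (by omega), zero_pow (by omega), zero_mul]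
        · exact (pow_sub₀ x hx hpi.le).trans (by rw [pow_one]) |>.symm
      rw [Finset.sum_congr rfl fun x _ => h5 x]
      apply FiniteField.sum_pow_lt_card_sub_one
      rw [hcard]
      have : p ^ i < p ^ f := Nat.pow_lt_pow_right hp.out.one_lt (Finset.mem_range.1 hi)
      omega
  rw [Finset.sum_congr rfl h2, Finset.sum_ite_eq' ]
  simp [hf]

theorem val_gauss_one (V : ValuationSubring ℂ) (hV : V.valuation (p : ℂ) < 1)
    {f : ℕ} (hf : 0 < f) (hcard : Fintype.card F = p ^ f) (hq : 2 < p ^ f)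
    (ι : F →+* IsLocalRing.ResidueField V) (ω : MulChar F ℂ) (ωV : F → V)
    (h1 : ∀ x, ω x = ωV x) (h2 : ∀ x, IsLocalRing.residue V (ωV x) = ι x)
    (h3 : orderOf ω = Fintype.card F - 1) :
    V.valuation (gaussSum ω⁻¹ (psiF p F)) = V.valuation (1 - zetaP p) := by
  choose y hyV hy using psiF_expand (p := p) V
  let tr : F → ℕ := fun x => (Algebra.trace (ZMod p) F x).val
  have hinv : ∀ x, ω⁻¹ x = ωV x⁻¹ := fun x => by rw [MulChar.inv_apply', h1]
  have hne : ω⁻¹ ≠ 1 := by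
    intro h
    rw [inv_eq_one] at h
    rw [h, orderOf_one] at h3
    omega
  let u : V := ∑ x, ωV x⁻¹ * (tr x : V)
  let z : V := ∑ x, ωV x⁻¹ * ⟨y (tr x), hyV (tr x)⟩
  have hzV : zetaP p ∈ V := mem_of_pow_eq_one V hp.out.pos (zetaP_prim (p := p)).pow_eq_one
  let π : V := ⟨zetaP p, hzV⟩ - 1
  have hG : gaussSum ω⁻¹ (psiF p F) = (zetaP p - 1) * ((u + π * z : V) : ℂ) := by
    have hπ : (π : ℂ) = zetaP p - 1 := rfl
    have hu : (u : ℂ) = ∑ x, ω⁻¹ x * (tr x : ℂ) := by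
      simp [u, hinv]
    have hz : (z : ℂ) = ∑ x, ω⁻¹ x * y (tr x) := by
      simp [z, hinv]
    have hsum := MulChar.sum_eq_zero_of_ne_one hne
    unfold gaussSum
    have : ∀ x, ω⁻¹ x * psiF p F x = ω⁻¹ x + (zetaP p - 1) * (ω⁻¹ x * (tr x : ℂ)) +
        (zetaP p - 1) ^ 2 * (ω⁻¹ x * y (tr x)) := by
      intro x
      rw [psiF_apply, hy]
      simp only [tr]
      ring
    rw [Finset.sum_congr rfl fun x _ => this x, Finset.sum_add_distrib, Finset.sum_add_distrib,
      hsum, ← Finset.mul_sum, ← Finset.mul_sum, ← hu, ← hz]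
    push_cast
    rw [hπ]
    ring
  have hπlt : V.valuation (π : ℂ) < 1 := by
    rw [val_p] at hV
    have hπ : (π : ℂ) = -(1 - zetaP p) := by simp [π]
    rw [hπ, Valuation.map_neg]
    by_contra hcon
    push Not at hcon
    exact absurd hV (not_lt.2 (one_le_pow_of_one_le' hcon _))
  have hunit : V.valuation ((u + π * z : V) : ℂ) = 1 := by
    rw [← ValuationSubring.valuation_eq_one_iff]
    have hπ0 : IsLocalRing.residue V π = 0 := by
      rw [IsLocalRing.residue_eq_zero_iff, ValuationSubring.valuation_lt_one_iff]
      exact hπlt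
    have : IsLocalRing.residue V (u + π * z) = -1 := by
      rw [map_add, map_mul, hπ0, zero_mul, add_zero]
      simp only [u, map_sum, map_mul, h2, map_natCast]
      have := congrArg ι (sum_inv_trace (F := F) hf hcard)
      rw [map_sum, map_neg, map_one] at this
      rw [← this]
      refine Finset.sum_congr rfl fun x _ => ?_
      rw [map_mul, ← map_natCast ι]
      congr 2
      simp only [tr]
      rw [← map_natCast (algebraMap (ZMod p) F), ZMod.natCast_zmod_val]
    by_contra hnu
    have h0 : IsLocalRing.residue V (u + π * z) = 0 := by
      rw [IsLocalRing.residue_eq_zero_iff]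
      exact (IsLocalRing.mem_maximalIdeal _).2 hnu
    rw [h0] at this
    simp at this
  rw [hG, map_mul, hunit, mul_one, Valuation.map_sub_swap]

end partE2

section partE3

theorem mod_step {p f k m : ℕ} (hp : 2 ≤ p) (hm : m < f) (hk : k + 1 < p ^ f - 1)
    (hdvd : ¬ p ∣ k + 1) :
    p ^ m * (k + 1) % (p ^ f - 1) = p ^ m * k % (p ^ f - 1) + p ^ m := by
  obtain ⟨d, rfl⟩ : ∃ d, f = m + (d + 1) := ⟨f - m - 1, by omega⟩
  have hpm : 0 < p ^ m := by positivity
  have hpd : 0 < p ^ (d + 1) := by positivity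
  have hq : p ^ (m + (d + 1)) = p ^ m * p ^ (d + 1) := pow_add _ _ _
  obtain ⟨k1, k0, hk0, hkk⟩ : ∃ k1 k0, k0 < p ^ (d + 1) ∧ k = k1 * p ^ (d + 1) + k0 :=
    ⟨k / p ^ (d + 1), k % p ^ (d + 1), Nat.mod_lt _ hpd, by
      rw [mul_comm]; exact (Nat.div_add_mod _ _).symm⟩
  have hk0' : k0 + 1 < p ^ (d + 1) := by
    rcases Nat.lt_or_ge (k0 + 1) (p ^ (d + 1)) with h | h
    · exact h
    · exfalso
      apply hdvd
      have : k + 1 = (k1 + 1) * p ^ (d + 1) := by rw [hkk]; nlinarith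
      rw [this, pow_succ]
      exact ⟨(k1 + 1) * p ^ d, by ring⟩
  set A := p ^ m
  set B := p ^ (d + 1)
  set Q := p ^ (m + (d + 1))
  have hQ : 0 < Q - 1 := by omega
  have hk1 : k1 < A := by
    by_contra h
    push Not at h
    have : A * B ≤ k1 * B := Nat.mul_le_mul_right _ h
    omega
  have hlt : k1 + A * (k0 + 1) < Q - 1 := by
    have h1 : A * (k0 + 1 + 1) ≤ A * B := Nat.mul_le_mul_left _ hk0'
    by_contra h
    push Not at h
    have h2 : A * (k0 + 1 + 1) = A * (k0 + 1) + A := by ring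
    have h3 : k1 + 1 = A := by omega
    have h4 : A * (k0 + 1 + 1) = A * B := by omega
    have h5 : k0 + 1 + 1 = B := Nat.eq_of_mul_eq_mul_left hpm h4
    have h6 : k + 1 + 1 = A * B := by
      rw [hkk, ← h3, add_assoc, add_assoc, ← add_assoc k0, h5]; ring
    omega
  have e1 : p ^ m * (k + 1) = k1 + A * (k0 + 1) + (Q - 1) * k1 := by
    have hQ1 : Q = (Q - 1) + 1 := by omega
    have : A * (k + 1) = k1 * Q + A * (k0 + 1) := by rw [hkk, hq]; ring
    change A * (k + 1) = _
    rw [this]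
    nlinarith
  have e2 : p ^ m * k = k1 + A * k0 + (Q - 1) * k1 := by
    have e3 : p ^ m * (k + 1) = p ^ m * k + A := by simp only [A]; ring
    have e4 : A * (k0 + 1) = A * k0 + A := by ring
    omega
  rw [e1, e2, Nat.add_mul_mod_self_left, Nat.add_mul_mod_self_left, Nat.mod_eq_of_lt hlt,
    Nat.mod_eq_of_lt (lt_of_le_of_lt _ hlt)]
  · ring
  · have e4 : A * (k0 + 1) = A * k0 + A := by ring
    omega

theorem Tsum_shift {p f k : ℕ} (hp : 2 ≤ p) :
    ∑ m ∈ Finset.range f, (p ^ m * (p * k) % (p ^ f - 1)) =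
      ∑ m ∈ Finset.range f, (p ^ m * k % (p ^ f - 1)) := by
  rcases f with _ | f
  · simp
  rw [Finset.sum_range_succ' (fun m => p ^ m * k % (p ^ (f + 1) - 1)), Finset.sum_range_succ]
  congr 1
  · refine Finset.sum_congr rfl fun m _ => ?_
    rw [pow_succ]; ring_nf
  · have h1 : p ^ f * (p * k) = k + (p ^ (f + 1) - 1) * k := by
      have : 1 ≤ p ^ (f + 1) := Nat.one_le_pow _ _ (by omega)
      obtain ⟨t, ht⟩ := Nat.exists_eq_add_of_le this
      have h2 : p ^ f * (p * k) = p ^ (f + 1) * k := by ring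
      rw [h2, ht]
      simp; ring
    rw [h1, Nat.add_mul_mod_self_left]; simp

variable {p : ℕ} [hp : Fact p.Prime] {F : Type} [Field F] [Algebra (ZMod p) F] [Fintype F]

theorem gaussSum_pow_p (χ : MulChar F ℂ) :
    gaussSum (χ ^ p) (psiF p F) = gaussSum χ (psiF p F) := by
  have : CharP F p := charP_of_injective_algebraMap (algebraMap (ZMod p) F).injective p
  unfold gaussSum
  rw [← Equiv.sum_comp (frobeniusEquiv F p).toEquiv (fun x => χ x * psiF p F x)]
  refine Finset.sum_congr rfl fun x _ => ?_
  simp only [RingEquiv.toEquiv_eq_coe, EquivLike.coe_coe, frobeniusEquiv_apply, frobenius_def]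
  rw [psiF_frob, MulChar.pow_apply' _ hp.out.ne_zero, map_pow]

theorem jacobi_mem (V : ValuationSubring ℂ) (χ φ : MulChar F ℂ) : jacobiSum χ φ ∈ V := by
  have h : ∀ (χ : MulChar F ℂ) x, χ x ∈ V := by
    intro χ x
    by_cases hx : x = 0
    · rw [hx, MulChar.map_zero]; exact V.zero_mem
    · have hc := Fintype.one_lt_card (α := F)
      refine mem_of_pow_eq_one V (n := Fintype.card F - 1) (by omega) ?_
      rw [← map_pow, FiniteField.pow_card_sub_one_eq_one x hx, map_one]
  exact sum_mem fun x _ => V.mul_mem _ _ (h _ _) (h _ _)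

theorem val_gauss_le (V : ValuationSubring ℂ) 
    {f : ℕ} (hf : 0 < f) (hcard : Fintype.card F = p ^ f) 
    (ω : MulChar F ℂ) (h3 : orderOf ω = Fintype.card F - 1)
    (hω : V.valuation (gaussSum ω⁻¹ (psiF p F)) = V.valuation (1 - zetaP p)) (k : ℕ)
    (hk : k < p ^ f - 1) :
    ∃ S : ℕ, S * (p ^ f - 1) = (p - 1) * ∑ m ∈ Finset.range f, (p ^ m * k % (p ^ f - 1)) ∧
      V.valuation (1 - zetaP p) ^ S ≤ V.valuation (gaussSum (ω⁻¹ ^ k) (psiF p F)) := by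
  induction k using Nat.strong_induction_on with
  | _ k ih =>
  rcases Nat.eq_zero_or_pos k with rfl | hk0
  · refine ⟨0, by simp, ?_⟩
    rw [pow_zero, pow_zero, gaussSum_one_left psiF_ne_one, Valuation.map_neg, map_one]
  by_cases hd : p ∣ k
  · obtain ⟨k', rfl⟩ := hd
    have hlt : k' < p * k' := by
      have := hp.out.one_lt
      have : 0 < k' := Nat.pos_of_mul_pos_left hk0
      nlinarith
    obtain ⟨S, hS, hv⟩ := ih k' hlt (by omega)
    refine ⟨S, by rw [hS, Tsum_shift hp.out.two_le], ?_⟩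
    rw [mul_comm, pow_mul, gaussSum_pow_p]
    exact hv
  · obtain ⟨k, rfl⟩ : ∃ j, k = j + 1 := ⟨k - 1, by omega⟩
    obtain ⟨S, hS, hv⟩ := ih k (by omega) (by omega)
    refine ⟨S + 1, ?_, ?_⟩
    · rw [Finset.sum_congr rfl fun m hm =>
        mod_step hp.out.two_le (Finset.mem_range.1 hm) hk hd, Finset.sum_add_distrib, mul_add,
        ← hS, add_mul, one_mul]
      congr 1
      have := Nat.geomSum_eq hp.out.two_le f
      rw [this, Nat.mul_div_cancel']
      exact Nat.sub_one_dvd_pow_sub_one _ _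
    · have hne : ω⁻¹ ^ k * ω⁻¹ ≠ 1 := by
        rw [← pow_succ]
        intro h
        rw [inv_pow, inv_eq_one] at h
        have := Nat.le_of_dvd (by omega) (orderOf_dvd_of_pow_eq_one h)
        omega
      have hj := jacobiSum_mul_nontrivial hne (psiF p F)
      rw [← pow_succ] at hj
      have hj2 := congrArg V.valuation hj
      rw [map_mul, map_mul, hω] at hj2
      rw [pow_succ]
      calc _ ≤ _ := mul_le_mul_left hv _
        _ = _ := hj2.symm
        _ ≤ _ := mul_le_of_le_one_right' ((ValuationSubring.valuation_le_one_iff _ _).2 (jacobi_mem V _ _))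

theorem gauss_integral {f : ℕ} (hf : 0 < f) (hcard : Fintype.card F = p ^ f)
    {n e : ℕ} (hn : 1 < n) (ψ : MulChar F ℂ) (hψ : orderOf ψ = n) (hq : 2 < p ^ f)
    (H : ∀ j, j.Coprime n → ∑ m ∈ Finset.range f, (p ^ m * j % n) + n * e ≤ n * f) :
    IsIntegral ℤ (gaussSum ψ (psiF p F) / (p : ℂ) ^ e) := by
  have hp0 : (p : ℂ) ≠ 0 := by exact_mod_cast hp.out.ne_zero
  apply integral_of_valuation
  intro V
  rw [← ValuationSubring.valuation_le_one_iff, map_div₀, map_pow]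
  have hpV : V.valuation (p : ℂ) ≤ 1 := (ValuationSubring.valuation_le_one_iff _ _).2 (natCast_mem V p)
  have hvp0 : V.valuation (p : ℂ) ≠ 0 := (Valuation.ne_zero_iff _).2 hp0
  have hχV : ∀ (χ : MulChar F ℂ) x, χ x ∈ V := by
    intro χ x
    by_cases hx : x = 0
    · rw [hx, MulChar.map_zero]; exact V.zero_mem
    · have hc := Fintype.one_lt_card (α := F)
      refine mem_of_pow_eq_one V (n := Fintype.card F - 1) (by omega) ?_
      rw [← map_pow, FiniteField.pow_card_sub_one_eq_one x hx, map_one]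
  have hzV : zetaP p ∈ V := mem_of_pow_eq_one V hp.out.pos (zetaP_prim (p := p)).pow_eq_one
  rcases hpV.lt_or_eq with hlt | heq
  swap
  · rw [heq, one_pow, div_one, ValuationSubring.valuation_le_one_iff]
    refine sum_mem fun x _ => V.mul_mem _ _ (hχV _ _) ?_
    rw [psiF_apply]
    exact pow_mem hzV _
  obtain ⟨ι, ω, ωV, h1, h2, hall, h3⟩ := exists_teich (p := p) (F := F) V hlt
  have hω := val_gauss_one V hlt hf hcard hq ι ω ωV h1 h2 h3
  obtain ⟨k0, hk0⟩ := hall ψ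
  set Q := p ^ f - 1 with hQ
  rw [hcard, ← hQ] at h3
  obtain ⟨c, hc⟩ : n ∣ Q := by
    rw [← hψ, ← h3, hk0]
    exact orderOf_pow_dvd _
  have hc0 : 0 < c := by
    rcases Nat.eq_zero_or_pos c with h | h
    · rw [h] at hc; omega
    · exact h
  let k := k0 % Q
  have hk : ψ = ω ^ k := by simp only [k]; rw [hk0, ← h3, pow_mod_orderOf]
  have hkQ : k < Q := Nat.mod_lt _ (by omega)
  -- k = c * j
  have hck : c ∣ k := by
    have : Q ∣ k * n := by
      rw [← h3]
      apply orderOf_dvd_of_pow_eq_one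
      rw [pow_mul, ← hk, ← hψ, pow_orderOf_eq_one]
    rw [hc, mul_comm k] at this
    exact Nat.dvd_of_mul_dvd_mul_left (by omega) this
  obtain ⟨j, hj⟩ := hck
  have hjn : j.Coprime n := by
    have h5 : orderOf (ω ^ k) = n := by rw [← hk, hψ]
    rw [orderOf_pow, h3, hj, hc] at h5
    have h6 : (n * c).gcd (c * j) = c * n.gcd j := by rw [mul_comm n c, Nat.gcd_mul_left]
    rw [h6, mul_comm n c, Nat.mul_div_mul_left _ _ hc0] at h5
    have h7 : n.gcd j * n = n := by
      have h8 := Nat.div_mul_cancel (Nat.gcd_dvd_left n j)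
      rw [h5, mul_comm] at h8; exact h8
    have : n.gcd j = 1 := Nat.eq_of_mul_eq_mul_right (by omega : 0 < n) (by rw [h7, one_mul])
    rw [Nat.Coprime, Nat.gcd_comm]; exact this
  obtain ⟨S, hS, hv⟩ := val_gauss_le V hf hcard ω (by rw [h3, hcard]) hω k hkQ
  have hSn : S * n = (p - 1) * ∑ m ∈ Finset.range f, (p ^ m * j % n) := by
    have h7 : ∀ m ∈ Finset.range f, p ^ m * k % (p ^ f - 1) = c * (p ^ m * j % n) := by
      intro m _
      rw [← hQ, hc, hj, mul_comm n c, ← Nat.mul_mod_mul_left]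
      ring_nf
    rw [Finset.sum_congr rfl h7, ← Finset.mul_sum, ← hQ, hc] at hS
    apply Nat.eq_of_mul_eq_mul_left hc0
    linarith
  have hSle : S + (p - 1) * e ≤ (p - 1) * f := by
    have := Nat.mul_le_mul_left (p - 1) (H j hjn)
    apply Nat.le_of_mul_le_mul_right _ (by omega : 0 < n)
    nlinarith
  have hψ1 : ψ ≠ 1 := by
    intro h
    rw [h, orderOf_one] at hψ
    omega
  have hmul := gaussSum_mul_gaussSum_eq_card hψ1 (psiF_prim (p := p) (F := F))
  have hinv : V.valuation (gaussSum ψ⁻¹ (psiF p F)⁻¹) = V.valuation (gaussSum ψ⁻¹ (psiF p F)) := by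
    rw [← mul_gaussSum_inv_eq_gaussSum ψ⁻¹ (psiF p F), map_mul]
    have h8 : V.valuation (ψ⁻¹ (-1)) = 1 := by
      have h9 : (ψ⁻¹ (-1)) ^ 2 = 1 := by rw [← map_pow]; simp
      have h10 := congrArg V.valuation h9
      rw [map_pow, map_one] at h10
      exact (pow_eq_one_iff.1 h10).resolve_right (by norm_num)
    rw [h8, one_mul]
  have hmul2 := congrArg V.valuation hmul
  rw [map_mul, hinv, hcard, Nat.cast_pow, map_pow, val_p, ← pow_mul, hk, ← inv_pow] at hmul2
  set vπ := V.valuation (1 - zetaP p) with hvπ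
  have hvπ0 : vπ ≠ 0 := by
    intro h
    rw [val_p, ← hvπ, h] at hvp0
    exact hvp0 (zero_pow (by have := hp.out.two_le; omega))
  have hvπ1 : vπ ≤ 1 := by
    rw [hvπ, ValuationSubring.valuation_le_one_iff]
    exact V.sub_mem V.one_mem hzV
  rw [val_p, ← hvπ, ← pow_mul, hk]
  rw [div_le_one₀ (pow_pos (zero_lt_iff.2 hvπ0) _)]
  have hSpos : 0 < vπ ^ S := pow_pos (zero_lt_iff.2 hvπ0) _
  refine le_of_mul_le_mul_right ?_ hSpos
  calc _ ≤ _ := mul_le_mul_right hv _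
    _ = _ := hmul2
    _ ≤ _ := by
      rw [← pow_add, add_comm]
      exact pow_le_pow_right_of_le_one' hvπ1 hSle

end partE3

section partF1
open NumberField

variable {K : Type} [Field K] [NumberField K] {l : ℕ}

theorem quad_rep (hfin : Module.finrank ℚ K = 2) (hl : 0 < l) (s : K) (hs : s ^ 2 = -(l : K)) (x : K) :
    ∃ u v : ℚ, x = u + v * s := by
  have hli : LinearIndependent ℚ ![(1 : K), s] := by
    rw [LinearIndependent.pair_iff]
    intro a b hab
    rw [Algebra.smul_def, Algebra.smul_def, mul_one] at hab
    simp only [eq_ratCast] at hab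
    have h1 : ((a ^ 2 + l * b ^ 2 : ℚ) : K) = 0 := by
      push_cast
      have : (a : K) = - (b * s) := by linear_combination hab
      rw [this]
      linear_combination (b : K) ^ 2 * hs
    have h2 : a ^ 2 + l * b ^ 2 = 0 := by exact_mod_cast h1
    have hl' : (0 : ℚ) < l := by exact_mod_cast hl
    have hb : b = 0 := by
      by_contra hb
      have : 0 < b ^ 2 := by positivity
      nlinarith [sq_nonneg a, mul_pos hl' this]
    subst hb
    simpa using h2
  have hsp := hli.span_eq_top_of_card_eq_finrank' (by simp [hfin])
  have hx : x ∈ Submodule.span ℚ (Set.range ![(1 : K), s]) := by rw [hsp]; trivial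
  simp only [Matrix.range_cons, Matrix.range_empty, Set.union_empty, Set.singleton_union] at hx
  obtain ⟨u, v, h⟩ := Submodule.mem_span_pair.1 hx
  refine ⟨u, v, ?_⟩
  rw [← h, Algebra.smul_def, Algebra.smul_def]; simp

/-- the algebraic integer `(1+s)/2` -/
theorem theta_exists (hl4 : l % 4 = 3) (s : K) (hs : s ^ 2 = -(l : K)) :
    ∃ θ : 𝓞 K, algebraMap (𝓞 K) K θ = (1 + s) / 2 ∧ θ ^ 2 = θ - ((1 + l) / 4 : ℕ) := by
  obtain ⟨c, hc⟩ : ∃ c, 1 + l = 4 * c := ⟨(1 + l) / 4, by omega⟩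
  have hc' : (1 + l) / 4 = c := by omega
  have hcK : (1 : K) + l = 4 * c := by exact_mod_cast hc
  have h1 : ((1 + s) / 2) ^ 2 = (1 + s) / 2 - (c : K) := by
    field_simp
    linear_combination hs - hcK
  have hint : IsIntegral ℤ ((1 + s) / 2) := by
    refine ⟨X ^ 2 - X + C (c : ℤ), by monicity!, ?_⟩
    simp only [eval₂_add, eval₂_sub, eval₂_pow, eval₂_X, eval₂_C]
    rw [h1]; simp
  obtain ⟨θ, hθ⟩ : ∃ θ : 𝓞 K, algebraMap (𝓞 K) K θ = (1 + s) / 2 := ⟨⟨_, hint⟩, rfl⟩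
  refine ⟨θ, hθ, ?_⟩
  apply FaithfulSMul.algebraMap_injective (𝓞 K) K
  rw [hc']
  rw [map_pow, map_sub, map_natCast, hθ]
  exact h1

theorem quad_int (hfin : Module.finrank ℚ K = 2) (hl : l.Prime) (hl4 : l % 4 = 3)
    (s : K) (hs : s ^ 2 = -(l : K))
    (θ : 𝓞 K) (hθ : algebraMap (𝓞 K) K θ = (1 + s) / 2) (x : 𝓞 K) :
    ∃ a b : ℤ, x = a + b * θ := by
  obtain ⟨u, v, huv⟩ := quad_rep hfin hl.pos s hs (algebraMap (𝓞 K) K x)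
  let φ : K →+* ℂ := Classical.arbitrary _
  have hφs : (φ s) ^ 2 = -(l : ℂ) := by rw [← map_pow, hs]; simp
  have hconj : starRingEnd ℂ (φ s) = - φ s := by
    have h2 : (starRingEnd ℂ (φ s)) ^ 2 = (φ s) ^ 2 := by
      rw [← map_pow, hφs]; simp
    rcases sq_eq_sq_iff_eq_or_eq_neg.1 h2 with h | h
    · exfalso
      obtain ⟨t, ht⟩ := Complex.conj_eq_iff_real.1 h
      rw [ht] at hφs
      have : t ^ 2 = -(l : ℝ) := by exact_mod_cast hφs
      have : (0 : ℝ) < l := by exact_mod_cast hl.pos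
      nlinarith [sq_nonneg t]
    · exact h
  have hxi : IsIntegral ℤ (φ (algebraMap (𝓞 K) K x)) := (RingOfIntegers.isIntegral_coe x).map φ.toIntAlgHom
  have hxi' : IsIntegral ℤ (starRingEnd ℂ (φ (algebraMap (𝓞 K) K x))) := hxi.map (starRingEnd ℂ).toIntAlgHom
  have hφx : φ (algebraMap (𝓞 K) K x) = u + v * φ s := by rw [huv]; simp
  have hφx' : starRingEnd ℂ (φ (algebraMap (𝓞 K) K x)) = u - v * φ s := by
    rw [hφx, map_add, map_mul, hconj]
    simp only [map_ratCast]
    ring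
  have key : ∀ y : ℚ, IsIntegral ℤ ((y : ℚ) : ℂ) → ∃ m : ℤ, (m : ℚ) = y := by
    intro y hy
    have : IsIntegral ℤ y := (isIntegral_algebraMap_iff (R := ℤ) (A := ℚ) (B := ℂ) (algebraMap ℚ ℂ).injective).1 (by simpa using hy)
    obtain ⟨m, hm⟩ := IsIntegrallyClosed.isIntegral_iff.1 this
    exact ⟨m, by simpa using hm⟩
  obtain ⟨A, hA⟩ := key (2 * u) (by
    have := hxi.add hxi'
    rw [hφx', hφx] at this
    have e : (u : ℂ) + v * φ s + (u - v * φ s) = ((2 * u : ℚ) : ℂ) := by push_cast; ring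
    rwa [e] at this)
  obtain ⟨M, hM⟩ := key (u ^ 2 + l * v ^ 2) (by
    have := hxi.mul hxi'
    rw [hφx', hφx] at this
    have e : ((u : ℂ) + v * φ s) * (u - v * φ s) = ((u ^ 2 + l * v ^ 2 : ℚ) : ℂ) := by
      push_cast
      linear_combination (-(v : ℂ) ^ 2) * hφs
    rwa [e] at this)
  have h4 : (l : ℚ) * (2 * v) ^ 2 = ((4 * M - A ^ 2 : ℤ) : ℚ) := by
    push_cast; rw [hA, hM]; ring
  obtain ⟨B, hB⟩ : ∃ B : ℤ, (B : ℚ) = 2 * v := by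
    -- l * w is integral
    have h5 : IsIntegral ℤ ((l : ℚ) * (2 * v)) := by
      apply IsIntegral.of_pow (n := 2) (by norm_num)
      have : ((l : ℚ) * (2 * v)) ^ 2 = ((l * (4 * M - A ^ 2) : ℤ) : ℚ) := by
        rw [Int.cast_mul, ← h4]; push_cast; ring
      rw [this]
      exact isIntegral_algebraMap (R := ℤ) (A := ℚ)
    obtain ⟨D, hD⟩ := IsIntegrallyClosed.isIntegral_iff.1 h5
    have hD' : (D : ℚ) = l * (2 * v) := by simpa using hD
    have h6 : D ^ 2 = l * (4 * M - A ^ 2) := by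
      have : ((D ^ 2 : ℤ) : ℚ) = ((l * (4 * M - A ^ 2) : ℤ) : ℚ) := by
        rw [Int.cast_mul, ← h4]; push_cast; rw [hD']; ring
      exact_mod_cast this
    have hlp : Prime (l : ℤ) := Nat.prime_iff_prime_int.1 hl
    obtain ⟨B, hB⟩ := hlp.dvd_of_dvd_pow (Dvd.intro _ h6.symm)
    refine ⟨B, ?_⟩
    have hl0 : (l : ℚ) ≠ 0 := by exact_mod_cast hl.ne_zero
    rw [hB] at hD'
    push_cast at hD'
    exact mul_left_cancel₀ hl0 hD'
  have h7 : (l : ℤ) * B ^ 2 = 4 * M - A ^ 2 := by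
    rw [← hB] at h4
    exact_mod_cast h4
  obtain ⟨m, hm⟩ : (2 : ℤ) ∣ A - B := by
    obtain ⟨t, ht⟩ : ∃ t : ℤ, (l : ℤ) = 4 * t + 3 := ⟨l / 4, by omega⟩
    rw [ht] at h7
    have : 2 ∣ A ^ 2 - B ^ 2 := ⟨2 * M - 2 * t * B ^ 2 - 2 * B ^ 2, by linear_combination h7⟩
    rcases Int.even_or_odd A with h1 | h1 <;> rcases Int.even_or_odd B with h2 | h2 <;>
      simp only [← even_iff_two_dvd] at this ⊢ <;> simp only [parity_simps] at this ⊢ <;> grind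
  refine ⟨m, B, FaithfulSMul.algebraMap_injective (𝓞 K) K ?_⟩
  have hm' : (A : ℚ) - B = 2 * m := by exact_mod_cast hm
  rw [hA] at hm'
  have e1 : u = m + B / 2 := by linarith
  have e2 : v = B / 2 := by linarith
  rw [huv, e1, e2]
  simp only [map_add, map_mul, map_intCast]
  rw [hθ]
  push_cast
  ring

theorem quad_int_unique (hl : 0 < l) (s : K) (hs : s ^ 2 = -(l : K))
    (θ : 𝓞 K) (hθ : algebraMap (𝓞 K) K θ = (1 + s) / 2) {a b : ℤ} (h : (a : 𝓞 K) + b * θ = 0) : a = 0 ∧ b = 0 := by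
  have h1 := congrArg (fun x : 𝓞 K => algebraMap (𝓞 K) K x) h
  simp only [map_add, map_mul, map_intCast, hθ, map_zero] at h1
  have h2 : (((2 * a + b) ^ 2 + l * b ^ 2 : ℤ) : K) = 0 := by
    push_cast
    have : (2 * a + b : K) = - (b * s) := by linear_combination 2 * h1
    rw [this]
    linear_combination (b : K) ^ 2 * hs
  have h3 : (2 * a + b) ^ 2 + l * b ^ 2 = 0 := by exact_mod_cast h2
  have hl' : (0 : ℤ) < l := by exact_mod_cast hl
  have hb : b = 0 := by
    by_contra hb
    have : 0 < b ^ 2 := by positivity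
    nlinarith [sq_nonneg (2 * a + b), mul_pos hl' this]
  subst hb
  refine ⟨?_, rfl⟩
  simpa using h3

theorem quad_basis (hfin : Module.finrank ℚ K = 2) (hl : l.Prime) (hl4 : l % 4 = 3)
    (s : K) (hs : s ^ 2 = -(l : K))
    (θ : 𝓞 K) (hθ : algebraMap (𝓞 K) K θ = (1 + s) / 2) :
    ∃ b : Module.Basis (Fin 2) ℤ (𝓞 K), b 0 = 1 ∧ b 1 = θ := by
  have hv : LinearIndependent ℤ ![(1 : 𝓞 K), θ] := by
    rw [LinearIndependent.pair_iff]
    intro a b hab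
    exact quad_int_unique hl.pos s hs θ hθ (by simpa [zsmul_eq_mul] using hab)
  have hsp : ⊤ ≤ Submodule.span ℤ (Set.range ![(1 : 𝓞 K), θ]) := by
    intro x _
    obtain ⟨a, b, hab⟩ := quad_int hfin hl hl4 s hs θ hθ x
    simp only [Matrix.range_cons, Matrix.range_empty, Set.union_empty, Set.singleton_union]
    exact Submodule.mem_span_pair.2 ⟨a, b, by rw [hab]; simp [zsmul_eq_mul]⟩
  exact ⟨Module.Basis.mk hv hsp, by simp, by simp⟩

theorem quad_discr (hfin : Module.finrank ℚ K = 2) (hl : l.Prime) (hl4 : l % 4 = 3)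
    (s : K) (hs : s ^ 2 = -(l : K)) : discr K = -(l : ℤ) := by
  obtain ⟨θ, hθ, hθ2⟩ := theta_exists hl4 s hs
  obtain ⟨b, hb0, hb1⟩ := quad_basis hfin hl hl4 s hs θ hθ
  obtain ⟨c, hc⟩ : ∃ c, 1 + l = 4 * c := ⟨(1 + l) / 4, by omega⟩
  have hc' : (1 + l) / 4 = c := by omega
  rw [hc'] at hθ2
  rw [← discr_eq_discr K b, Algebra.discr_def, Matrix.det_fin_two]
  simp only [Algebra.traceMatrix_apply, Algebra.traceForm_apply, hb0, hb1, one_mul, mul_one]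
  have t1 : Algebra.trace ℤ (𝓞 K) 1 = 2 := by
    have := Algebra.trace_algebraMap_of_basis b (1 : ℤ)
    simpa using this
  have t2 : Algebra.trace ℤ (𝓞 K) θ = 1 := by
    rw [Algebra.trace_eq_matrix_trace b, Matrix.trace_fin_two, Algebra.leftMulMatrix_eq_repr_mul,
      Algebra.leftMulMatrix_eq_repr_mul, hb0, hb1, mul_one, ← sq, hθ2]
    have e : (c : 𝓞 K) = (c : ℤ) • b 0 := by rw [hb0]; simp
    rw [e, ← hb1, map_sub, map_smul]
    simp
  have t3 : Algebra.trace ℤ (𝓞 K) (θ * θ) = 1 - 2 * c := by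
    have e : (c : 𝓞 K) = (c : ℤ) • 1 := by simp
    rw [← sq, hθ2, map_sub, t2, e, map_smul, t1]
    simp; ring
  rw [t1, t2, t3]
  have : (1 : ℤ) + l = 4 * c := by exact_mod_cast hc
  linarith

theorem quad_residue (hfin : Module.finrank ℚ K = 2) (hl : l.Prime) (hl4 : l % 4 = 3) (hl3 : 3 < l)
    (s : K) (hs : s ^ 2 = -(l : K)) :
    dedekindZeta_residue K = Real.pi * classNumber K / Real.sqrt l := by
  obtain ⟨θ, hθ, hθ2⟩ := theta_exists hl4 s hs
  have htc : IsTotallyComplex K := by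
    constructor
    intro w
    rw [← InfinitePlace.not_isReal_iff_isComplex]
    intro hw
    have h1 := (InfinitePlace.isReal_iff.1 hw)
    have h2 := ComplexEmbedding.IsReal.coe_embedding_apply h1 s
    have h3 : (w.embedding s) ^ 2 = -(l : ℂ) := by rw [← map_pow, hs]; simp
    rw [← h2] at h3
    have h4 : (h1.embedding s) ^ 2 = -(l : ℝ) := by exact_mod_cast h3
    have : (0 : ℝ) < l := by exact_mod_cast hl.pos
    nlinarith [sq_nonneg (h1.embedding s)]
  have hr := nrRealPlaces_eq_zero_iff.2 htc
  have hc : InfinitePlace.nrComplexPlaces K = 1 := by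
    have := InfinitePlace.card_add_two_mul_card_eq_rank K
    rw [hr, hfin] at this; omega
  have hrank : Units.rank K = 0 := by
    rw [Units.rank, InfinitePlace.card_eq_nrRealPlaces_add_nrComplexPlaces, hr, hc]
  have hreg : Units.regulator K = 1 := by
    have : IsEmpty (Fin (Units.rank K)) := by rw [hrank]; infer_instance
    classical
    have w' : InfinitePlace K := Classical.arbitrary _
    have hcard : Fintype.card {w : InfinitePlace K // w ≠ w'} = Fintype.card (Fin (Units.rank K)) := by
      rw [Fintype.card_subtype_compl, Fintype.card_fin, Units.rank]
      simp
    rw [Units.regulator_eq_det K w' (Fintype.equivOfCardEq hcard)]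
    have : IsEmpty {w : InfinitePlace K // w ≠ w'} := (Fintype.equivOfCardEq hcard).isEmpty
    rw [Matrix.det_isEmpty, abs_one]
  have htor : Units.torsionOrder K = 2 := by
    have hall : ∀ u : (𝓞 K)ˣ, u ∈ Units.torsion K → u = 1 ∨ u = -1 := by
      intro u hu
      rw [Units.mem_torsion] at hu
      obtain ⟨a, b, hab⟩ := quad_int hfin hl hl4 s hs θ hθ u
      have w : InfinitePlace K := Classical.arbitrary _
      have hw := hu w
      have hcj : starRingEnd ℂ (w.embedding s) = - w.embedding s := by
        have h3 : (w.embedding s) ^ 2 = -(l : ℂ) := by rw [← map_pow, hs]; simp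
        have h2 : (starRingEnd ℂ (w.embedding s)) ^ 2 = (w.embedding s) ^ 2 := by
          rw [← map_pow, h3]; simp
        rcases sq_eq_sq_iff_eq_or_eq_neg.1 h2 with h | h
        · exfalso
          obtain ⟨t, ht⟩ := Complex.conj_eq_iff_real.1 h
          rw [ht] at h3
          have : t ^ 2 = -(l : ℝ) := by exact_mod_cast h3
          have : (0 : ℝ) < l := by exact_mod_cast hl.pos
          nlinarith [sq_nonneg t]
        · exact h
      have h3 : (w.embedding s) ^ 2 = -(l : ℂ) := by rw [← map_pow, hs]; simp
      rw [← InfinitePlace.norm_embedding_eq, hab] at hw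
      simp only [map_add, map_mul, map_intCast, hθ, map_div₀, map_one, map_ofNat] at hw
      have h5 := Complex.mul_conj' ((a : ℂ) + b * ((1 + w.embedding s) / 2))
      rw [hw] at h5
      simp only [map_add, map_mul, map_intCast, map_div₀, map_one, map_ofNat, hcj] at h5
      have h6 : (((2 * a + b) ^ 2 + l * b ^ 2 : ℤ) : ℂ) = ((4 : ℤ) : ℂ) := by
        push_cast at h5 ⊢
        linear_combination 4 * h5 + (b : ℂ) ^ 2 * h3
      have h7 : (2 * a + b) ^ 2 + l * b ^ 2 = 4 := by exact_mod_cast h6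
      have hl' : (7 : ℤ) ≤ l := by omega
      have hb : b = 0 := by
        by_contra hb
        have : 0 < b ^ 2 := by positivity
        nlinarith [sq_nonneg (2 * a + b)]
      subst hb
      have h8 : (a - 1) * (a + 1) = 0 := by nlinarith
      rcases mul_eq_zero.1 h8 with h | h
      · left; ext; rw [hab, show a = 1 by omega]; simp
      · right; ext; rw [hab, show a = -1 by omega]; simp
    have hset : (Units.torsion K : Set (𝓞 K)ˣ) = {1, -1} := by
      ext u
      constructor
      · intro hu; exact hall u hu
      · rintro (rfl | rfl)
        · exact one_mem _
        · rw [SetLike.mem_coe, Units.mem_torsion]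
          intro w; rw [← InfinitePlace.norm_embedding_eq]; simp
    have hne : (1 : (𝓞 K)ˣ) ≠ -1 := by
      intro h
      have := congrArg (fun u : (𝓞 K)ˣ => ((u : 𝓞 K) : K)) h
      simp at this
      norm_num [eq_neg_iff_add_eq_zero] at this
    have : Units.torsionOrder K = (Units.torsion K : Set (𝓞 K)ˣ).ncard := by
      rw [Units.torsionOrder]; rfl
    rw [this, hset, Set.ncard_pair hne]
  rw [dedekindZeta_residue_def, hr, hc, hreg, htor, quad_discr hfin hl hl4 s hs]
  have : |((-(l : ℤ) : ℤ) : ℝ)| = l := by push_cast; rw [abs_neg, Nat.abs_cast]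
  rw [this]
  push_cast
  have : Real.sqrt l ≠ 0 := by
    rw [Real.sqrt_ne_zero (by positivity)]; exact_mod_cast hl.ne_zero
  field_simp

end partF1

section partF2
open NumberField

variable {K : Type} [Field K] [NumberField K] {l : ℕ}

/-- number of ideals of norm `n` -/
noncomputable def idealCount (K : Type) [Field K] [NumberField K] (n : ℕ) : ℕ :=
  Nat.card {I : Ideal (𝓞 K) // Ideal.absNorm I = n}

theorem natCast_absNorm_mem (I : Ideal (𝓞 K)) {n : ℕ} (h : Ideal.absNorm I = n) : (n : 𝓞 K) ∈ I := by
  rw [← h]; exact Ideal.absNorm_mem I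

theorem absNorm_span_nat (n : ℕ) :
    Ideal.absNorm (Ideal.span {(n : 𝓞 K)}) = n ^ Module.finrank ℚ K := by
  rw [Ideal.absNorm_span_singleton]
  have : (n : 𝓞 K) = algebraMap ℤ (𝓞 K) n := by simp
  rw [this, Algebra.norm_algebraMap, RingOfIntegers.rank]
  simp [Int.natAbs_pow]

theorem coprime_sup {m n : ℕ} (h : m.Coprime n) (J : Ideal (𝓞 K)) (hJ : (n : 𝓞 K) ∈ J) :
    J ⊔ Ideal.span {(m : 𝓞 K)} = ⊤ := by
  rw [Ideal.eq_top_iff_one]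
  have hcop : IsCoprime (m : ℤ) n := Nat.isCoprime_iff_coprime.2 h
  obtain ⟨a, b, hab⟩ := hcop
  have h2 : (a : 𝓞 K) * m + b * n = 1 := by exact_mod_cast congrArg (Int.cast : ℤ → 𝓞 K) hab
  rw [← h2]
  refine Ideal.add_mem _ ?_ ?_
  · exact Ideal.mem_sup_right (Ideal.mul_mem_left _ _ (Ideal.mem_span_singleton_self _))
  · exact Ideal.mem_sup_left (Ideal.mul_mem_left _ _ hJ)

theorem left_of_mul {m n : ℕ} (h : m.Coprime n) (I J : Ideal (𝓞 K)) (hI : (m : 𝓞 K) ∈ I)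
    (hJ : (n : 𝓞 K) ∈ J) : I * J ⊔ Ideal.span {(m : 𝓞 K)} = I := by
  apply le_antisymm
  · exact sup_le Ideal.mul_le_left ((Ideal.span_singleton_le_iff_mem _).2 hI)
  · calc I = I * (J ⊔ Ideal.span {(m : 𝓞 K)}) := by rw [coprime_sup h J hJ, Ideal.mul_top]
      _ = I * J ⊔ I * Ideal.span {(m : 𝓞 K)} := Ideal.mul_sup _ _ _
      _ ≤ _ := sup_le_sup_left Ideal.mul_le_right _

theorem idealCount_mul {m n : ℕ} (h : m.Coprime n) :
    idealCount K (m * n) = idealCount K m * idealCount K n := by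
  unfold idealCount
  rw [← Nat.card_prod]
  symm
  refine Nat.card_eq_of_bijective
    (fun x : {I : Ideal (𝓞 K) // Ideal.absNorm I = m} × {I : Ideal (𝓞 K) // Ideal.absNorm I = n} =>
      (⟨x.1.1 * x.2.1, by rw [map_mul, x.1.2, x.2.2]⟩ :
        {I : Ideal (𝓞 K) // Ideal.absNorm I = m * n})) ⟨?_, ?_⟩
  · rintro ⟨⟨I, hI⟩, ⟨J, hJ⟩⟩ ⟨⟨I', hI'⟩, ⟨J', hJ'⟩⟩ heq
    simp only [Subtype.mk.injEq] at heq
    have h1 := left_of_mul h I J (natCast_absNorm_mem I hI) (natCast_absNorm_mem J hJ)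
    have h2 := left_of_mul h I' J' (natCast_absNorm_mem I' hI') (natCast_absNorm_mem J' hJ')
    have h3 := left_of_mul h.symm J I (natCast_absNorm_mem J hJ) (natCast_absNorm_mem I hI)
    have h4 := left_of_mul h.symm J' I' (natCast_absNorm_mem J' hJ') (natCast_absNorm_mem I' hI')
    simp only [Prod.mk.injEq, Subtype.mk.injEq]
    constructor
    · rw [← h1, ← h2, heq]
    · rw [← h3, ← h4, mul_comm J, mul_comm J', heq]
  · rintro ⟨L, hL⟩
    have hmn := natCast_absNorm_mem L hL
    set A := Ideal.span {(m : 𝓞 K)} with hA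
    set B := Ideal.span {(n : 𝓞 K)} with hB
    have hAB : A * B ≤ L := by
      rw [hA, hB, Ideal.span_singleton_mul_span_singleton, Ideal.span_singleton_le_iff_mem]
      exact_mod_cast hmn
    have hBA : B ⊔ A = ⊤ := coprime_sup h B (Ideal.mem_span_singleton_self _)
    have hprod : (L ⊔ A) * (L ⊔ B) = L := by
      apply le_antisymm
      · rw [Ideal.sup_mul, Ideal.mul_sup, Ideal.mul_sup]
        exact sup_le (sup_le Ideal.mul_le_left Ideal.mul_le_left) (sup_le Ideal.mul_le_right hAB)
      · calc L = L * (B ⊔ A) := by rw [hBA, Ideal.mul_top]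
          _ = L * B ⊔ L * A := Ideal.mul_sup _ _ _
          _ ≤ _ := by
            refine sup_le (Ideal.mul_mono le_sup_left le_sup_right) ?_
            rw [mul_comm]
            exact Ideal.mul_mono le_sup_right le_sup_left
    have n1 : Ideal.absNorm (L ⊔ A) ∣ m ^ Module.finrank ℚ K := by
      rw [← absNorm_span_nat (K := K)]
      exact Ideal.absNorm_dvd_absNorm_of_le le_sup_right
    have n2 : Ideal.absNorm (L ⊔ B) ∣ n ^ Module.finrank ℚ K := by
      rw [← absNorm_span_nat (K := K)]
      exact Ideal.absNorm_dvd_absNorm_of_le le_sup_right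
    have n3 : Ideal.absNorm (L ⊔ A) * Ideal.absNorm (L ⊔ B) = m * n := by
      rw [← map_mul, hprod, hL]
    have c1 : (Ideal.absNorm (L ⊔ A)).Coprime n := Nat.Coprime.coprime_dvd_left n1 (h.pow_left _)
    have c2 : m.Coprime (Ideal.absNorm (L ⊔ B)) := Nat.Coprime.coprime_dvd_right n2 (h.pow_right _)
    have d1 : Ideal.absNorm (L ⊔ A) = m := by
      apply Nat.dvd_antisymm
      · exact c1.dvd_of_dvd_mul_right (Dvd.intro _ n3)
      · exact c2.dvd_of_dvd_mul_right (n3 ▸ Dvd.intro _ rfl)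
    have d2 : Ideal.absNorm (L ⊔ B) = n := by
      apply Nat.dvd_antisymm
      · exact c2.symm.dvd_of_dvd_mul_left (Dvd.intro_left _ n3)
      · exact c1.symm.dvd_of_dvd_mul_left (n3 ▸ Dvd.intro_left _ rfl)
    exact ⟨⟨⟨L ⊔ A, d1⟩, ⟨L ⊔ B, d2⟩⟩, Subtype.ext hprod⟩

theorem dvd_span_pow {q k : ℕ} {I : Ideal (𝓞 K)} (hI : Ideal.absNorm I = q ^ k) :
    I ∣ (Ideal.span {(q : 𝓞 K)}) ^ k := by
  rw [Ideal.dvd_iff_le, Ideal.span_singleton_pow, Ideal.span_singleton_le_iff_mem]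
  exact_mod_cast natCast_absNorm_mem I hI

/-- inert -/
theorem idealCount_inert {q : ℕ} (hq : q.Prime) (hfin : Module.finrank ℚ K = 2)
    (hP : (Ideal.span {(q : 𝓞 K)}).IsPrime) (k : ℕ) :
    idealCount K (q ^ k) = if Even k then 1 else 0 := by
  set P := Ideal.span {(q : 𝓞 K)} with hPdef
  have hq0 : (q : 𝓞 K) ≠ 0 := by exact_mod_cast hq.ne_zero
  have hP0 : P ≠ ⊥ := by rw [hPdef, Ne, Ideal.span_singleton_eq_bot]; exact hq0
  have hPp : Prime P := Ideal.prime_of_isPrime hP0 hP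
  have hN : Ideal.absNorm P = q ^ 2 := by rw [hPdef, absNorm_span_nat, hfin]
  have key : ∀ I : Ideal (𝓞 K), Ideal.absNorm I = q ^ k → ∃ i, I = P ^ i ∧ 2 * i = k := by
    intro I hI
    obtain ⟨i, -, hi⟩ := (dvd_prime_pow hPp _).1 (dvd_span_pow hI)
    rw [associated_iff_eq] at hi
    refine ⟨i, hi, ?_⟩
    rw [hi, map_pow, hN, ← pow_mul] at hI
    exact Nat.pow_right_injective hq.two_le hI
  unfold idealCount
  split_ifs with hk
  · obtain ⟨j, rfl⟩ := hk
    rw [Nat.card_eq_one_iff_exists]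
    refine ⟨⟨P ^ j, by rw [map_pow, hN, ← pow_mul]; ring⟩, ?_⟩
    rintro ⟨I, hI⟩
    obtain ⟨i, hi, hij⟩ := key I hI
    apply Subtype.ext
    simp only
    rw [hi, show i = j by omega]
  · rw [Nat.card_eq_zero]
    left
    constructor
    rintro ⟨I, hI⟩
    obtain ⟨i, hi, hij⟩ := key I hI
    exact hk ⟨i, by omega⟩

theorem idealCount_ram {q : ℕ} (hq : q.Prime) (P : Ideal (𝓞 K)) (hN : Ideal.absNorm P = q)
    (hP2 : P ^ 2 = Ideal.span {(q : 𝓞 K)}) (k : ℕ) :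
    idealCount K (q ^ k) = 1 := by
  have hP : P.IsPrime := Ideal.isPrime_of_irreducible_absNorm (by rw [hN]; exact hq)
  have hP0 : P ≠ ⊥ := by
    rintro rfl
    rw [Ideal.absNorm_bot] at hN
    exact hq.ne_zero hN.symm
  have hPp : Prime P := Ideal.prime_of_isPrime hP0 hP
  unfold idealCount
  rw [Nat.card_eq_one_iff_exists]
  refine ⟨⟨P ^ k, by rw [map_pow, hN]⟩, ?_⟩
  rintro ⟨I, hI⟩
  have hd := dvd_span_pow hI
  rw [← hP2, ← pow_mul] at hd
  obtain ⟨i, -, hi⟩ := (dvd_prime_pow hPp _).1 hd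
  rw [associated_iff_eq] at hi
  apply Subtype.ext
  simp only
  rw [hi, map_pow, hN] at hI
  rw [hi, Nat.pow_right_injective hq.two_le hI]

theorem idealCount_split {q : ℕ} (hq : q.Prime) (P Q : Ideal (𝓞 K)) (hPN : Ideal.absNorm P = q)
    (hQN : Ideal.absNorm Q = q) (hPQ : P ≠ Q)
    (hP2 : P * Q = Ideal.span {(q : 𝓞 K)}) (k : ℕ) :
    idealCount K (q ^ k) = k + 1 := by
  have prm : ∀ P : Ideal (𝓞 K), Ideal.absNorm P = q → Prime P := by
    intro P hN
    refine Ideal.prime_of_isPrime ?_ (Ideal.isPrime_of_irreducible_absNorm (by rw [hN]; exact hq))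
    rintro rfl
    rw [Ideal.absNorm_bot] at hN
    exact hq.ne_zero hN.symm
  have hPp := prm P hPN
  have hQp := prm Q hQN
  have aux : ∀ i i' j j', i < i' → P ^ i * Q ^ j = P ^ i' * Q ^ j' → False := by
    intro i i' j j' hlt h
    obtain ⟨d, rfl⟩ : ∃ d, i' = i + (d + 1) := ⟨i' - i - 1, by omega⟩
    rw [pow_add, mul_assoc] at h
    have h2 := mul_left_cancel₀ (pow_ne_zero _ hPp.ne_zero) h
    have h3 : P ∣ Q ^ j := by
      rw [h2, pow_succ]
      exact ⟨P ^ d * Q ^ j', by ring⟩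
    have h4 := hPp.dvd_of_dvd_pow h3
    exact hPQ (associated_iff_eq.1 ((hPp.dvd_prime_iff_associated hQp).1 h4))
  unfold idealCount
  have hc : Nat.card (Fin (k + 1)) = k + 1 := by simp
  rw [← hc]
  symm
  refine Nat.card_eq_of_bijective
    (fun x : Fin (k + 1) => (⟨P ^ (x : ℕ) * Q ^ (k - x), by
      rw [map_mul, map_pow, map_pow, hPN, hQN, ← pow_add]
      congr 1
      have := x.2
      omega⟩ : {I : Ideal (𝓞 K) // Ideal.absNorm I = q ^ k})) ⟨?_, ?_⟩
  · intro x y hxy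
    simp only [Subtype.mk.injEq] at hxy
    rcases lt_trichotomy (x : ℕ) y with h | h | h
    · exact (aux _ _ _ _ h hxy).elim
    · exact Fin.ext h
    · exact (aux _ _ _ _ h hxy.symm).elim
  · rintro ⟨I, hI⟩
    have hd := dvd_span_pow hI
    rw [← hP2, mul_pow] at hd
    obtain ⟨I1, I2, h1, h2, rfl⟩ := exists_dvd_and_dvd_of_dvd_mul hd
    obtain ⟨i, -, hi⟩ := (dvd_prime_pow hPp _).1 h1
    obtain ⟨j, -, hj⟩ := (dvd_prime_pow hQp _).1 h2
    rw [associated_iff_eq] at hi hj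
    subst hi hj
    rw [map_mul, map_pow, map_pow, hPN, hQN, ← pow_add] at hI
    have := Nat.pow_right_injective hq.two_le hI
    refine ⟨⟨i, by omega⟩, Subtype.ext ?_⟩
    simp only
    rw [← this, Nat.add_sub_cancel_left]

end partF2

section partF3
open NumberField

variable {K : Type} [Field K] [NumberField K] {l : ℕ}

theorem legendre_iff [Fact l.Prime] (hl4 : l % 4 = 3) {q c : ℕ} (hc : 1 + l = 4 * c)
    (hq : q.Prime) (hql : q ≠ l) :
    legendreSym l q = 1 ↔ ∃ b : ℤ, (q : ℤ) ∣ b ^ 2 - b + c := by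
  have := Fact.mk hq
  have hlp : l.Prime := Fact.out
  rcases eq_or_ne q 2 with rfl | hq2
  · have h2 : legendreSym l ((2 : ℕ) : ℤ) = ZMod.χ₈ l := by
      have := legendreSym.at_two (p := l) (by omega)
      simpa using this
    rw [h2, ZMod.χ₈_nat_eq_if_mod_eight]
    have hb : ∀ b : ℤ, ((2 : ℕ) : ℤ) ∣ b ^ 2 - b := by
      intro b
      have := Int.even_mul_pred_self b
      rw [even_iff_two_dvd] at this
      have e : b ^ 2 - b = b * (b - 1) := by ring
      rw [e]; exact this
    constructor
    · intro h
      refine ⟨0, ?_⟩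
      have : l % 8 = 7 := by
        by_contra h7
        rw [if_neg (by omega), if_neg (by omega)] at h
        norm_num at h
      simp only [ne_eq, OfNat.ofNat_ne_zero, not_false_eq_true, zero_pow, sub_zero, zero_add]
      omega
    · rintro ⟨b, hb'⟩
      have h1 := (Int.dvd_add_right (hb b)).1 hb'
      have : l % 8 = 7 := by omega
      rw [if_neg (by omega), if_pos (by omega)]
  · have hrec : legendreSym l q = legendreSym q (-l) := by
      rw [legendreSym.at_neg hq2, legendreSym.quadratic_reciprocity' (p := l) (q := q) (by omega) hq2,
        ZMod.χ₄_eq_neg_one_pow (hq.eq_two_or_odd.resolve_left hq2), ← mul_assoc, ← pow_add]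
      rw [Even.neg_one_pow, one_mul]
      have : q / 2 + l / 2 * (q / 2) = (l / 2 + 1) * (q / 2) := by ring
      rw [this]
      exact Even.mul_right (by rw [Nat.even_iff]; omega) _
    have hcq : (c : ZMod q) * 4 = 1 + l := by
      have := congrArg (Nat.cast : ℕ → ZMod q) hc
      push_cast at this
      rw [this]; ring
    have h2 : (2 : ZMod q) ≠ 0 := by
      intro h
      have : ((2 : ℕ) : ZMod q) = 0 := by exact_mod_cast h
      rw [ZMod.natCast_eq_zero_iff] at this
      exact hq2 ((Nat.prime_dvd_prime_iff_eq hq Nat.prime_two).1 this)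
    rw [hrec, legendreSym.eq_one_iff]
    · constructor
      · rintro ⟨y, hy⟩
        push_cast at hy
        refine ⟨(((1 + y) / 2 : ZMod q).val : ℤ), ?_⟩
        rw [← ZMod.intCast_zmod_eq_zero_iff_dvd]
        push_cast
        rw [ZMod.natCast_zmod_val]
        field_simp
        linear_combination hcq - hy
      · rintro ⟨b, hb⟩
        rw [← ZMod.intCast_zmod_eq_zero_iff_dvd] at hb
        push_cast at hb
        refine ⟨2 * b - 1, ?_⟩
        push_cast
        linear_combination -4 * hb + hcq
    · push_cast
      rw [neg_ne_zero, Ne, ZMod.natCast_eq_zero_iff]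
      intro h
      exact hql ((Nat.prime_dvd_prime_iff_eq hq hlp).1 h)

theorem idealCount_prime_pow (hfin : Module.finrank ℚ K = 2) [Fact l.Prime] (hl4 : l % 4 = 3)
    (s : K) (hs : s ^ 2 = -(l : K)) {q : ℕ} (hq : q.Prime) (k : ℕ) :
    (idealCount K (q ^ k) : ℤ) = ∑ i ∈ Finset.range (k + 1), (legendreSym l q) ^ i := by
  have hl : l.Prime := Fact.out
  obtain ⟨θ, hθ, hθ2⟩ := theta_exists hl4 s hs
  obtain ⟨c, hc⟩ : ∃ c, 1 + l = 4 * c := ⟨(1 + l) / 4, by omega⟩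
  have hc' : (1 + l) / 4 = c := by omega
  rw [hc'] at hθ2
  have hcK : (1 : 𝓞 K) + l = 4 * c := by exact_mod_cast congrArg (Nat.cast : ℕ → 𝓞 K) hc
  have hcZ : (1 : ℤ) + l = 4 * c := by exact_mod_cast hc
  have hN : Ideal.absNorm (Ideal.span {(q : 𝓞 K)}) = q ^ 2 := by rw [absNorm_span_nat, hfin]
  have hone : ∀ (I : Ideal (𝓞 K)) (m : ℤ), (q : 𝓞 K) ∈ I → (m : 𝓞 K) ∈ I → ¬ (q : ℤ) ∣ m → I = ⊤ := by
    intro I m h1 h2 h3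
    have hcop : IsCoprime (q : ℤ) m := by
      rw [(Nat.prime_iff_prime_int.1 hq).coprime_iff_not_dvd]; exact h3
    obtain ⟨a, b, hab⟩ := hcop
    rw [Ideal.eq_top_iff_one]
    have h2' : (a : 𝓞 K) * q + b * m = 1 := by exact_mod_cast congrArg (Int.cast : ℤ → 𝓞 K) hab
    rw [← h2']
    exact I.add_mem (I.mul_mem_left _ h1) (I.mul_mem_left _ h2)
  have hprod : ∀ b : ℤ, (θ - b) * (θ - (1 - b)) = -((b ^ 2 - b + c : ℤ) : 𝓞 K) := by
    intro b
    push_cast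
    linear_combination hθ2
  rcases eq_or_ne q l with rfl | hql
  · -- ramified
    have h0 : legendreSym q q = 0 := by
      rw [legendreSym.eq_zero_iff]; simp
    have hP2 : (Ideal.span {2 * θ - 1}) ^ 2 = Ideal.span {(q : 𝓞 K)} := by
      rw [Ideal.span_singleton_pow]
      have : (2 * θ - 1) ^ 2 = -(q : 𝓞 K) := by linear_combination 4 * hθ2 + hcK
      rw [this, Ideal.span_singleton_neg]
    have hPN : Ideal.absNorm (Ideal.span {2 * θ - 1}) = q := by
      have := congrArg Ideal.absNorm hP2
      rw [map_pow, hN] at this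
      exact Nat.pow_left_injective two_ne_zero this
    rw [idealCount_ram hq _ hPN hP2, h0, Finset.sum_range_succ']
    simp
  by_cases h1 : legendreSym l q = 1
  · obtain ⟨b, hb⟩ := (legendre_iff hl4 hc hq hql).1 h1
    have hnd : ¬ (q : ℤ) ∣ 2 * b - 1 := by
      intro h
      have h3 : (q : ℤ) ∣ l := by
        have e : (l : ℤ) = 4 * (b ^ 2 - b + c) - (2 * b - 1) * (2 * b - 1) := by
          linear_combination hcZ
        rw [e]
        exact dvd_sub (hb.mul_left _) (h.mul_left _)
      exact hql ((Nat.prime_dvd_prime_iff_eq hq hl).1 (by exact_mod_cast h3))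
    set P := Ideal.span {(q : 𝓞 K), θ - b} with hPd
    set Q := Ideal.span {(q : 𝓞 K), θ - (1 - b)} with hQd
    have hqP : (q : 𝓞 K) ∈ P := Ideal.subset_span (by simp)
    have hqQ : (q : 𝓞 K) ∈ Q := Ideal.subset_span (by simp)
    have hθP : θ - b ∈ P := Ideal.subset_span (by simp)
    have hθQ : θ - (1 - b) ∈ Q := Ideal.subset_span (by simp)
    have hqS : (q : 𝓞 K) ∈ Ideal.span {(q : 𝓞 K)} := Ideal.mem_span_singleton_self _
    have hPQ : P * Q = Ideal.span {(q : 𝓞 K)} := by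
      apply le_antisymm
      · rw [hPd, hQd, Ideal.span_pair_mul_span_pair, Ideal.span_le]
        rintro x (rfl | rfl | rfl | rfl)
        · exact Ideal.mul_mem_left _ _ hqS
        · exact Ideal.mul_mem_right _ _ hqS
        · exact Ideal.mul_mem_left _ _ hqS
        · rw [hprod, SetLike.mem_coe, Ideal.neg_mem_iff]
          obtain ⟨t, ht⟩ := hb
          rw [ht]
          push_cast
          exact Ideal.mul_mem_right _ _ hqS
      · rw [Ideal.span_singleton_le_iff_mem]
        have hcop : IsCoprime (q : ℤ) (2 * b - 1) := by
          rw [(Nat.prime_iff_prime_int.1 hq).coprime_iff_not_dvd]; exact hnd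
        obtain ⟨u, v, huv⟩ := hcop
        have huv' : (u : 𝓞 K) * q + v * (2 * b - 1) = 1 := by
          exact_mod_cast congrArg (Int.cast : ℤ → 𝓞 K) huv
        have e : (q : 𝓞 K) = u * (q * q) + v * (q * (θ - (1 - b)) - (θ - b) * q) := by
          linear_combination (-(q : 𝓞 K)) * huv'
        rw [e]
        refine Ideal.add_mem _ (Ideal.mul_mem_left _ _ (Ideal.mul_mem_mul hqP hqQ))
          (Ideal.mul_mem_left _ _ (Ideal.sub_mem _ (Ideal.mul_mem_mul hqP hθQ) (Ideal.mul_mem_mul hθP hqQ)))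
    have hnotin : ∀ d : ℤ, θ - d ∉ Ideal.span {(q : 𝓞 K)} := by
      intro d hd
      obtain ⟨t, ht⟩ := Ideal.mem_span_singleton'.1 hd
      obtain ⟨x, y, hxy⟩ := quad_int hfin hl hl4 s hs θ hθ t
      have h0 : ((x * q + d : ℤ) : 𝓞 K) + ((y * q - 1 : ℤ) : 𝓞 K) * θ = 0 := by
        push_cast
        rw [hxy] at ht
        linear_combination ht
      have h2 := (quad_int_unique hl.pos s hs θ hθ h0).2
      have : (q : ℤ) ∣ 1 := ⟨y, by linarith⟩
      exact hq.one_lt.ne' (by exact_mod_cast Int.eq_one_of_dvd_one (by positivity) this)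
    have hP1 : P ≠ ⊤ := by
      intro h
      rw [h, Ideal.top_mul] at hPQ
      rw [hPQ] at hθQ
      exact hnotin (1 - b) (by push_cast; exact hθQ)
    have hQ1 : Q ≠ ⊤ := by
      intro h
      rw [h, Ideal.mul_top] at hPQ
      rw [hPQ] at hθP
      exact hnotin b hθP
    have hnn : Ideal.absNorm P * Ideal.absNorm Q = q ^ 2 := by rw [← map_mul, hPQ, hN]
    obtain ⟨n1, n2⟩ := (hq.mul_eq_prime_sq_iff (by rwa [Ne, Ideal.absNorm_eq_one_iff])
      (by rwa [Ne, Ideal.absNorm_eq_one_iff])).1 hnn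
    have hne : P ≠ Q := by
      intro h
      apply hP1
      refine hone P (2 * b - 1) hqP ?_ hnd
      have : ((2 * b - 1 : ℤ) : 𝓞 K) = (θ - (1 - b)) - (θ - b) := by push_cast; ring
      rw [this]
      exact P.sub_mem (h ▸ hθQ) hθP
    rw [idealCount_split hq P Q n1 n2 hne hPQ, h1]
    simp
  · have hm1 : legendreSym l q = -1 := by
      refine (legendreSym.eq_one_or_neg_one l ?_).resolve_left h1
      push_cast
      rw [Ne, ZMod.natCast_eq_zero_iff]
      intro h
      exact hql.symm ((Nat.prime_dvd_prime_iff_eq hl hq).1 h)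
    have hprime : (Ideal.span {(q : 𝓞 K)}).IsPrime := by
      have hne : Ideal.span {(q : 𝓞 K)} ≠ ⊤ := by
        rw [Ne, ← Ideal.absNorm_eq_one_iff, hN]
        exact (Nat.one_lt_pow two_ne_zero hq.one_lt).ne'
      obtain ⟨M, hM, hle⟩ := Ideal.exists_le_maximal _ hne
      obtain ⟨M', hM'⟩ := Ideal.dvd_iff_le.2 hle
      have hqM : (q : 𝓞 K) ∈ M := hle (Ideal.mem_span_singleton_self _)
      by_cases hM1 : M' = ⊤
      · rw [hM', hM1, Ideal.mul_top]
        exact hM.isPrime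
      exfalso
      have hnn : Ideal.absNorm M * Ideal.absNorm M' = q ^ 2 := by rw [← map_mul, ← hM', hN]
      obtain ⟨n1, n2⟩ := (hq.mul_eq_prime_sq_iff (by rw [Ne, Ideal.absNorm_eq_one_iff]; exact hM.ne_top)
        (by rwa [Ne, Ideal.absNorm_eq_one_iff])).1 hnn
      have hcard : Nat.card (𝓞 K ⧸ M) = q := by
        rw [← n1, Ideal.absNorm_apply]; rfl
      have hfinite : Finite (𝓞 K ⧸ M) := Nat.finite_of_card_ne_zero (by rw [hcard]; exact hq.ne_zero)
      have := Fintype.ofFinite (𝓞 K ⧸ M)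
      let e := ZMod.ringEquivOfPrime (𝓞 K ⧸ M) hq (by rw [← hcard, Nat.card_eq_fintype_card])
      have : NeZero q := ⟨hq.ne_zero⟩
      let b : ℤ := ((e.symm (Ideal.Quotient.mk M θ)).val : ℤ)
      have hb : θ - b ∈ M := by
        rw [← Ideal.Quotient.mk_eq_mk_iff_sub_mem]
        simp only [b]
        push_cast
        rw [map_natCast, ← map_natCast e, ZMod.natCast_zmod_val, RingEquiv.apply_symm_apply]
      have hg : ((b ^ 2 - b + c : ℤ) : 𝓞 K) ∈ M := by
        rw [← Ideal.neg_mem_iff, ← hprod]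
        exact M.mul_mem_right _ hb
      apply h1
      rw [legendre_iff hl4 hc hq hql]
      refine ⟨b, ?_⟩
      by_contra hnd
      exact hM.ne_top (hone M _ hqM hg hnd)
    rw [idealCount_inert hq hfin hprime, hm1, neg_one_geom_sum]
    have : Even (k + 1) ↔ ¬ Even k := by simp only [parity_simps]
    by_cases hk : Even k
    · rw [if_pos hk, if_neg (by rw [this]; simpa using hk)]; rfl
    · rw [if_neg hk, if_pos (by rw [this]; exact hk)]; rfl

end partF3

section partF4
open Filter Topology

theorem parts_id (f w : ℕ → ℂ) (N : ℕ) :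
    ∑ k ∈ Finset.range N, f k * w k = (∑ k ∈ Finset.range N, f k) * w N +
      ∑ k ∈ Finset.range N, (∑ i ∈ Finset.range (k + 1), f i) * (w k - w (k + 1)) := by
  induction N with
  | zero => simp
  | succ N ih =>
    rw [Finset.sum_range_succ, ih, Finset.sum_range_succ (fun k => _ * (w k - w (k + 1)))]
    rw [Finset.sum_range_succ f N]
    ring

theorem w_bound {k : ℕ} (hk : 1 ≤ k) {s : ℝ} (h1 : 1 ≤ s) (h2 : s ≤ 2) :
    |(k : ℝ) ^ (-s) - ((k + 1 : ℕ) : ℝ) ^ (-s)| ≤ 2 / (k : ℝ) ^ 2 := by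
  have hk0 : (1 : ℝ) ≤ k := by exact_mod_cast hk
  have hkp : (0 : ℝ) < k := by linarith
  have hkp1 : (0 : ℝ) < ((k + 1 : ℕ) : ℝ) := by positivity
  have hle : ((k + 1 : ℕ) : ℝ) ^ (-s) ≤ (k : ℝ) ^ (-s) :=
    Real.rpow_le_rpow_of_nonpos hkp (by push_cast; linarith) (by linarith)
  rw [abs_of_nonneg (by linarith)]
  set x : ℝ := k / ((k + 1 : ℕ) : ℝ) with hx
  have hx0 : 0 < x := by positivity
  have hx1 : x ≤ 1 := by rw [hx, div_le_one hkp1]; push_cast; linarith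
  have e1 : ((k + 1 : ℕ) : ℝ) ^ (-s) = (k : ℝ) ^ (-s) * x ^ s := by
    rw [hx, Real.div_rpow hkp.le hkp1.le, Real.rpow_neg hkp.le, Real.rpow_neg hkp1.le]
    have : (k : ℝ) ^ s ≠ 0 := (Real.rpow_pos_of_pos hkp s).ne'
    field_simp
  have e2 : x ^ (2 : ℝ) ≤ x ^ s := Real.rpow_le_rpow_of_exponent_ge hx0 hx1 h2
  have e3 : (k : ℝ) ^ (-s) ≤ (k : ℝ) ^ (-1 : ℝ) := Real.rpow_le_rpow_of_exponent_le hk0 (by linarith)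
  rw [Real.rpow_neg_one] at e3
  rw [Real.rpow_two] at e2
  have e4 : 1 - x ≤ (k : ℝ)⁻¹ := by
    have : 1 - x = 1 / ((k + 1 : ℕ) : ℝ) := by rw [hx]; push_cast; field_simp; ring
    rw [this, one_div]
    exact inv_anti₀ hkp (by push_cast; linarith)
  have e5 : 1 - x ^ s ≤ 2 * (k : ℝ)⁻¹ := by nlinarith
  have e6 : 0 ≤ 1 - x ^ s := by
    have := Real.rpow_le_one hx0.le hx1 (by linarith : 0 ≤ s); linarith
  calc _ = (k : ℝ) ^ (-s) * (1 - x ^ s) := by rw [e1]; ring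
    _ ≤ (k : ℝ)⁻¹ * (2 * (k : ℝ)⁻¹) := mul_le_mul e3 e5 e6 (by positivity)
    _ = _ := by field_simp

theorem abel_dirichlet (f : ℕ → ℂ) (C : ℝ) (hf0 : f 0 = 0)
    (hC : ∀ N, ‖∑ k ∈ Finset.range N, f k‖ ≤ C) (hb : ∀ n, ‖f n‖ ≤ 1) :
    ∃ V : ℂ, Tendsto (fun s : ℝ => LSeries f s) (𝓝[>] 1) (𝓝 V) ∧
      Tendsto (fun N => ∑ k ∈ Finset.range N, f k / k) atTop (𝓝 V) := by
  set S : ℕ → ℂ := fun N => ∑ k ∈ Finset.range N, f k with hS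
  let w : ℝ → ℕ → ℂ := fun s k => (((k : ℝ) ^ (-s) : ℝ) : ℂ)
  let T : ℝ → ℕ → ℂ := fun s k => S (k + 1) * (w s k - w s (k + 1))
  have hC0 : 0 ≤ C := le_trans (norm_nonneg _) (hC 0)
  have hT : ∀ s : ℝ, 1 ≤ s → s ≤ 2 → ∀ k, ‖T s k‖ ≤ C * (2 / (k : ℝ) ^ 2) := by
    intro s h1 h2 k
    rcases Nat.eq_zero_or_pos k with rfl | hk
    · simp [T, S, hf0]
    · simp only [T, w]
      rw [norm_mul, ← Complex.ofReal_sub, Complex.norm_real]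
      exact mul_le_mul (hC _) (w_bound hk h1 h2) (abs_nonneg _) hC0
  have hsum : Summable fun k : ℕ => C * (2 / (k : ℝ) ^ 2) :=
    ((Real.summable_one_div_nat_pow.2 one_lt_two).mul_left (2 * C)).congr fun k => by ring
  have hpart : ∀ s : ℝ, 1 ≤ s → s ≤ 2 →
      Tendsto (fun N => ∑ k ∈ Finset.range N, f k * w s k) atTop (𝓝 (∑' k, T s k)) := by
    intro s h1 h2
    have hTs : Summable (T s) := Summable.of_norm_bounded hsum (hT s h1 h2)
    have h3 := hTs.hasSum.tendsto_sum_nat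
    have h4 : Tendsto (fun N => S N * w s N) atTop (𝓝 0) := by
      rw [tendsto_zero_iff_norm_tendsto_zero]
      have h5 : Tendsto (fun N : ℕ => C * (N : ℝ) ^ (-s)) atTop (𝓝 (C * 0)) :=
        ((tendsto_rpow_neg_atTop (by linarith)).comp tendsto_natCast_atTop_atTop).const_mul C
      rw [mul_zero] at h5
      refine squeeze_zero (fun _ => norm_nonneg _) (fun N => ?_) h5
      rw [norm_mul, Complex.norm_real, Real.norm_of_nonneg (by positivity)]
      exact mul_le_mul_of_nonneg_right (hC N) (by positivity)
    have h6 := h4.add h3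
    rw [zero_add] at h6
    refine h6.congr fun N => ?_
    rw [parts_id f (w s) N]
  refine ⟨∑' k, T 1 k, ?_, ?_⟩
  · have h1 : Tendsto (fun s : ℝ => ∑' k, T s k) (𝓝[>] 1) (𝓝 (∑' k, T 1 k)) := by
      refine tendsto_tsum_of_dominated_convergence hsum ?_ ?_
      · intro k
        refine tendsto_nhdsWithin_of_tendsto_nhds ?_
        rcases Nat.eq_zero_or_pos k with rfl | hk
        · simp [T, S, hf0]
        · have hc : ∀ k : ℕ, 0 < k → Tendsto (fun s => w s k) (𝓝 1) (𝓝 (w 1 k)) := by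
            intro k hk
            have : Continuous fun s : ℝ => w s k := by
              refine Complex.continuous_ofReal.comp ?_
              exact Real.continuous_const_rpow (by exact_mod_cast hk.ne') |>.comp continuous_neg
            exact this.tendsto 1
          exact ((hc k hk).sub (hc (k + 1) (by omega))).const_mul _
      · have : Set.Ioo (1 : ℝ) 2 ∈ 𝓝[>] (1 : ℝ) := Ioo_mem_nhdsGT one_lt_two
        filter_upwards [this] with s hs k
        exact hT s hs.1.le hs.2.le k
    refine h1.congr' ?_
    have : Set.Ioo (1 : ℝ) 2 ∈ 𝓝[>] (1 : ℝ) := Ioo_mem_nhdsGT one_lt_two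
    filter_upwards [this] with s hs
    have hLs : LSeriesSummable f s :=
      LSeriesSummable_of_bounded_of_one_lt_re (m := 1) (fun n _ => hb n) (by simpa using hs.1)
    have h2 := hLs.hasSum.tendsto_sum_nat
    refine tendsto_nhds_unique (hpart s hs.1.le hs.2.le) (h2.congr fun N => ?_)
    refine Finset.sum_congr rfl fun k _ => ?_
    rcases Nat.eq_zero_or_pos k with rfl | hk
    · simp [hf0]
    · rw [LSeries.term_of_ne_zero hk.ne']
      simp only [w]
      rw [Real.rpow_neg (by positivity), Complex.ofReal_inv, Complex.ofReal_cpow (by positivity),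
        div_eq_mul_inv]
      simp
  · refine (hpart 1 le_rfl one_le_two).congr fun N => ?_
    refine Finset.sum_congr rfl fun k _ => ?_
    simp only [w]
    rw [Real.rpow_neg_one, div_eq_mul_inv]
    simp

end partF4

section partF5
open Filter Topology NumberField

noncomputable def legC (l : ℕ) [Fact l.Prime] : DirichletCharacter ℂ l :=
  (quadraticChar (ZMod l)).ringHomComp (Int.castRingHom ℂ)

theorem legC_apply (l : ℕ) [Fact l.Prime] (a : ℕ) : legC l (a : ZMod l) = ((legendreSym l a : ℤ) : ℂ) := by
  simp [legC, legendreSym, MulChar.ringHomComp_apply]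

theorem legC_zmod (l : ℕ) [Fact l.Prime] (a : ZMod l) : legC l a = ((quadraticChar (ZMod l) a : ℤ) : ℂ) := rfl

noncomputable def idealAF (K : Type) [Field K] [NumberField K] : ArithmeticFunction ℂ :=
  ⟨fun n => if n = 0 then 0 else (idealCount K n : ℂ), by simp⟩

theorem idealAF_eq {K : Type} [Field K] [NumberField K] {l : ℕ} [Fact l.Prime]
    (hfin : Module.finrank ℚ K = 2) (hl4 : l % 4 = 3) (s : K) (hs : s ^ 2 = -(l : K)) :
    idealAF K = DirichletCharacter.zetaMul (legC l) := by
  have hm : (idealAF K).IsMultiplicative := by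
    rw [ArithmeticFunction.IsMultiplicative.iff_ne_zero]
    refine ⟨?_, ?_⟩
    · have := idealCount_prime_pow hfin hl4 s hs Nat.prime_two 0
      simp at this
      simp [idealAF, this]
    · intro m n hm hn h
      simp [idealAF, hm, hn, idealCount_mul h]
  rw [ArithmeticFunction.IsMultiplicative.eq_iff_eq_on_prime_powers _ hm _
    (DirichletCharacter.isMultiplicative_zetaMul _)]
  intro q k hq
  have := idealCount_prime_pow hfin hl4 s hs hq k
  have e1 : DirichletCharacter.zetaMul (legC l) (q ^ k) = ∑ i ∈ (q ^ k).divisors,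
      toArithmeticFunction (fun n => legC l (n : ZMod l)) i := ArithmeticFunction.coe_zeta_mul_apply
  rw [e1, Nat.sum_divisors_prime_pow hq]
  simp only [toArithmeticFunction, ArithmeticFunction.coe_mk,
    pow_eq_zero_iff', hq.ne_zero, ne_eq, false_and, ↓reduceIte, idealAF]
  simp only [legC_apply]
  simp only [Nat.cast_pow, legendreSym, Int.cast_pow, Int.cast_natCast, map_pow] at this ⊢
  have h2 := congrArg (fun z : ℤ => (z : ℂ)) this
  push_cast at h2
  exact h2

theorem zeta_fac {K : Type} [Field K] [NumberField K] {l : ℕ} [Fact l.Prime]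
    (hfin : Module.finrank ℚ K = 2) (hl4 : l % 4 = 3) (t : K) (ht : t ^ 2 = -(l : K))
    {s : ℂ} (hs : 1 < s.re) :
    dedekindZeta K s = riemannZeta s * LSeries (fun n => legC l (n : ZMod l)) s := by
  have : dedekindZeta K s = LSeries (idealAF K) s := by
    rw [dedekindZeta]
    apply LSeries_congr
    intro n hn
    simp [idealAF, hn, idealCount]
  rw [this, idealAF_eq hfin hl4 t ht, DirichletCharacter.zetaMul, ← ArithmeticFunction.coe_mul, LSeries_convolution']
  · congr 1
    · simp_rw [← ArithmeticFunction.LSeries_zeta_eq_riemannZeta hs, ← ArithmeticFunction.natCoe_apply]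
    · exact (LSeries_congr (legC l).apply_eq_toArithmeticFunction_apply s).symm
  · exact ArithmeticFunction.LSeriesSummable_zeta_iff.mpr hs
  · exact (LSeriesSummable_congr _ fun h ↦ ((legC l).apply_eq_toArithmeticFunction_apply h).symm).mpr <|
      ZMod.LSeriesSummable_of_one_lt_re (legC l) hs
end partF5

section partF6
open Filter Topology NumberField

theorem legC_quad (l : ℕ) [Fact l.Prime] : (legC l).IsQuadratic :=
  (quadraticChar_isQuadratic (ZMod l)).comp _

theorem legC_ne_one (l : ℕ) [Fact l.Prime] (hl : l ≠ 2) : legC l ≠ 1 := by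
  apply (MulChar.ringHomComp_ne_one_iff (RingHom.injective_int _)).mpr
  apply quadraticChar_ne_one
  rwa [ZMod.ringChar_zmod_n]

theorem legC_neg_one (l : ℕ) [Fact l.Prime] (hl4 : l % 4 = 3) : legC l (-1) = -1 := by
  rw [legC_zmod, quadraticChar_neg_one (by rw [ZMod.ringChar_zmod_n]; rintro rfl; omega), ZMod.card,
    ZMod.χ₄_nat_three_mod_four hl4]
  simp

theorem legC_tau_shift (l : ℕ) [Fact l.Prime] (hl : l ≠ 2) (n : ZMod l) :
    ∑ a, legC l a * ZMod.stdAddChar (a * n) = legC l n * gaussSum (legC l) ZMod.stdAddChar := by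
  by_cases hn : n = 0
  · subst hn
    simp [MulChar.sum_eq_zero_of_ne_one (legC_ne_one l hl), MulChar.map_zero]
  · have := gaussSum_mulShift_eq (legC l) ZMod.stdAddChar (Units.mk0 n hn)
    rw [(legC_quad l).inv] at this
    rw [Units.val_mk0] at this
    rw [← this, gaussSum]
    simp [AddChar.mulShift_apply, mul_comm n]

theorem sum_zmod_range {M : Type*} [AddCommMonoid M] (l : ℕ) [NeZero l] (g : ZMod l → M) :
    ∑ a, g a = ∑ a ∈ Finset.range l, g (a : ZMod l) := by
  obtain ⟨k, rfl⟩ := Nat.exists_eq_succ_of_ne_zero (NeZero.ne l)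
  rw [← Fin.sum_univ_eq_sum_range (fun a => g (a : ZMod (k+1)))]
  apply Finset.sum_congr rfl
  intro i _
  congr 1
  exact (ZMod.natCast_zmod_val (n := k+1) i).symm

theorem legC_partial (l : ℕ) [Fact l.Prime] (hl : l ≠ 2) (N : ℕ) :
    ‖∑ k ∈ Finset.range N, legC l (k : ZMod l)‖ ≤ l := by
  have hb : ∀ a, ‖legC l a‖ ≤ 1 := fun a => DirichletCharacter.norm_le_one _ a
  have hper : ∀ m, ∑ k ∈ Finset.range (l * m), legC l (k : ZMod l) = 0 := by
    intro m
    induction m with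
    | zero => simp
    | succ m ih =>
      rw [mul_add, mul_one, Finset.sum_range_add, ih, zero_add]
      have := sum_zmod_range l (legC l)
      rw [MulChar.sum_eq_zero_of_ne_one (legC_ne_one l hl)] at this
      rw [this]
      apply Finset.sum_congr rfl
      intros; simp
  rw [← Nat.div_add_mod N l, Finset.sum_range_add, hper, zero_add]
  refine (norm_sum_le _ _).trans ((Finset.sum_le_sum fun i _ => hb _).trans ?_)
  simp only [Finset.sum_const, Finset.card_range, nsmul_eq_mul, mul_one]
  exact_mod_cast (Nat.mod_lt _ (Fact.out : l.Prime).pos).le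

theorem legC_V {K : Type} [Field K] [NumberField K] {l : ℕ} [Fact l.Prime]
    (hfin : Module.finrank ℚ K = 2) (hl4 : l % 4 = 3) (hl3 : 3 < l) (t : K) (ht : t ^ 2 = -(l : K)) :
    Tendsto (fun N => ∑ k ∈ Finset.range N, legC l (k : ZMod l) / k) atTop
      (𝓝 ((Real.pi * classNumber K / Real.sqrt l : ℝ) : ℂ)) := by
  have hl2 : l ≠ 2 := by omega
  obtain ⟨V, hV1, hV2⟩ := abel_dirichlet (fun n => legC l (n : ZMod l)) l (by simp [MulChar.map_zero])
    (legC_partial l hl2) (fun n => DirichletCharacter.norm_le_one _ _)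
  have h1 := tendsto_sub_one_mul_dedekindZeta_nhdsGT K
  rw [quad_residue hfin Fact.out hl4 hl3 t ht] at h1
  have h2 : Tendsto (fun s : ℝ => ((s : ℂ) - 1) * riemannZeta s) (𝓝[>] 1) (𝓝 1) := by
    apply riemannZeta_residue_one.comp
    refine tendsto_nhdsWithin_iff.mpr ⟨?_, ?_⟩
    · have : Tendsto (fun s : ℝ => (s : ℂ)) (𝓝 1) (𝓝 ((1 : ℝ) : ℂ)) := Complex.continuous_ofReal.tendsto 1
      rw [Complex.ofReal_one] at this
      exact this.mono_left nhdsWithin_le_nhds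
    · filter_upwards [self_mem_nhdsWithin] with s hs
      simp only [Set.mem_Ioi] at hs
      simp only [Set.mem_compl_iff, Set.mem_singleton_iff]
      exact_mod_cast hs.ne'
  have h3 := h2.mul hV1
  rw [one_mul] at h3
  have h4 := h3.congr' (f₂ := fun s : ℝ => ((s : ℂ) - 1) * dedekindZeta K s) (by
    filter_upwards [self_mem_nhdsWithin] with s hs
    rw [zeta_fac hfin hl4 t ht (by simpa using hs), mul_assoc])
  rw [tendsto_nhds_unique h1 h4]
  exact hV2

theorem one_sub_exp_eq (θ : ℝ) : 1 - exp (θ * I) =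
    ((2 * Real.sin (θ / 2) : ℝ) : ℂ) * (exp (((θ - Real.pi) / 2 : ℝ) * I)) := by
  have : (((θ - Real.pi) / 2 : ℝ) : ℂ) * I = (θ / 2) * I - Real.pi / 2 * I := by push_cast; ring
  rw [this, exp_sub, Complex.exp_pi_div_two_mul_I]
  push_cast
  rw [Complex.sin]
  have e : exp (θ * I) = exp (θ / 2 * I) * exp (θ / 2 * I) := by rw [← exp_add]; ring_nf
  have e2 : exp (-(θ / 2 : ℂ) * I) * exp (θ / 2 * I) = 1 := by rw [← exp_add]; ring_nf; simp
  rw [e]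
  have e3 : exp (θ / 2 * I) / I = - exp (θ / 2 * I) * I := by
    field_simp
    rw [I_sq]; ring
  rw [e3]
  linear_combination -e2 + (exp (-(θ / 2 : ℂ) * I)* exp (θ / 2 * I) - exp (θ / 2 * I) * exp (θ / 2 * I)) * I_sq

theorem arg_one_sub {θ : ℝ} (h0 : 0 < θ) (h1 : θ < 2 * Real.pi) :
    arg (1 - exp (θ * I)) = (θ - Real.pi) / 2 := by
  rw [one_sub_exp_eq, arg_real_mul _ (by
    have := Real.sin_pos_of_pos_of_lt_pi (x := θ / 2) (by linarith) (by linarith); linarith)]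
  rw [Complex.arg_exp_mul_I]
  rw [toIocMod_eq_self]
  constructor <;> linarith [Real.pi_pos]

theorem slit_one_sub {z : ℂ} (hz : ‖z‖ = 1) (h1 : z ≠ 1) : 1 - z ∈ slitPlane := by
  left
  rw [sub_re, one_re]
  have h2 : z.re ^ 2 + z.im ^ 2 = 1 := by
    have := Complex.normSq_eq_norm_sq z
    rw [hz, Complex.normSq_apply] at this
    nlinarith
  by_contra h
  apply h1
  apply Complex.ext
  · rw [one_re]; nlinarith [sq_nonneg z.im]
  · rw [one_im]; nlinarith [sq_nonneg z.im, sq_nonneg (z.re)]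
end partF6

section partF7
open Filter Topology NumberField

theorem std_norm {l : ℕ} [NeZero l] (a : ZMod l) : ‖ZMod.stdAddChar a‖ = 1 := by
  rw [ZMod.stdAddChar_apply]; exact Circle.norm_coe _

theorem std_ne_one {l : ℕ} [NeZero l] {a : ZMod l} (h : a ≠ 0) : ZMod.stdAddChar a ≠ (1:ℂ) := by
  rw [← (ZMod.stdAddChar (N := l)).map_zero_eq_one]
  exact fun h' => h (ZMod.injective_stdAddChar h')

theorem tau_tsum {l : ℕ} [Fact l.Prime] (hl : l ≠ 2) {t : ℝ} (h0 : 0 < t) (h1 : t < 1) :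
    gaussSum (legC l) ZMod.stdAddChar * ∑' n : ℕ, (legC l (n : ZMod l) / n) * (t : ℂ) ^ n =
      - ∑ a : ZMod l, legC l a * log (1 - ZMod.stdAddChar a * t) := by
  have hs : ∀ a : ZMod l, HasSum (fun n : ℕ => legC l a * ((ZMod.stdAddChar a * t) ^ n / n))
      (legC l a * (-log (1 - ZMod.stdAddChar a * t))) := by
    intro a
    apply HasSum.mul_left
    apply hasSum_taylorSeries_neg_log
    rw [norm_mul, std_norm, one_mul, Complex.norm_real, Real.norm_of_nonneg h0.le]
    exact h1
  have hs2 := hasSum_sum (s := Finset.univ) (fun a _ => hs a)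
  rw [← tsum_mul_left]
  simp only [mul_neg, Finset.sum_neg_distrib] at hs2
  rw [← hs2.tsum_eq]
  congr 1
  funext n
  have := legC_tau_shift l hl (n : ZMod l)
  have e1 : gaussSum (legC l) ZMod.stdAddChar * (legC l (n : ZMod l) / n * (t : ℂ) ^ n) =
      (legC l (n : ZMod l) * gaussSum (legC l) ZMod.stdAddChar) * ((t : ℂ) ^ n / n) := by ring
  rw [e1, ← this, Finset.sum_mul]
  apply Finset.sum_congr rfl
  intro a _
  have e2 : ZMod.stdAddChar (a * (n : ZMod l)) = (ZMod.stdAddChar a) ^ n := by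
    rw [← AddChar.map_nsmul_eq_pow, nsmul_eq_mul, mul_comm]
  rw [e2, mul_pow]
  ring

theorem tau_V {l : ℕ} [Fact l.Prime] (hl : l ≠ 2) {V : ℂ}
    (hV : Tendsto (fun N => ∑ k ∈ Finset.range N, legC l (k : ZMod l) / k) atTop (𝓝 V)) :
    gaussSum (legC l) ZMod.stdAddChar * V =
      - ∑ a : ZMod l, legC l a * log (1 - ZMod.stdAddChar a) := by
  have h1 := Complex.tendsto_tsum_powerSeries_nhdsWithin_lt hV
  rw [tendsto_map'_iff] at h1
  have h2 := h1.const_mul (gaussSum (legC l) ZMod.stdAddChar)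
  have h3 : Tendsto (fun t : ℝ => - ∑ a : ZMod l, legC l a * log (1 - ZMod.stdAddChar a * t)) (𝓝[<] 1)
      (𝓝 (- ∑ a : ZMod l, legC l a * log (1 - ZMod.stdAddChar a))) := by
    apply Tendsto.neg
    apply tendsto_finset_sum
    intro a _
    by_cases ha : a = 0
    · subst ha
      simp [MulChar.map_zero]
    · apply Tendsto.const_mul
      have : Tendsto (fun t : ℝ => 1 - ZMod.stdAddChar a * (t : ℂ)) (𝓝[<] 1) (𝓝 (1 - ZMod.stdAddChar a)) := by
        have hc : Continuous (fun t : ℝ => 1 - ZMod.stdAddChar a * (t : ℂ)) := by fun_prop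
        have := hc.tendsto 1
        rw [Complex.ofReal_one, mul_one] at this
        exact this.mono_left nhdsWithin_le_nhds
      exact this.clog (slit_one_sub (std_norm a) (std_ne_one ha))
  refine tendsto_nhds_unique (h2.congr' ?_) h3
  filter_upwards [self_mem_nhdsWithin, nhdsWithin_le_nhds (lt_mem_nhds (show (0:ℝ) < 1 by norm_num))] with t ht1 ht0
  exact tau_tsum hl ht0 ht1

theorem tau_V2 {l : ℕ} [Fact l.Prime] (hl4 : l % 4 = 3) {V : ℂ}
    (hV : Tendsto (fun N => ∑ k ∈ Finset.range N, legC l (k : ZMod l) / k) atTop (𝓝 V)) :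
    gaussSum (legC l) ZMod.stdAddChar * V =
      - I * ∑ a : ZMod l, legC l a * arg (1 - ZMod.stdAddChar a) := by
  have h1 := tau_V (l := l) (by omega) hV
  have h2 : ∑ a : ZMod l, legC l a * log (1 - ZMod.stdAddChar a) =
      - ∑ a : ZMod l, legC l a * (starRingEnd ℂ) (log (1 - ZMod.stdAddChar a)) := by
    rw [← Equiv.sum_comp (Equiv.neg (ZMod l)), ← Finset.sum_neg_distrib]
    apply Finset.sum_congr rfl
    intro a _
    by_cases ha : a = 0
    · subst ha; simp [MulChar.map_zero]
    have e1 : legC l (-a) = - legC l a := by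
      rw [← neg_one_mul, map_mul, legC_neg_one l hl4, neg_one_mul]
    have e2 : ZMod.stdAddChar (-a) = (starRingEnd ℂ) (ZMod.stdAddChar a) := by
      rw [AddChar.map_neg_eq_inv, Complex.inv_eq_conj (std_norm a)]
    rw [Equiv.neg_apply, e1, e2, ← Complex.log_conj _ (slitPlane_arg_ne_pi (slit_one_sub (std_norm a) (std_ne_one ha)))]
    simp
  have h3 : ∀ z : ℂ, log z = (starRingEnd ℂ) (log z) + 2 * I * arg z := by
    intro z
    rw [← Complex.log_im]
    apply Complex.ext <;> simp
    ring
  have h4 : ∑ a : ZMod l, legC l a * log (1 - ZMod.stdAddChar a) =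
    ∑ a : ZMod l, legC l a * (starRingEnd ℂ) (log (1 - ZMod.stdAddChar a)) + 2 * I * ∑ a : ZMod l, legC l a * arg (1 - ZMod.stdAddChar a) := by
    rw [Finset.mul_sum, ← Finset.sum_add_distrib]
    apply Finset.sum_congr rfl
    intro a _
    conv_lhs => rw [h3]
    ring
  linear_combination h1 - h2 / 2 - h4 / 2

theorem arg_std {l : ℕ} [Fact l.Prime] {a : ℕ} (h0 : 0 < a) (h1 : a < l) :
    arg (1 - ZMod.stdAddChar (a : ZMod l)) = Real.pi * a / l - Real.pi / 2 := by
  have hl : (0:ℝ) < l := by exact_mod_cast h0.trans h1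
  have := ZMod.stdAddChar_coe (N := l) a
  rw [Int.cast_natCast] at this
  have h2 : (2 * Real.pi * I * ((a : ℤ) : ℂ) / l) = ((2 * Real.pi * a / l : ℝ) : ℂ) * I := by push_cast; ring
  rw [this, h2, arg_one_sub]
  · ring
  · have : (0:ℝ) < a := by exact_mod_cast h0
    have := Real.pi_pos
    positivity
  · rw [div_lt_iff₀ hl]
    have : (a:ℝ) < l := by exact_mod_cast h1
    have := Real.pi_pos
    nlinarith

theorem tau_V3 {l : ℕ} [Fact l.Prime] (hl4 : l % 4 = 3) {V : ℂ}
    (hV : Tendsto (fun N => ∑ k ∈ Finset.range N, legC l (k : ZMod l) / k) atTop (𝓝 V)) :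
    gaussSum (legC l) ZMod.stdAddChar * V =
      - I * (Real.pi / l) * ((∑ a ∈ Finset.range l, legendreSym l a * a : ℤ) : ℂ) := by
  rw [tau_V2 hl4 hV, mul_assoc]
  congr 1
  have hs := MulChar.sum_eq_zero_of_ne_one (legC_ne_one l (by omega))
  rw [sum_zmod_range] at hs ⊢
  have : ∀ a ∈ Finset.range l, legC l (a : ZMod l) * ((arg (1 - ZMod.stdAddChar (a : ZMod l)) : ℝ) : ℂ) =
     Real.pi / l * (legendreSym l a * a : ℤ) - Real.pi / 2 * legC l (a : ZMod l) := by
    intro a ha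
    rw [Finset.mem_range] at ha
    rcases Nat.eq_zero_or_pos a with rfl | h0
    · simp [MulChar.map_zero]
    · rw [arg_std h0 ha, legC_apply]
      push_cast; ring
  rw [Finset.sum_congr rfl this, Finset.sum_sub_distrib, ← Finset.mul_sum, ← Finset.mul_sum, hs]
  push_cast; ring

theorem class_number_formula {K : Type} [Field K] [NumberField K] {l : ℕ} [Fact l.Prime]
    (hfin : Module.finrank ℚ K = 2) (hl4 : l % 4 = 3) (hl3 : 3 < l) (t : K) (ht : t ^ 2 = -(l : K)) :
    (classNumber K : ℤ) * l = |∑ a ∈ Finset.range l, legendreSym l a * a| := by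
  have h1 := tau_V3 hl4 (legC_V hfin hl4 hl3 t ht)
  have hg := gaussSum_sq (legC_ne_one l (by omega)) (legC_quad l) (ZMod.isPrimitive_stdAddChar l)
  have hl0 : (0:ℝ) < l := by exact_mod_cast (Fact.out : l.Prime).pos
  have hg2 : ‖gaussSum (legC l) ZMod.stdAddChar‖ = Real.sqrt l := by
    have := congrArg norm hg
    rw [legC_neg_one l hl4, norm_pow, norm_mul, norm_neg, norm_one, one_mul, ZMod.card] at this
    rw [← Real.sqrt_sq (norm_nonneg _), this]
    simp
  have h2 := congrArg norm h1
  rw [norm_mul, hg2, Complex.norm_real, norm_mul, norm_mul, norm_neg, norm_I, one_mul] at h2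
  have hsq : 0 < Real.sqrt l := Real.sqrt_pos.mpr hl0
  have hpi := Real.pi_pos
  rw [Real.norm_of_nonneg (by positivity)] at h2
  have h3 : ‖(Real.pi / l : ℂ)‖ = Real.pi / l := by
    rw [norm_div, Complex.norm_real, Complex.norm_natCast, Real.norm_of_nonneg hpi.le]
  rw [h3, Complex.norm_intCast, mul_div_cancel₀ _ hsq.ne'] at h2
  have h4 : (classNumber K : ℝ) * l = |((∑ a ∈ Finset.range l, legendreSym l a * a : ℤ) : ℝ)| := by
    field_simp at h2
    linarith
  exact_mod_cast h4

theorem finrank_sqrtNeg {l : ℕ} (hl : l.Prime) : Module.finrank ℚ ℚ⟮sqrtNeg l⟯ = 2 := by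
  rw [IntermediateField.adjoin.finrank (isIntegral_sqrtNeg l)]
  have hm : (X ^ 2 + C (l : ℚ) : ℚ[X]).Monic := monic_X_pow_add_C _ (by norm_num)
  have hd : (X ^ 2 + C (l : ℚ) : ℚ[X]).natDegree = 2 := natDegree_X_pow_add_C
  have : X ^ 2 + C (l : ℚ) = minpoly ℚ (sqrtNeg l) := by
    apply minpoly.eq_of_irreducible_of_monic _ _ hm
    · rw [hm.irreducible_iff_roots_eq_zero_of_degree_le_three (by omega) (by omega)]
      rw [Multiset.eq_zero_iff_forall_notMem]
      intro x hx
      have := (mem_roots'.mp hx).2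
      simp at this
      have h0 : (0:ℚ) < l := by exact_mod_cast hl.pos
      nlinarith [sq_nonneg x]
    · simp [sqrtNeg_sq]
  rw [← this, hd]

theorem classNum_eq {l : ℕ} [Fact l.Prime] (hl4 : l % 4 = 3) (hl3 : 3 < l) :
    (classNumSqrtNeg l : ℤ) * l = |∑ a ∈ Finset.range l, legendreSym l a * a| := by
  unfold classNumSqrtNeg
  haveI : FiniteDimensional ℚ ℚ⟮sqrtNeg l⟯ :=
    IntermediateField.adjoin.finiteDimensional (isIntegral_sqrtNeg l)
  haveI : CharZero ℚ⟮sqrtNeg l⟯ :=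
    charZero_of_injective_algebraMap (algebraMap ℚ ℚ⟮sqrtNeg l⟯).injective
  haveI : NumberField ℚ⟮sqrtNeg l⟯ := ⟨⟩
  refine class_number_formula (finrank_sqrtNeg Fact.out) hl4 hl3 (AdjoinSimple.gen ℚ (sqrtNeg l)) ?_
  apply Subtype.ext
  push_cast
  rw [AdjoinSimple.coe_gen, sqrtNeg_sq]
end partF7

section partB
variable {F : Type} [Field F] [Fintype F]

open Classical in
/-- complex quadratic character. -/
noncomputable def quadC (F : Type) [Field F] [Fintype F] : MulChar F ℂ :=
  (quadraticChar F).ringHomComp (Int.castRingHom ℂ)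

open Classical in
theorem quadC_apply (x : F) : quadC F x = ((quadraticChar F x : ℤ) : ℂ) := rfl

theorem eq_quadC (hF : ringChar F ≠ 2) (χ : MulChar F ℂ) (h : orderOf χ = 2) : χ = quadC F := by
  classical
  have hsq : χ ^ 2 = 1 := by rw [← h]; exact pow_orderOf_eq_one χ
  have h1 : χ ≠ 1 := by rintro rfl; simp at h
  obtain ⟨c, hc⟩ := MulChar.ne_one_iff.mp h1
  have hpm : ∀ a : F, a ≠ 0 → χ a = 1 ∨ χ a = -1 := by
    intro a ha
    rw [← sq_eq_one_iff, ← MulChar.pow_apply' χ two_ne_zero, hsq, MulChar.one_apply ha.isUnit]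
  have hs : ∀ a : F, a ≠ 0 → IsSquare a → χ a = 1 := by
    rintro a ha ⟨b, rfl⟩
    have hb : b ≠ 0 := by rintro rfl; simp at ha
    rw [map_mul]
    rcases hpm b hb with h | h <;> simp [h]
  have hcn : quadraticChar F (c : F) = -1 := by
    rw [quadraticChar_neg_one_iff_not_isSquare]
    intro h; exact hc (hs _ c.ne_zero h)
  have hc1 : χ c = -1 := (hpm c c.ne_zero).resolve_left hc
  ext a
  rw [quadC_apply]
  rcases quadraticChar_dichotomy a.ne_zero with h | h
  · rw [hs a a.ne_zero ((quadraticChar_one_iff_isSquare a.ne_zero).mp h), h]; simp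
  · have : χ ((a : F) * c) = 1 := by
      apply hs _ (mul_ne_zero a.ne_zero c.ne_zero)
      rw [← quadraticChar_one_iff_isSquare (mul_ne_zero a.ne_zero c.ne_zero), map_mul, h, hcn]; rfl
    rw [map_mul, hc1] at this
    rw [h]; push_cast
    linear_combination -this

theorem quadC_ne_one (hF : ringChar F ≠ 2) : quadC F ≠ 1 := by
  classical
  exact (MulChar.ringHomComp_ne_one_iff (RingHom.injective_int _)).mpr (quadraticChar_ne_one hF)

theorem quadC_quad : (quadC F).IsQuadratic := by
  classical
  exact (quadraticChar_isQuadratic F).comp _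

/-- sum over squares -/
theorem sum_sq_eq (hF : ringChar F ≠ 2) (g : F → ℂ) :
    ∑ y : F, g (y ^ 2) = ∑ z : F, (quadC F z + 1) * g z := by
  classical
  rw [← Finset.sum_fiberwise_of_maps_to (s := Finset.univ) (t := Finset.univ) (g := fun y : F => y ^ 2)
    (fun _ _ => Finset.mem_univ _)]
  apply Finset.sum_congr rfl
  intro z _
  rw [Finset.sum_congr rfl (g := fun _ => g z) (fun y hy => by rw [(Finset.mem_filter.mp hy).2])]
  rw [Finset.sum_const, nsmul_eq_mul]
  congr 1
  have := quadraticChar_card_sqrts hF z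
  rw [quadC_apply]
  have e : (Finset.univ.filter fun y : F => y ^ 2 = z) = {x : F | x ^ 2 = z}.toFinset := by
    ext; simp
  rw [e]
  exact_mod_cast this

theorem jacobi_dup (hF : ringChar F ≠ 2) (ψ : MulChar F ℂ) (h1 : ψ ≠ 1) (h4 : ψ 4 = 1) :
    jacobiSum ψ ψ = jacobiSum (quadC F) ψ := by
  have h2 : (2 : F) ≠ 0 := Ring.two_ne_zero hF
  have e1 : jacobiSum ψ ψ = ∑ y : F, ψ (1 - y ^ 2) := by
    unfold jacobiSum
    refine Fintype.sum_bijective (fun x : F => 2 * x - 1) ?_ _ _ ?_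
    · refine ⟨fun a b h => ?_, fun y => ⟨(y + 1) / 2, by field_simp; ring⟩⟩
      have : 2 * a = 2 * b := by linear_combination h
      exact mul_left_cancel₀ h2 this
    · intro x
      rw [← map_mul, ← one_mul (ψ _), ← h4, ← map_mul]
      congr 1; ring
  rw [e1, sum_sq_eq hF (fun z => ψ (1 - z))]
  have e2 : ∑ z : F, ψ (1 - z) = 0 := by
    rw [← MulChar.sum_eq_zero_of_ne_one h1]
    exact Equiv.sum_comp (Equiv.subLeft (1 : F)) ψ
  simp only [add_mul, one_mul, Finset.sum_add_distrib, e2, add_zero]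
  rfl

theorem gauss_dup (hF : ringChar F ≠ 2) (ψ : MulChar F ℂ) (e : AddChar F ℂ) (he : e.IsPrimitive)
    (h1 : ψ ^ 2 ≠ 1) (h4 : ψ 4 = 1) (h3 : ψ * quadC F ≠ 1) :
    gaussSum (ψ * quadC F) e * gaussSum ψ e = gaussSum (quadC F) e * gaussSum (ψ ^ 2) e := by
  have h0 : ψ ≠ 1 := by rintro rfl; simp at h1
  have hc : (Fintype.card F : ℂ) ≠ 0 := by simp
  have g0 := gaussSum_ne_zero_of_nontrivial hc h0 he
  have j1 := jacobiSum_mul_nontrivial (χ := ψ) (φ := ψ) (by rwa [← sq]) e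
  have j2 := jacobiSum_mul_nontrivial (χ := quadC F) (φ := ψ) (by rwa [mul_comm]) e
  rw [jacobi_dup hF ψ h0 h4, ← sq] at j1
  rw [mul_comm (quadC F) ψ] at j2
  apply mul_left_cancel₀ g0
  linear_combination gaussSum (ψ ^ 2) e * j2 - gaussSum (ψ * quadC F) e * j1

theorem gauss_conj (ψ : MulChar F ℂ) (e : AddChar F ℂ) (h : ψ (-1) = 1) :
    (starRingEnd ℂ) (gaussSum ψ e) = gaussSum ψ⁻¹ e := by
  have h1 := star_gaussSum_eq ψ e
  rw [starRingEnd_apply, h1]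
  have h2 := gaussSum_mulShift_eq ψ⁻¹ e (-1)
  rw [inv_inv] at h2
  have h3 : e.mulShift ((-1 : Fˣ) : F) = e⁻¹ := by ext; simp [AddChar.mulShift_apply, AddChar.inv_apply]
  rw [h3] at h2
  rw [h2]; simp [h]

theorem gauss_norm (ψ : MulChar F ℂ) (e : AddChar F ℂ) (he : e.IsPrimitive) (h1 : ψ ≠ 1) (h : ψ (-1) = 1) :
    gaussSum ψ e * (starRingEnd ℂ) (gaussSum ψ e) = Fintype.card F := by
  rw [← gaussSum_mul_gaussSum_eq_card h1 he]
  congr 1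
  rw [starRingEnd_apply, star_gaussSum_eq]

end partB

section partC
variable {p l r f : ℕ} [hl : Fact l.Prime]

theorem cast_down (hr : 1 ≤ r) {x y : ℤ} (h : (x : ZMod (l ^ r)) = y) : (x : ZMod l) = y := by
  rw [ZMod.intCast_eq_intCast_iff] at h ⊢
  have : ((l : ℕ) : ℤ) ∣ ((l ^ r : ℕ) : ℤ) := by exact_mod_cast dvd_pow_self l (by omega)
  exact h.of_dvd this

theorem f_odd (hl4 : l % 4 = 3) (hr : 1 ≤ r) (hf2 : 2 * f = (l ^ r).totient) : Odd f := by
  rw [Nat.totient_prime_pow hl.out (by omega)] at hf2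
  obtain ⟨k, hk⟩ : ∃ k, l = 4 * k + 3 := ⟨l / 4, by omega⟩
  have h1 : f = l ^ (r - 1) * (2 * k + 1) := by
    have : l - 1 = 2 * (2 * k + 1) := by omega
    rw [this] at hf2
    linarith
  rw [h1]
  apply Odd.mul
  · apply Odd.pow; rw [Nat.odd_iff]; omega
  · exact ⟨k, rfl⟩

theorem f_ge (hr : 1 ≤ r) (hf2 : 2 * f = (l ^ r).totient) : l - 1 ≤ 2 * f := by
  rw [Nat.totient_prime_pow hl.out (by omega)] at hf2
  rw [hf2]
  exact Nat.le_mul_of_pos_left _ (pow_pos hl.out.pos _)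

theorem leg_p (hl4 : l % 4 = 3) (hr : 1 ≤ r)
    (hord : orderOf (p : ZMod (l ^ r)) = f) (hf2 : 2 * f = (l ^ r).totient) : legendreSym l p = 1 := by
  have hfo := f_odd hl4 hr hf2
  have h1 : ((p : ZMod (l ^ r))) ^ f = 1 := by rw [← hord]; exact pow_orderOf_eq_one _
  have h2 : (((p : ℤ) ^ f : ℤ) : ZMod l) = ((1 : ℤ) : ZMod l) := by
    apply cast_down hr; push_cast; exact h1
  have h3 : (legendreSym l p) ^ f = 1 := by
    have := congrArg (quadraticChar (ZMod l)) h2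
    push_cast at this
    rw [map_pow, map_one] at this
    simpa [legendreSym] using this
  obtain ⟨k, hk⟩ := hfo
  have h0 : ((p : ℤ) : ZMod l) ≠ 0 := by
    intro h
    rw [legendreSym, h, quadraticChar_zero, hk, zero_pow (by omega)] at h3
    exact zero_ne_one h3
  rcases legendreSym.eq_one_or_neg_one l h0 with h | h
  · exact h
  · rw [h, hk, pow_succ, pow_mul] at h3
    norm_num at h3

theorem leg_pow (hl4 : l % 4 = 3) (hr : 1 ≤ r)
    (hord : orderOf (p : ZMod (l ^ r)) = f) (hf2 : 2 * f = (l ^ r).totient) {c : ℤ} {k : ℕ}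
    (h : (c : ZMod (l ^ r)) = (p : ZMod (l ^ r)) ^ k) : legendreSym l c = 1 := by
  have h1 : (c : ZMod l) = ((p ^ k : ℤ) : ZMod l) := by
    apply cast_down hr; push_cast; exact h
  rw [legendreSym, h1]
  push_cast
  have := leg_p hl4 hr hord hf2
  rw [legendreSym] at this
  push_cast at this
  rw [map_pow, this, one_pow]

theorem leg_neg (hl4 : l % 4 = 3) (c : ℤ) : legendreSym l (-c) = - legendreSym l c := by
  have := legC_neg_one l hl4
  rw [legC_zmod] at this
  have h1 : quadraticChar (ZMod l) (-1) = -1 := by exact_mod_cast this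
  rw [legendreSym, legendreSym, Int.cast_neg, ← neg_one_mul, map_mul, h1, neg_one_mul]

theorem mem_core (hl4 : l % 4 = 3) (hr : 1 ≤ r) (hpl : p.Coprime l)
    (hord : orderOf (p : ZMod (l ^ r)) = f) (hf2 : 2 * f = (l ^ r).totient) {c : ℕ} (hc : c.Coprime l) :
    (∃ k < f, (c : ZMod (l ^ r)) = (p : ZMod (l ^ r)) ^ k) ∨
    (∃ k < f, -(c : ZMod (l ^ r)) = (p : ZMod (l ^ r)) ^ k) := by
  classical
  have hn0 : NeZero (l ^ r) := ⟨(pow_pos hl.out.pos r).ne'⟩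
  have hfo := f_odd hl4 hr hf2
  set u : (ZMod (l ^ r))ˣ := ZMod.unitOfCoprime p (hpl.pow_right r) with hu
  set v : (ZMod (l ^ r))ˣ := ZMod.unitOfCoprime c (hc.pow_right r) with hv
  have hou : orderOf u = f := by
    rw [← hord, ← orderOf_units]; rfl
  have hf0 : 0 < f := hfo.pos
  have hidx : (Subgroup.zpowers u).index = 2 := by
    have h1 := (Subgroup.zpowers u).card_mul_index
    rw [Nat.card_zpowers, hou, Nat.card_eq_fintype_card, ZMod.card_units_eq_totient, ← hf2] at h1
    exact Nat.eq_of_mul_eq_mul_left hf0 (by linarith)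
  have hm1 : (-1 : (ZMod (l ^ r))ˣ) ∉ Subgroup.zpowers u := by
    intro h
    rw [mem_zpowers_iff_mem_range_orderOf, Finset.mem_image] at h
    obtain ⟨k, _, hk⟩ := h
    have h1 := congrArg Units.val hk
    simp only [Units.val_pow_eq_pow_val, Units.val_neg, Units.val_one, hu, ZMod.coe_unitOfCoprime] at h1
    have h2 := leg_pow hl4 hr hord hf2 (c := -1) (k := k) (by push_cast; exact h1.symm)
    rw [leg_neg hl4, legendreSym.at_one] at h2
    norm_num at h2
  have key : v ∈ Subgroup.zpowers u ∨ -v ∈ Subgroup.zpowers u := by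
    by_cases h : v ∈ Subgroup.zpowers u
    · exact Or.inl h
    · right
      rw [← neg_one_mul, Subgroup.mul_mem_iff_of_index_two hidx]
      exact ⟨fun h' => absurd h' hm1, fun h' => absurd h' h⟩
  rcases key with h | h
  · left
    rw [mem_zpowers_iff_mem_range_orderOf, Finset.mem_image] at h
    obtain ⟨k, hk1, hk⟩ := h
    rw [hou, Finset.mem_range] at hk1
    refine ⟨k, hk1, ?_⟩
    have h1 := congrArg Units.val hk
    simpa [hu, hv] using h1.symm
  · right
    rw [mem_zpowers_iff_mem_range_orderOf, Finset.mem_image] at h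
    obtain ⟨k, hk1, hk⟩ := h
    rw [hou, Finset.mem_range] at hk1
    refine ⟨k, hk1, ?_⟩
    have h1 := congrArg Units.val hk
    simpa [hu, hv] using h1.symm

theorem mem_one (hl4 : l % 4 = 3) (hr : 1 ≤ r) (hpl : p.Coprime l)
    (hord : orderOf (p : ZMod (l ^ r)) = f) (hf2 : 2 * f = (l ^ r).totient) {c : ℕ} (hc : c.Coprime l)
    (h1 : legendreSym l c = 1) : ∃ k < f, (c : ZMod (l ^ r)) = (p : ZMod (l ^ r)) ^ k := by
  rcases mem_core hl4 hr hpl hord hf2 hc with h | ⟨k, hk, h⟩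
  · exact h
  · have := leg_pow hl4 hr hord hf2 (c := -c) (k := k) (by push_cast; exact h)
    rw [leg_neg hl4, h1] at this
    norm_num at this

theorem mem_neg (hl4 : l % 4 = 3) (hr : 1 ≤ r) (hpl : p.Coprime l)
    (hord : orderOf (p : ZMod (l ^ r)) = f) (hf2 : 2 * f = (l ^ r).totient) {c : ℕ} (hc : c.Coprime l)
    (h1 : legendreSym l c = -1) : ∃ k < f, -(c : ZMod (l ^ r)) = (p : ZMod (l ^ r)) ^ k := by
  rcases mem_core hl4 hr hpl hord hf2 hc with ⟨k, hk, h⟩ | h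
  · have := leg_pow hl4 hr hord hf2 (c := c) (k := k) (by push_cast; exact h)
    rw [h1] at this
    norm_num at this
  · exact h

theorem leg_pm {c : ℕ} (hc : c.Coprime l) : legendreSym l c = 1 ∨ legendreSym l c = -1 := by
  apply legendreSym.eq_one_or_neg_one
  push_cast
  rw [Ne, ZMod.natCast_eq_zero_iff]
  intro h
  have := Nat.Coprime.eq_one_of_dvd hc.symm h
  exact hl.out.one_lt.ne' this

section
variable [hp : Fact p.Prime] {F : Type} [Field F] [Algebra (ZMod p) F] [Fintype F]

theorem gauss_pow_pk (ψ : MulChar F ℂ) (k : ℕ) : gaussSum (ψ ^ (p ^ k)) (psiF p F) = gaussSum ψ (psiF p F) := by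
  induction k with
  | zero => simp
  | succ k ih => rw [pow_succ, pow_mul, gaussSum_pow_p, ih]

theorem gauss_leg_one (hl4 : l % 4 = 3) (hr : 1 ≤ r) (hpl : p.Coprime l)
    (hord : orderOf (p : ZMod (l ^ r)) = f) (hf2 : 2 * f = (l ^ r).totient) {c : ℕ} (hc : c.Coprime l)
    (h1 : legendreSym l c = 1) (ψ : MulChar F ℂ) (hψ : ψ ^ (l ^ r) = 1) :
    gaussSum (ψ ^ c) (psiF p F) = gaussSum ψ (psiF p F) := by
  obtain ⟨k, _, hk⟩ := mem_one hl4 hr hpl hord hf2 hc h1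
  rw [← gauss_pow_pk ψ k]
  congr 1
  have hk' : ((c : ℕ) : ZMod (l ^ r)) = ((p ^ k : ℕ) : ZMod (l ^ r)) := by push_cast; exact hk
  rw [ZMod.natCast_eq_natCast_iff] at hk'
  exact pow_eq_pow_of_modEq hk' hψ

theorem gauss_leg_neg (hl4 : l % 4 = 3) (hr : 1 ≤ r) (hpl : p.Coprime l)
    (hord : orderOf (p : ZMod (l ^ r)) = f) (hf2 : 2 * f = (l ^ r).totient) {c : ℕ} (hc : c.Coprime l)
    (h1 : legendreSym l c = -1) (ψ : MulChar F ℂ) (hψ : ψ ^ (l ^ r) = 1) :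
    gaussSum (ψ ^ c) (psiF p F) = gaussSum ψ⁻¹ (psiF p F) := by
  obtain ⟨k, _, hk⟩ := mem_neg hl4 hr hpl hord hf2 hc h1
  rw [← gauss_pow_pk ψ⁻¹ k]
  congr 1
  have hk' : ((c + p ^ k : ℕ) : ZMod (l ^ r)) = 0 := by push_cast; rw [← hk]; ring
  rw [ZMod.natCast_eq_zero_iff] at hk'
  obtain ⟨m, hm⟩ := hk'
  rw [inv_pow, eq_inv_iff_mul_eq_one, ← pow_add, hm, pow_mul, hψ, one_pow]
end
end partC

section partG
variable {p l r f : ℕ} [hl : Fact l.Prime]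

theorem leg_zero_iff (c : ℕ) : legendreSym l c = 0 ↔ ¬ c.Coprime l := by
  rw [legendreSym.eq_zero_iff]
  push_cast
  rw [ZMod.natCast_eq_zero_iff, Nat.coprime_comm, Nat.Prime.coprime_iff_not_dvd hl.out, not_not]

theorem coset_sum (hl4 : l % 4 = 3) (hr : 1 ≤ r) (hpl : p.Coprime l)
    (hord : orderOf (p : ZMod (l ^ r)) = f) (hf2 : 2 * f = (l ^ r).totient) {j : ℕ} (hj : j.Coprime l) :
    ∑ m ∈ Finset.range f, (p ^ m * j % (l ^ r)) =
      ∑ a ∈ (Finset.range (l ^ r)).filter (fun a : ℕ => legendreSym l a = legendreSym l j), a := by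
  have hn : 0 < l ^ r := pow_pos hl.out.pos r
  have hcast : ∀ a : ℕ, ((a % (l ^ r) : ℕ) : ZMod (l ^ r)) = a := fun a => by simp
  obtain ⟨j', -, hj'⟩ := Nat.exists_mul_mod_eq_one_of_coprime (hj.pow_right r) (by
    apply Nat.one_lt_pow (by omega) hl.out.one_lt)
  have hjj : (j : ZMod (l ^ r)) * j' = 1 := by
    have := congrArg (fun x : ℕ => (x : ZMod (l ^ r))) hj'
    simpa using this
  have hjl : legendreSym l j * legendreSym l j' = 1 := by
    rw [← legendreSym.mul]
    have : (((j : ℤ) * j' : ℤ) : ZMod l) = ((1 : ℤ) : ZMod l) := by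
      apply cast_down hr; push_cast; exact hjj
    rw [legendreSym, this]; simp
  have hinj : Set.InjOn (fun m => p ^ m * j % (l ^ r)) (Finset.range f : Set ℕ) := by
    intro a ha b hb hab
    simp only [Finset.coe_range, Set.mem_Iio] at ha hb
    have h1 := congrArg (fun x : ℕ => (x : ZMod (l ^ r)) * j') hab
    simp only [hcast] at h1
    push_cast at h1
    rw [mul_assoc, mul_assoc, hjj, mul_one, mul_one] at h1
    exact pow_injOn_Iio_orderOf (by simpa [hord] using ha) (by simpa [hord] using hb) h1
  rw [← Finset.sum_image (f := fun x => x) hinj]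
  congr 1
  ext a
  simp only [Finset.mem_image, Finset.mem_range, Finset.mem_filter]
  have hlp := leg_p hl4 hr hord hf2
  constructor
  · rintro ⟨m, hm, rfl⟩
    refine ⟨Nat.mod_lt _ hn, ?_⟩
    have : (((p ^ m * j % (l ^ r) : ℕ) : ℤ) : ZMod l) = ((p ^ m * j : ℤ) : ZMod l) := by
      apply cast_down hr; rw [Int.cast_natCast, hcast]; push_cast; rfl
    rw [legendreSym, this]
    rw [legendreSym] at hlp ⊢
    push_cast at hlp ⊢
    rw [map_mul, map_pow, hlp, one_pow, one_mul]
  · rintro ⟨ha, hleg⟩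
    have h1 : legendreSym l ((a * j' : ℕ) : ℤ) = 1 := by
      push_cast
      rw [legendreSym.mul, hleg, hjl]
    have hc : (a * j').Coprime l := by
      by_contra h
      rw [← leg_zero_iff, h1] at h
      exact one_ne_zero h
    obtain ⟨k, hk, h⟩ := mem_one hl4 hr hpl hord hf2 hc h1
    refine ⟨k, hk, ?_⟩
    have h2 : ((p ^ k * j : ℕ) : ZMod (l ^ r)) = (a : ℕ) := by
      push_cast; push_cast at h; rw [← h]; linear_combination (a : ZMod (l ^ r)) * hjj
    rw [ZMod.natCast_eq_natCast_iff] at h2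
    rw [h2, Nat.mod_eq_of_lt ha]

theorem leg_sum_lift (hl4 : l % 4 = 3) (k : ℕ) :
    ∑ a ∈ Finset.range (l * k), legendreSym l a * a = k * ∑ a ∈ Finset.range l, legendreSym l a * a := by
  have hs : ∑ a ∈ Finset.range l, legendreSym l a = 0 := by
    have h := MulChar.sum_eq_zero_of_ne_one (legC_ne_one l (by omega))
    rw [sum_zmod_range] at h
    simp only [legC_apply] at h
    exact_mod_cast h
  induction k with
  | zero => simp
  | succ k ih =>
    rw [mul_add, mul_one, Finset.sum_range_add, ih]
    have : ∀ x ∈ Finset.range l, legendreSym l ((l * k + x : ℕ) : ℤ) * ((l * k + x : ℕ) : ℤ) =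
        legendreSym l x * x + (l * k) * legendreSym l x := by
      intro x _
      have : legendreSym l ((l * k + x : ℕ) : ℤ) = legendreSym l x := by
        simp [legendreSym]
      rw [this]; push_cast; ring
    rw [Finset.sum_congr rfl this, Finset.sum_add_distrib, ← Finset.mul_sum, hs]
    push_cast; ring

theorem h_props (hl4 : l % 4 = 3) (hl3 : 3 < l) :
    Odd (classNumSqrtNeg l) ∧ 2 * classNumSqrtNeg l ≤ l - 1 := by
  have h := classNum_eq hl4 hl3
  set h0 := classNumSqrtNeg l
  obtain ⟨k, hk⟩ : ∃ k, l = 4 * k + 3 := ⟨l / 4, by omega⟩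
  have hsum : ∑ a ∈ Finset.range l, (a : ℤ) = l * (2 * k + 1) := by
    have := Finset.sum_range_id_mul_two l
    have e : l - 1 = 2 * (2 * k + 1) := by omega
    rw [e] at this
    have h2 : ∑ a ∈ Finset.range l, a = l * (2 * k + 1) := by linarith
    rw [← Nat.cast_sum, h2]; push_cast; ring
  constructor
  · have hpar : ∀ a ∈ Finset.range l, (legendreSym l a * a : ℤ) ≡ (a : ℤ) [ZMOD 2] := by
      intro a ha
      rcases Nat.eq_zero_or_pos a with rfl | h0
      · simp
      rw [Finset.mem_range] at ha
      have hc : a.Coprime l := (Nat.coprime_of_lt_prime (by omega) ha hl.out).symm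
      rcases leg_pm hc with h | h
      · rw [h, one_mul]
      · rw [h, neg_one_mul]; rw [Int.modEq_iff_dvd]; exact ⟨a, by ring⟩
    have h1 : (∑ a ∈ Finset.range l, legendreSym l a * a) ≡ l * (2 * k + 1) [ZMOD 2] := by
      rw [← hsum]
      exact Int.ModEq.sum hpar
    by_contra hodd
    rw [Nat.not_odd_iff_even] at hodd
    obtain ⟨m, hm⟩ := hodd
    have h2 : (2:ℤ) ∣ ∑ a ∈ Finset.range l, legendreSym l a * a := by
      rw [← dvd_abs, ← h, hm]; push_cast; exact ⟨m * l, by ring⟩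
    have h3 := (Int.modEq_zero_iff_dvd.mpr h2).symm.trans h1
    rw [Int.modEq_iff_dvd] at h3
    obtain ⟨q, hq⟩ := h3
    have hk' : (l:ℤ) = 4 * k + 3 := by exact_mod_cast hk
    rw [hk'] at hq
    have : (2:ℤ) * (4 * k * k + 5 * k + 1 ) + 1 = 2 * q := by linear_combination hq
    omega
  · have h1 : |∑ a ∈ Finset.range l, legendreSym l a * a| ≤ l * (2 * k + 1) := by
      rw [← hsum]
      refine (Finset.abs_sum_le_sum_abs _ _).trans (Finset.sum_le_sum fun a _ => ?_)
      rw [abs_mul]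
      have : |legendreSym l a| ≤ 1 := by
        by_cases hc : a.Coprime l
        · rcases leg_pm hc with h | h <;> simp [h]
        · rw [← leg_zero_iff] at hc; simp [hc]
      have h0 : |(a:ℤ)| = a := by simp
      rw [h0]
      nlinarith
    rw [← h, mul_comm] at h1
    have h2 := le_of_mul_le_mul_left h1 (by exact_mod_cast hl.out.pos)
    have h3 : h0 ≤ 2 * k + 1 := by exact_mod_cast h2
    omega

theorem H_bound (hl4 : l % 4 = 3) (hl3 : 3 < l) (hr : 1 ≤ r) (hpl : p.Coprime l)
    (hord : orderOf (p : ZMod (l ^ r)) = f) (hf2 : 2 * f = (l ^ r).totient) {e : ℕ}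
    (he : f = 2 * e + classNumSqrtNeg l) {j : ℕ} (hj : j.Coprime (l ^ r)) :
    ∑ m ∈ Finset.range f, (p ^ m * j % (l ^ r)) + l ^ r * e ≤ l ^ r * f := by
  have hn : 0 < l ^ r := pow_pos hl.out.pos r
  have hj1 : j.Coprime l := Nat.Coprime.coprime_dvd_right (dvd_pow_self l (by omega)) hj
  have hn1 : 1 < l ^ r := Nat.one_lt_pow (by omega) hl.out.one_lt
  obtain ⟨i, hi, hij⟩ : ∃ i : ℕ, i.Coprime l ∧ l ^ r ∣ i + j := by
    refine ⟨j * (l ^ r - 1), ?_, ?_⟩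
    · refine Nat.Coprime.mul_left hj1 ?_
      rw [Nat.coprime_comm, hl.out.coprime_iff_not_dvd]
      intro h
      have h2 := dvd_pow_self l (show r ≠ 0 by omega)
      have := (Nat.dvd_sub_iff_right hn h2).mp h
      exact hl.out.one_lt.ne' (Nat.dvd_one.mp this)
    · refine ⟨j, ?_⟩
      have : l ^ r - 1 + 1 = l ^ r := by omega
      calc j * (l ^ r - 1) + j = j * (l ^ r - 1 + 1) := by ring
        _ = _ := by rw [this]; ring
  have hleg : legendreSym l i = - legendreSym l j := by
    rw [← leg_neg hl4]
    have : ((i : ℤ) : ZMod l) = ((-j : ℤ) : ZMod l) := by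
      apply cast_down hr
      have h1 : ((i + j : ℕ) : ZMod (l ^ r)) = 0 := (ZMod.natCast_eq_zero_iff _ _).mpr hij
      push_cast at h1 ⊢
      linear_combination h1
    rw [legendreSym, this]; rfl
  have hsum : ∑ m ∈ Finset.range f, (p ^ m * j % (l ^ r)) + ∑ m ∈ Finset.range f, (p ^ m * i % (l ^ r)) = f * l ^ r := by
    rw [← Finset.sum_add_distrib]
    rw [Finset.sum_congr rfl (g := fun _ => l ^ r), Finset.sum_const, Finset.card_range, smul_eq_mul]
    intro m _
    have h1 : l ^ r ∣ p ^ m * j % (l ^ r) + p ^ m * i % (l ^ r) := by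
      rw [Nat.dvd_iff_mod_eq_zero, ← Nat.add_mod, ← mul_add, ← Nat.dvd_iff_mod_eq_zero, add_comm j]
      exact hij.mul_left _
    have h2 : 0 < p ^ m * j % (l ^ r) := by
      apply Nat.pos_of_ne_zero
      intro h
      have := Nat.dvd_of_mod_eq_zero h
      have hc : (p ^ m * j).Coprime (l ^ r) := Nat.Coprime.mul_left (hpl.pow m r) hj
      exact hn1.ne' (Nat.Coprime.eq_one_of_dvd hc.symm this)
    have h3 := Nat.mod_lt (p ^ m * j) hn
    have h4 := Nat.mod_lt (p ^ m * i) hn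
    obtain ⟨c, hc⟩ := h1
    have : c = 1 := by
      have c1 : c < 2 := by
        by_contra h
        have : l ^ r * 2 ≤ l ^ r * c := Nat.mul_le_mul_left _ (by omega)
        omega
      have c2 : c ≠ 0 := by rintro rfl; rw [mul_zero] at hc; exact h2.ne' (Nat.add_eq_zero_iff.mp hc).1
      omega
    rw [hc, this, mul_one]
  have hdiff : ((∑ m ∈ Finset.range f, (p ^ m * j % (l ^ r)) : ℕ) : ℤ) - ((∑ m ∈ Finset.range f, (p ^ m * i % (l ^ r)) : ℕ) : ℤ)
      = legendreSym l j * ∑ a ∈ Finset.range (l ^ r), legendreSym l a * a := by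
    rw [coset_sum hl4 hr hpl hord hf2 hj1, coset_sum hl4 hr hpl hord hf2 hi, Finset.sum_filter, Finset.sum_filter, Finset.mul_sum]
    push_cast
    rw [← Finset.sum_sub_distrib]
    apply Finset.sum_congr rfl
    intro a _
    rw [hleg]
    have hz : legendreSym l a = 0 ∨ legendreSym l a = 1 ∨ legendreSym l a = -1 := by
      by_cases hc : a.Coprime l
      · exact Or.inr (leg_pm hc)
      · exact Or.inl ((leg_zero_iff a).mpr hc)
    rcases leg_pm hj1 with h | h <;> rcases hz with h' | h' | h' <;> rw [h, h'] <;> norm_num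
  have hlr : l ^ r = l * l ^ (r - 1) := by rw [← pow_succ']; congr 1; omega
  have habs : |legendreSym l j * ∑ a ∈ Finset.range (l ^ r), legendreSym l a * a| = (l ^ r : ℕ) * classNumSqrtNeg l := by
    rw [hlr, leg_sum_lift hl4, abs_mul, abs_mul, ← classNum_eq hl4 hl3]
    have : |legendreSym l j| = 1 := by rcases leg_pm hj1 with h | h <;> simp [h]
    rw [this, abs_of_nonneg (by positivity)]
    push_cast; ring
  rw [← hdiff] at habs
  have h5 := le_of_abs_le habs.le
  zify at hsum ⊢
  have : (f : ℤ) = 2 * e + classNumSqrtNeg l := by exact_mod_cast he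
  push_cast at h5 ⊢
  rw [this] at hsum ⊢
  nlinarith

end partG

section partD

theorem galois_int {M : ℕ} (hM : 0 < M) {z : ℂ} (hz : IsPrimitiveRoot z M) (P : ℤ[X])
    (h : ∀ c : ℕ, c.Coprime M → aeval (z ^ c) P = aeval z P) : ∃ k : ℤ, aeval z P = k := by
  set R := P %ₘ (cyclotomic M ℤ) with hR
  have hmon := cyclotomic.monic M ℤ
  have hroot : ∀ y ∈ primitiveRoots M ℂ, aeval y R = aeval z P := by
    intro y hy
    rw [mem_primitiveRoots hM] at hy
    obtain ⟨c, _, hc, rfl⟩ := (haveI : NeZero M := ⟨hM.ne'⟩; hz.isPrimitiveRoot_iff.mp hy)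
    rw [← h c hc]
    have h1 := modByMonic_add_div P (cyclotomic M ℤ)
    have h2 : aeval (z ^ c) (cyclotomic M ℤ) = 0 := by
      rw [aeval_def, ← eval_map, map_cyclotomic]
      have : NeZero (M : ℂ) := ⟨by exact_mod_cast hM.ne'⟩
      exact (isRoot_cyclotomic_iff.mpr hy)
    conv_rhs => rw [← h1]
    rw [map_add, map_mul, h2, zero_mul, add_zero]
  set Q : ℂ[X] := R.map (Int.castRingHom ℂ) - C (aeval z P) with hQ
  have hdeg : Q.degree < (M.totient : ℕ) := by
    refine (degree_sub_le _ _).trans_lt (max_lt ?_ ?_)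
    · refine (degree_map_le).trans_lt ?_
      have := degree_modByMonic_lt P hmon
      rwa [degree_cyclotomic] at this
    · refine (degree_C_le).trans_lt ?_
      exact_mod_cast Nat.totient_pos.mpr hM
  have hQ0 : Q = 0 := by
    apply eq_zero_of_degree_lt_of_eval_finset_eq_zero (primitiveRoots M ℂ)
    · rw [hz.card_primitiveRoots]; exact hdeg
    · intro y hy
      rw [hQ, eval_sub, eval_C, eval_map, ← hroot y hy, aeval_def]
      exact sub_self _
  refine ⟨R.coeff 0, ?_⟩
  have := congrArg (fun q => coeff q 0) hQ0
  simp [hQ, coeff_sub, coeff_map] at this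
  exact (sub_eq_zero.mp this).symm

variable {p l r f : ℕ} [hl : Fact l.Prime] [hp : Fact p.Prime] {F : Type} [Field F] [Algebra (ZMod p) F] [Fintype F]

theorem gauss_poly {n : ℕ} (hn : 0 < n) (hpn : p.Coprime n) {z : ℂ} (hz : IsPrimitiveRoot z (p * n)) (hzp : z ^ n = zetaP p)
    (ψ : MulChar F ℂ) (hψ : ψ ^ n = 1) (hψp : ∀ c : ℕ, ¬ p ∣ c → ψ (c : F) = 1) :
    ∃ P : ℤ[X], ∀ c : ℕ, c.Coprime (p * n) → aeval (z ^ c) P = gaussSum (ψ ^ c) (psiF p F) := by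
  classical
  have hcF : CharP F p := charP_of_injective_algebraMap (algebraMap (ZMod p) F).injective p
  have hzn : IsPrimitiveRoot (z ^ p) n := hz.pow (Nat.mul_pos hp.out.pos hn) rfl
  have hex : ∀ x : F, x ≠ 0 → ∃ i : ℕ, ψ x = (z ^ p) ^ i := by
    intro x hx
    have h1 : (ψ x) ^ n = 1 := by
      rw [← MulChar.pow_apply' _ hn.ne', hψ, MulChar.one_apply hx.isUnit]
    haveI : NeZero n := ⟨hn.ne'⟩
    obtain ⟨i, _, hi⟩ := hzn.eq_pow_of_pow_eq_one h1
    exact ⟨i, hi.symm⟩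
  choose! a ha using hex
  refine ⟨∑ x ∈ Finset.univ.filter (fun x : F => x ≠ 0), X ^ (p * a x + n * (Algebra.trace (ZMod p) F x).val), ?_⟩
  intro c hc
  have hcp : ¬ p ∣ c := by
    rw [← hp.out.coprime_iff_not_dvd, Nat.coprime_comm]
    exact Nat.Coprime.coprime_dvd_right (dvd_mul_right p n) hc
  have hc0 : (c : F) ≠ 0 := by rwa [Ne, CharP.cast_eq_zero_iff F p]
  have hcpos : c ≠ 0 := by rintro rfl; simp at hcp
  have hsh := gaussSum_mulShift (ψ ^ c) (psiF p F) (Units.mk0 (c : F) hc0)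
  rw [Units.val_mk0, MulChar.pow_apply' _ hcpos, hψp c hcp, one_pow, one_mul] at hsh
  rw [← hsh, gaussSum, map_sum, Finset.sum_filter]
  apply Finset.sum_congr rfl
  intro x _
  split_ifs with h
  · have e1 : psiF p F ((c : F) * x) = (psiF p F x) ^ c := by
      rw [← nsmul_eq_mul, AddChar.map_nsmul_eq_pow]
    rw [AddChar.mulShift_apply, e1, MulChar.pow_apply' _ hcpos, ha x h, psiF_apply, ← hzp, map_pow, aeval_X]
    ring
  · push Not at h
    rw [h, MulChar.map_zero, zero_mul]

theorem tau_poly (hl2 : l ≠ 2) {z : ℂ} {m : ℕ} (hz : z ^ m = ZMod.stdAddChar (1 : ZMod l)) :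
    ∃ P : ℤ[X], ∀ c : ℕ, aeval (z ^ c) P = legendreSym l c * gaussSum (legC l) ZMod.stdAddChar := by
  refine ⟨∑ a ∈ Finset.range l, C (legendreSym l a) * X ^ (m * a), ?_⟩
  intro c
  rw [← legC_apply, ← legC_tau_shift l hl2, sum_zmod_range, map_sum]
  apply Finset.sum_congr rfl
  intro a _
  rw [legC_apply]
  have e : ZMod.stdAddChar ((a : ZMod l) * (c : ZMod l)) = (ZMod.stdAddChar (1 : ZMod l)) ^ (a * c) := by
    rw [← AddChar.map_nsmul_eq_pow, nsmul_eq_mul, mul_one]; push_cast; rfl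
  rw [e, ← hz]
  simp
  left; ring

theorem int_of_integral {x : ℂ} (h : IsIntegral ℤ x) {k : ℤ} {m : ℕ} (hm : m ≠ 0) (hx : x * m = k) :
    ∃ a : ℤ, x = a := by
  have hm' : (m : ℂ) ≠ 0 := by exact_mod_cast hm
  have hq : x = ((k / m : ℚ) : ℂ) := by push_cast; rw [eq_div_iff hm', hx]
  rw [hq] at h
  have h2 : IsIntegral ℤ (k / m : ℚ) := by
    rw [← isIntegral_algebraMap_iff (algebraMap ℚ ℂ).injective]
    exact h
  obtain ⟨a, ha⟩ := IsIntegrallyClosed.isIntegral_iff.mp h2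
  refine ⟨a, ?_⟩
  rw [hq, ← ha]; simp

theorem tau_cases (hl4 : l % 4 = 3) : gaussSum (legC l) ZMod.stdAddChar = sqrtNeg l ∨
    gaussSum (legC l) ZMod.stdAddChar = - sqrtNeg l := by
  have hg := gaussSum_sq (legC_ne_one l (by omega)) (legC_quad l) (ZMod.isPrimitive_stdAddChar l)
  rw [legC_neg_one l hl4, ZMod.card, neg_one_mul, ← sqrtNeg_sq] at hg
  exact sq_eq_sq_iff_eq_or_eq_neg.mp hg

theorem gauss_pi (hl4 : l % 4 = 3) (hl3 : 3 < l) (hr : 1 ≤ r) (hpl : p.Coprime l) (hp2 : 2 < p)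
    (hord : orderOf (p : ZMod (l ^ r)) = f) (hf2 : 2 * f = (l ^ r).totient) {e : ℕ}
    (he : f = 2 * e + classNumSqrtNeg l) (hcard : Fintype.card F = p ^ f)
    (ψ : MulChar F ℂ) (hψ : orderOf ψ = l ^ r) (hψp : ∀ c : ℕ, ¬ p ∣ c → ψ (c : F) = 1) (hψm : ψ (-1) = 1) :
    ∃ A b : ℤ, 4 * (p : ℤ) ^ classNumSqrtNeg l = A ^ 2 + l * b ^ 2 ∧
      gaussSum ψ (psiF p F) = (p : ℂ) ^ e * ((A + b * sqrtNeg l) / 2) ∧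
      (starRingEnd ℂ) (gaussSum ψ (psiF p F)) = (p : ℂ) ^ e * ((A - b * sqrtNeg l) / 2) := by
  have hn : 0 < l ^ r := pow_pos hl.out.pos r
  have hn1 : 1 < l ^ r := Nat.one_lt_pow (by omega) hl.out.one_lt
  have hfpos : 0 < f := (f_odd hl4 hr hf2).pos
  have hp0 : (p : ℂ) ≠ 0 := by exact_mod_cast hp.out.ne_zero
  have hM : 0 < p * l ^ r := Nat.mul_pos hp.out.pos hn
  have hψn : ψ ^ (l ^ r) = 1 := by rw [← hψ]; exact pow_orderOf_eq_one ψ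
  have hψin : ψ⁻¹ ^ (l ^ r) = 1 := by rw [inv_pow, hψn, inv_one]
  have hψ1 : ψ ≠ 1 := by rintro rfl; rw [orderOf_one] at hψ; omega
  set z : ℂ := Complex.exp (2 * Real.pi * I / ((p * l ^ r : ℕ) : ℂ)) with hzdef
  have hz : IsPrimitiveRoot z (p * l ^ r) := Complex.isPrimitiveRoot_exp _ hM.ne'
  have hl0 : (l : ℂ) ≠ 0 := by exact_mod_cast hl.out.ne_zero
  have hzp : z ^ (l ^ r) = zetaP p := by
    rw [hzdef, ← Complex.exp_nat_mul, zetaP]; congr 1; push_cast; field_simp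
  have hzl : z ^ (p * l ^ (r - 1)) = ZMod.stdAddChar (1 : ZMod l) := by
    have := ZMod.stdAddChar_coe (N := l) 1
    rw [Int.cast_one, Int.cast_one] at this
    rw [this, hzdef, ← Complex.exp_nat_mul]; congr 1; push_cast
    have : (l : ℂ) ^ r = l * l ^ (r - 1) := by rw [← pow_succ']; congr 1; omega
    rw [this]
    field_simp
  obtain ⟨P1, hP1⟩ := gauss_poly hn (hpl.pow_right r) hz hzp ψ hψn hψp
  obtain ⟨P2, hP2⟩ := gauss_poly hn (hpl.pow_right r) hz hzp ψ⁻¹ hψin (fun c hc => by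
    rw [MulChar.inv_apply_eq_inv', hψp c hc, inv_one])
  obtain ⟨P3, hP3⟩ := tau_poly (l := l) (by omega) hzl
  have hP1' := hP1 1 (Nat.coprime_one_left _)
  have hP2' := hP2 1 (Nat.coprime_one_left _)
  have hP3' := hP3 1
  rw [pow_one, pow_one] at hP1' hP2'
  rw [pow_one, Nat.cast_one, legendreSym.at_one, Int.cast_one, one_mul] at hP3'
  set G := gaussSum ψ (psiF p F) with hG
  set G' := gaussSum ψ⁻¹ (psiF p F) with hG'
  set τ := gaussSum (legC l) ZMod.stdAddChar with hτ
  have hact : ∀ c : ℕ, c.Coprime (p * l ^ r) →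
      (legendreSym l c = 1 ∧ aeval (z ^ c) P1 = G ∧ aeval (z ^ c) P2 = G') ∨
      (legendreSym l c = -1 ∧ aeval (z ^ c) P1 = G' ∧ aeval (z ^ c) P2 = G) := by
    intro c hc
    have hcl : c.Coprime l := Nat.Coprime.coprime_dvd_right
      ((dvd_pow_self l (by omega)).trans (dvd_mul_left _ _)) hc
    rw [hP1 c hc, hP2 c hc]
    rcases leg_pm hcl with h | h
    · left
      exact ⟨h, gauss_leg_one hl4 hr hpl hord hf2 hcl h ψ hψn, gauss_leg_one hl4 hr hpl hord hf2 hcl h ψ⁻¹ hψin⟩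
    · right
      refine ⟨h, gauss_leg_neg hl4 hr hpl hord hf2 hcl h ψ hψn, ?_⟩
      rw [gauss_leg_neg hl4 hr hpl hord hf2 hcl h ψ⁻¹ hψin, inv_inv]
  obtain ⟨A', hA'⟩ := galois_int hM hz (P1 + P2) (by
    intro c hc
    rw [map_add, map_add, hP1', hP2']
    rcases hact c hc with ⟨_, h1, h2⟩ | ⟨_, h1, h2⟩
    · rw [h1, h2]
    · rw [h1, h2, add_comm])
  obtain ⟨C', hC'⟩ := galois_int hM hz ((P1 - P2) * P3) (by
    intro c hc
    rw [map_mul, map_mul, map_sub, map_sub, hP1', hP2', hP3', hP3]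
    rcases hact c hc with ⟨h, h1, h2⟩ | ⟨h, h1, h2⟩
    · rw [h1, h2, h]; push_cast; ring
    · rw [h1, h2, h]; push_cast; ring)
  rw [map_add, hP1', hP2'] at hA'
  rw [map_mul, map_sub, hP1', hP2', hP3'] at hC'
  have hq : 2 < p ^ f := lt_of_lt_of_le hp2 (Nat.le_self_pow hfpos.ne' p)
  have hint1 := gauss_integral hfpos hcard hn1 ψ hψ hq (fun j hj => H_bound hl4 hl3 hr hpl hord hf2 he hj)
  have hint2 := gauss_integral hfpos hcard hn1 ψ⁻¹ (by rw [orderOf_inv, hψ]) hq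
    (fun j hj => H_bound hl4 hl3 hr hpl hord hf2 he hj)
  rw [← hG] at hint1
  rw [← hG'] at hint2
  have hτ2 : τ ^ 2 = -(l : ℂ) := by
    rcases tau_cases (l := l) hl4 with h | h <;> rw [← hτ] at h <;> rw [h]
    · exact sqrtNeg_sq l
    · rw [neg_sq]; exact sqrtNeg_sq l
  have hτi : IsIntegral ℤ τ := by
    apply IsIntegral.of_pow (n := 2) (by norm_num)
    rw [hτ2]
    exact (isIntegral_algebraMap (R := ℤ) (A := ℂ) (x := -(l : ℤ))).neg.neg |> fun h => by simpa using h
  have hpe : (p : ℂ) ^ e ≠ 0 := pow_ne_zero _ hp0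
  have hpe' : p ^ e ≠ 0 := pow_ne_zero _ hp.out.ne_zero
  obtain ⟨A, hA⟩ := int_of_integral (hint1.add hint2) hpe' (k := A') (by
    push_cast; rw [← hA']; field_simp)
  obtain ⟨c, hc⟩ := int_of_integral ((hint1.sub hint2).mul hτi) hpe' (k := C') (by
    push_cast; rw [← hC']; field_simp)
  have hconj : (starRingEnd ℂ) G = G' := gauss_conj ψ _ hψm
  have hnorm : G * G' = (p : ℂ) ^ f := by
    rw [← hconj, gauss_norm ψ _ psiF_prim hψ1 hψm, hcard]; push_cast; rfl
  have hnorm2 : (G / (p : ℂ) ^ e) * (G' / (p : ℂ) ^ e) = (p : ℂ) ^ classNumSqrtNeg l := by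
    rw [div_mul_div_comm, hnorm, div_eq_iff (mul_ne_zero hpe hpe), he]; ring
  have hcc : c ^ 2 = l * (4 * (p : ℤ) ^ classNumSqrtNeg l - A ^ 2) := by
    have : (c : ℂ) ^ 2 = l * (4 * (p : ℂ) ^ classNumSqrtNeg l - A ^ 2) := by
      rw [← hc, ← hA, ← hnorm2, mul_pow, hτ2]; ring
    exact_mod_cast this
  have hdvd : (l : ℤ) ∣ c := by
    apply Int.Prime.dvd_pow' (k := 2) hl.out
    exact ⟨_, hcc⟩
  obtain ⟨b', rfl⟩ := hdvd
  have hmain : 4 * (p : ℤ) ^ classNumSqrtNeg l = A ^ 2 + l * b' ^ 2 := by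
    have hl0' : (l : ℤ) ≠ 0 := by exact_mod_cast hl.out.ne_zero
    apply mul_left_cancel₀ hl0'
    linear_combination -hcc
  have hτ0 : τ ≠ 0 := by
    intro h; rw [h] at hτ2; simp at hτ2; exact hl.out.ne_zero hτ2
  have hdiff : G / (p : ℂ) ^ e - G' / (p : ℂ) ^ e = - b' * τ := by
    apply mul_right_cancel₀ hτ0
    rw [hc]; push_cast; linear_combination b' * hτ2
  have hG1 : G = (p : ℂ) ^ e * ((A - b' * τ) / 2) := by
    have : G / (p : ℂ) ^ e = (A - b' * τ) / 2 := by linear_combination hA / 2 + hdiff / 2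
    rw [← this]; field_simp
  have hG2 : G' = (p : ℂ) ^ e * ((A + b' * τ) / 2) := by
    have : G' / (p : ℂ) ^ e = (A + b' * τ) / 2 := by linear_combination hA / 2 - hdiff / 2
    rw [← this]; field_simp
  rw [hconj]
  rcases tau_cases (l := l) hl4 with h | h <;> rw [← hτ] at h <;> rw [h] at hG1 hG2
  · exact ⟨A, -b', by rw [neg_sq]; exact hmain, by rw [hG1]; push_cast; ring, by rw [hG2]; push_cast; ring⟩
  · exact ⟨A, b', hmain, by rw [hG1]; push_cast; ring, by rw [hG2]; push_cast; ring⟩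

end partD

theorem sum_eval_eq {K : Type*} [Field K] [Fintype K] (P : K[X])
    (hP : P.natDegree ≤ Fintype.card K - 1) :
    ∑ x : K, P.eval x = - P.coeff (Fintype.card K - 1) := by
  classical
  have hq : 1 < Fintype.card K := Fintype.one_lt_card
  simp_rw [Polynomial.eval_eq_sum_range' (lt_of_le_of_lt hP (Nat.lt_succ_self _))]
  rw [Finset.sum_comm, Finset.sum_range_succ, Finset.sum_eq_zero, zero_add]
  · rw [← Finset.mul_sum]
    have : ∑ x : K, x ^ (Fintype.card K - 1) = -1 := by
      have h1 : ∀ x : K, x ^ (Fintype.card K - 1) = 1 - if x = 0 then 1 else 0 := by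
        intro x
        split_ifs with h
        · rw [h, zero_pow (by omega)]; ring
        · rw [FiniteField.pow_card_sub_one_eq_one x h]; ring
      simp [h1]
    rw [this]; ring
  · intro i hi
    rw [← Finset.mul_sum, FiniteField.sum_pow_lt_card_sub_one _ _ (Finset.mem_range.1 hi), mul_zero]

theorem coeff_prod_card {R ι : Type*} [CommRing R] (s : Finset ι) (Q : ι → R[X])
    (h : ∀ i ∈ s, (Q i).coeff 0 = 0) :
    (∏ i ∈ s, Q i).coeff s.card = ∏ i ∈ s, (Q i).coeff 1 := by
  have h1 : ∏ i ∈ s, Q i = X ^ s.card * ∏ i ∈ s, (Q i).divX := by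
    rw [← Finset.prod_const, ← Finset.prod_mul_distrib]
    refine Finset.prod_congr rfl fun i hi => ?_
    conv_lhs => rw [← Polynomial.X_mul_divX_add (Q i), h i hi]
    simp
  rw [h1]
  have := Polynomial.coeff_X_pow_mul (∏ i ∈ s, (Q i).divX) s.card 0
  rw [zero_add] at this
  rw [this, Polynomial.coeff_zero_prod]
  refine Finset.prod_congr rfl fun i hi => ?_
  rw [Polynomial.coeff_divX]

section sign
variable {p m : ℕ} [hp : Fact p.Prime]

theorem leg_choose_sum (hm : p = 2 * m + 1) (hm0 : 0 < m) :
    (∑ j ∈ Finset.range p, ((legendreSym p j : ℤ) : ZMod p) * ((2 * j).choose m : ZMod p)) *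
      (m.factorial : ZMod p) = - 2 ^ m := by
  have e1 : (∑ j ∈ Finset.range p, ((legendreSym p j : ℤ) : ZMod p) * ((2 * j).choose m : ZMod p)) *
      (m.factorial : ZMod p) = ∑ x : ZMod p, (X ^ m * (descPochhammer (ZMod p) m).comp (C 2 * X)).eval x := by
    rw [sum_zmod_range, Finset.sum_mul]
    refine Finset.sum_congr rfl fun j _ => ?_
    rw [eval_mul, eval_pow, eval_X, eval_comp, eval_mul, eval_C, eval_X, legendreSym.eq_pow,
      show p / 2 = m by omega]
    have := descPochhammer_eval_eq_descFactorial (ZMod p) (2 * j) m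
    push_cast at this
    rw [this, Nat.descFactorial_eq_factorial_mul_choose]
    push_cast
    ring
  have h2 : (2 : ZMod p) ≠ 0 := by
    intro h
    have h' : ((2 : ℕ) : ZMod p) = 0 := by exact_mod_cast h
    rw [ZMod.natCast_eq_zero_iff] at h'
    have := Nat.le_of_dvd (by norm_num) h'
    omega
  have hc : Fintype.card (ZMod p) - 1 = m + m := by rw [ZMod.card]; omega
  rw [e1, sum_eval_eq, hc, ← add_comm m m, coeff_X_pow_mul, comp_C_mul_X_coeff]
  · have := monic_descPochhammer (ZMod p) m
    have h3 := this.coeff_natDegree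
    rw [descPochhammer_natDegree] at h3
    rw [h3, one_mul]
  · rw [hc]
    refine natDegree_mul_le.trans ?_
    rw [natDegree_X_pow]
    gcongr
    refine natDegree_comp_le.trans ?_
    rw [descPochhammer_natDegree, natDegree_C_mul_X _ h2, mul_one]

theorem sign_zmod (hm : p = 2 * m + 1) (hm0 : 0 < m) (ε : ℤ)
    (hd : cyclotomic p ℤ ∣ (∑ j ∈ Finset.range p, C (legendreSym p j) * X ^ (2 * j)) -
      C ε * ∏ j ∈ Finset.Icc 1 m, (X ^ j - X ^ (p - j))) :
    (ε : ZMod p) * (m.factorial : ZMod p) ^ 2 = -1 := by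
  have h2 : (2 : ZMod p) ≠ 0 := by
    intro h
    have h' : ((2 : ℕ) : ZMod p) = 0 := by exact_mod_cast h
    rw [ZMod.natCast_eq_zero_iff] at h'
    have := Nat.le_of_dvd (by norm_num) h'
    omega
  obtain ⟨W, hW⟩ := hd
  have hW1 := congrArg (Polynomial.map (Int.castRingHom (ZMod p))) hW
  rw [Polynomial.map_mul, map_cyclotomic] at hW1
  have hcyc : cyclotomic p (ZMod p) = (X - 1) ^ (p - 1) := by
    have := cyclotomic_mul_prime_eq_pow_of_not_dvd (ZMod p) (p := p) (n := 1)
      (by intro h; have := Nat.le_of_dvd one_pos h; omega)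
    rwa [one_mul, cyclotomic_one] at this
  rw [hcyc] at hW1
  have hW2 := congrArg (fun P => (taylor 1 P).coeff m) hW1
  simp only [taylor_mul] at hW2
  have ht : taylor (1 : ZMod p) ((X - 1) ^ (p - 1)) = X ^ (p - 1) := by
    simp [taylor_apply]
  rw [ht, coeff_X_pow_mul', if_neg (by omega)] at hW2
  have hL : taylor (1 : ZMod p) (Polynomial.map (Int.castRingHom (ZMod p))
      ((∑ j ∈ Finset.range p, C (legendreSym p j) * X ^ (2 * j)) -
      C ε * ∏ j ∈ Finset.Icc 1 m, (X ^ j - X ^ (p - j)))) =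
      (∑ j ∈ Finset.range p, C ((legendreSym p j : ℤ) : ZMod p) * (X + 1) ^ (2 * j)) -
      C (ε : ZMod p) * ∏ j ∈ Finset.Icc 1 m, ((X + 1) ^ j - (X + 1) ^ (p - j)) := by
    simp [taylor_apply, Polynomial.map_sum, Polynomial.map_prod, Polynomial.sum_comp, Polynomial.prod_comp]
  rw [hL, coeff_sub, coeff_C_mul, finset_sum_coeff] at hW2
  simp only [coeff_C_mul, coeff_X_add_one_pow] at hW2
  have hprod : (∏ j ∈ Finset.Icc 1 m, ((X + 1 : (ZMod p)[X]) ^ j - (X + 1) ^ (p - j))).coeff m =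
      (2 : ZMod p) ^ m * (m.factorial : ZMod p) := by
    have := coeff_prod_card (Finset.Icc 1 m)
      (fun j => ((X + 1 : (ZMod p)[X]) ^ j - (X + 1) ^ (p - j))) (by
        intro i _
        simp [coeff_X_add_one_pow])
    rw [Nat.card_Icc, Nat.add_sub_cancel] at this
    rw [this]
    have : ∀ j ∈ Finset.Icc 1 m, ((X + 1 : (ZMod p)[X]) ^ j - (X + 1) ^ (p - j)).coeff 1 = 2 * (j : ZMod p) := by
      intro j hj
      rw [Finset.mem_Icc] at hj
      rw [coeff_sub, coeff_X_add_one_pow, coeff_X_add_one_pow, Nat.choose_one_right,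
        Nat.choose_one_right, Nat.cast_sub (by omega)]
      simp; ring
    rw [Finset.prod_congr rfl this, Finset.prod_mul_distrib, Finset.prod_const, Nat.card_Icc,
      Nat.add_sub_cancel, ← Nat.cast_prod, ← Finset.Ico_add_one_right_eq_Icc, Finset.prod_Ico_id_eq_factorial]
  rw [hprod, sub_eq_zero] at hW2
  have h5 := leg_choose_sum (p := p) hm hm0
  rw [hW2] at h5
  have h6 : (2 : ZMod p) ^ m ≠ 0 := pow_ne_zero _ h2
  apply mul_left_cancel₀ h6
  linear_combination h5

theorem wilson_half (hm : p = 2 * m + 1) :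
    (-1 : ZMod p) ^ m * (m.factorial : ZMod p) ^ 2 = -1 := by
  refine Eq.trans ?_ (ZMod.wilsons_lemma p)
  have h1 : p - 1 = m + m := by omega
  rw [h1, ← Nat.factorial_mul_ascFactorial]
  rw [Nat.ascFactorial_eq_prod_range]
  push_cast
  have h2 : ∏ i ∈ Finset.range m, ((m : ZMod p) + 1 + i) = (-1) ^ m * m.factorial := by
    rw [← Finset.prod_range_add_one_eq_factorial, ← Finset.prod_range_reflect]
    have h3 : (-1 : ZMod p) ^ m = ∏ i ∈ Finset.range m, (-1 : ZMod p) := by simp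
    push_cast
    rw [h3, ← Finset.prod_mul_distrib]
    refine Finset.prod_congr rfl fun i hi => ?_
    rw [Finset.mem_range] at hi
    rw [show m - 1 - i = m - (i + 1) by omega, Nat.cast_sub (by omega)]
    have : ((2 * m + 1 : ℕ) : ZMod p) = 0 := by rw [← hm]; simp
    push_cast at this ⊢
    linear_combination this
  rw [h2]; ring

theorem sign_eps (hm : p = 2 * m + 1) (hm0 : 0 < m) (ε : ℤ) (hε : ε = 1 ∨ ε = -1)
    (hd : cyclotomic p ℤ ∣ (∑ j ∈ Finset.range p, C (legendreSym p j) * X ^ (2 * j)) -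
      C ε * ∏ j ∈ Finset.Icc 1 m, (X ^ j - X ^ (p - j))) :
    ε = (-1) ^ m := by
  have h1 := sign_zmod hm hm0 ε hd
  have h2 := wilson_half (p := p) hm
  have h3 : (m.factorial : ZMod p) ^ 2 ≠ 0 := by
    intro h; rw [h, mul_zero] at h1
    exact (neg_ne_zero.2 one_ne_zero) h1.symm
  have h4 : (ε : ZMod p) = (-1) ^ m := mul_right_cancel₀ h3 (h1.trans h2.symm)
  have hne : (1 : ZMod p) ≠ -1 := by
    have : Fact (2 < p) := ⟨by omega⟩
    exact (ZMod.neg_one_ne_one).symm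
  rcases hε with rfl | rfl <;> rcases neg_one_pow_eq_or ℤ m with h | h <;>
    rcases Nat.even_or_odd m with h' | h' <;> simp [h'] at h4 h ⊢
  · exact hne h4
  · exact hne h4.symm
end sign

section sign2
variable {p m : ℕ} [hp : Fact p.Prime]

theorem sin_prod (hm : p = 2 * m + 1) :
    ∏ k ∈ Finset.range m, (2 * Real.sin (Real.pi * (k + 1) / p)) = Real.sqrt p := by
  have hp0 : (0 : ℝ) < p := by exact_mod_cast hp.out.pos
  have hpm : (p : ℝ) = 2 * m + 1 := by rw [hm]; push_cast; ring
  have hpos : ∀ k < 2 * m, 0 < 2 * Real.sin (Real.pi * (k + 1) / p) := by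
    intro k hk
    have : ((k : ℝ) + 1) < p := by
      rw [hpm]; have : (k : ℝ) < 2 * m := by exact_mod_cast hk
      linarith
    refine mul_pos two_pos (Real.sin_pos_of_pos_of_lt_pi (by positivity) ?_)
    rw [div_lt_iff₀ hp0]
    exact mul_lt_mul_of_pos_left this Real.pi_pos
  have h1 := (show IsPrimitiveRoot (zetaP p) (2 * m + 1) by rw [← hm]; exact zetaP_prim).prod_one_sub_pow_eq_order
  have h2 := congrArg (fun z : ℂ => ‖z‖) h1
  simp only [norm_prod] at h2
  have h3 : ∀ k ∈ Finset.range (2 * m), ‖1 - zetaP p ^ (k + 1)‖ = 2 * Real.sin (Real.pi * (k + 1) / p) := by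
    intro k hk
    have : zetaP p ^ (k + 1) = exp (I * ((2 * (Real.pi * (k + 1) / p) : ℝ) : ℂ)) := by
      rw [zetaP, ← Complex.exp_nat_mul]
      congr 1
      push_cast
      ring
    rw [norm_sub_rev, this, norm_exp_I_mul_ofReal_sub_one, Real.norm_of_nonneg, mul_div_cancel_left₀ _ two_ne_zero]
    rw [mul_div_cancel_left₀ _ two_ne_zero]
    exact (hpos k (Finset.mem_range.1 hk)).le
  rw [Finset.prod_congr rfl h3, two_mul m, Finset.prod_range_add] at h2
  rw [← Finset.prod_range_reflect (fun x => 2 * Real.sin (Real.pi * (((m + x : ℕ) : ℝ) + 1) / p))] at h2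
  have h4 : ∀ j ∈ Finset.range m, 2 * Real.sin (Real.pi * (((m + (m - 1 - j) : ℕ) : ℝ) + 1) / p) =
      2 * Real.sin (Real.pi * (j + 1) / p) := by
    intro j hj
    rw [Finset.mem_range] at hj
    rw [← Real.sin_pi_sub]
    congr 2
    have : ((m + (m - 1 - j) : ℕ) : ℝ) = p - 2 - j := by
      rw [hpm]
      have : ((m + (m - 1 - j) : ℕ) : ℝ) + 1 + j = 2 * m := by
        norm_cast; omega
      linarith
    rw [this]
    field_simp
    ring
  rw [Finset.prod_congr rfl h4] at h2
  have h5 : ‖(((m + m : ℕ) : ℂ) + 1)‖ = p := by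
    rw [← Nat.cast_one, ← Nat.cast_add, Complex.norm_natCast, hm]; push_cast; ring
  rw [h5, ← sq] at h2
  symm
  rw [Real.sqrt_eq_iff_mul_self_eq (Nat.cast_nonneg _), ← sq, h2]
  refine Finset.prod_nonneg fun k hk => (hpos k ?_).le
  have := Finset.mem_range.1 hk
  omega

theorem sgnI_prod (t : ℕ) : ∏ k ∈ Finset.range (2 * t), ((-1 : ℂ) ^ (k + 1) * I) = 1 := by
  induction t with
  | zero => simp
  | succ t ih =>
    rw [show 2 * (t + 1) = 2 * t + 1 + 1 by ring, Finset.prod_range_succ, Finset.prod_range_succ, ih]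
    have h : ((-1 : ℂ) ^ (2 * t)) = 1 := by rw [pow_mul]; norm_num
    rw [pow_succ, pow_succ, pow_succ, h]
    linear_combination (-1 : ℂ) * I_mul_I

theorem omega_term (hm : p = 2 * m + 1) {j : ℕ} (hj : j ≤ p) :
    (zetaP p ^ (m + 1)) ^ j - (zetaP p ^ (m + 1)) ^ (p - j) =
      (-1 : ℂ) ^ j * I * ((2 * Real.sin (Real.pi * j / p) : ℝ) : ℂ) := by
  have hp0 : (p : ℂ) ≠ 0 := by exact_mod_cast hp.out.ne_zero
  have e0 : ∀ k : ℕ, (zetaP p ^ (m + 1)) ^ k = (-1) ^ k * exp ((Real.pi * k / p : ℝ) * I) := by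
    intro k
    have : zetaP p ^ (m + 1) = -1 * exp ((Real.pi / p : ℝ) * I) := by
      rw [zetaP, ← Complex.exp_nat_mul, ← Complex.exp_pi_mul_I, ← Complex.exp_add]
      congr 1
      have hpm : (p : ℂ) = 2 * m + 1 := by rw [hm]; push_cast; ring
      push_cast
      field_simp
      rw [hpm]; ring
    rw [this, mul_pow, ← Complex.exp_nat_mul]
    congr 2
    push_cast; ring
  have e1 : (zetaP p ^ (m + 1)) ^ (p - j) = (-1) ^ j * exp (-((Real.pi * j / p : ℝ) * I)) := by
    have h1 : (zetaP p ^ (m + 1)) ^ (p - j) * (zetaP p ^ (m + 1)) ^ j = 1 := by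
      rw [← pow_add, Nat.sub_add_cancel hj, ← pow_mul, mul_comm, pow_mul, zetaP_prim.pow_eq_one, one_pow]
    have h2 : (zetaP p ^ (m + 1)) ^ j ≠ 0 := right_ne_zero_of_mul_eq_one h1
    apply mul_right_cancel₀ h2
    rw [h1, e0 j, mul_mul_mul_comm, ← Complex.exp_add, neg_add_cancel, Complex.exp_zero, ← mul_pow]
    norm_num
  rw [e0, e1]
  have := Complex.two_sin (((Real.pi * j / p : ℝ)) : ℂ)
  rw [Complex.ofReal_mul 2, Complex.ofReal_sin, Complex.ofReal_ofNat, this, neg_mul]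
  linear_combination (-(-1) ^ j * (exp (-(((Real.pi * j / p : ℝ)) * I)) - exp (((Real.pi * j / p : ℝ)) * I))) * I_mul_I

theorem omega_prod (hm : p = 2 * m + 1) :
    ∏ j ∈ Finset.Icc 1 m, ((zetaP p ^ (m + 1)) ^ j - (zetaP p ^ (m + 1)) ^ (p - j)) =
      (-1) ^ m * sqrtPStar p := by
  have h1 : ∏ j ∈ Finset.Icc 1 m, ((zetaP p ^ (m + 1)) ^ j - (zetaP p ^ (m + 1)) ^ (p - j)) =
     ∏ k ∈ Finset.range m, (((-1 : ℂ) ^ (k + 1) * I) * ((2 * Real.sin (Real.pi * (k + 1) / p) : ℝ) : ℂ)) := by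
    rw [← Finset.Ico_add_one_right_eq_Icc, Finset.prod_Ico_eq_prod_range, Nat.add_sub_cancel]
    refine Finset.prod_congr rfl fun k hk => ?_
    rw [Finset.mem_range] at hk
    rw [add_comm 1 k, omega_term hm (by omega)]
    push_cast
    rfl
  rw [h1, Finset.prod_mul_distrib, ← Complex.ofReal_prod, sin_prod hm]
  rcases Nat.even_or_odd' m with ⟨t, rfl | rfl⟩
  · rw [sgnI_prod, sqrtPStar, if_pos (by omega), pow_mul]; norm_num
  · rw [Finset.prod_range_succ, sgnI_prod, sqrtPStar, if_neg (by omega), pow_succ, pow_mul]; norm_num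
    ring

theorem sqrtPStar_sq (hm : p = 2 * m + 1) : sqrtPStar p ^ 2 = (-1) ^ m * p := by
  have h : ((Real.sqrt p : ℝ) : ℂ) ^ 2 = (p : ℂ) := by
    rw [← Complex.ofReal_pow, Real.sq_sqrt (by positivity)]; simp
  rcases Nat.even_or_odd' m with ⟨t, rfl | rfl⟩
  · rw [sqrtPStar, if_pos (by omega), h, pow_mul]; norm_num
  · rw [sqrtPStar, if_neg (by omega), mul_pow, h, I_sq, pow_succ, pow_mul]; norm_num

theorem std_eq_zeta (j : ℕ) : ZMod.stdAddChar (j : ZMod p) = zetaP p ^ j := by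
  have := ZMod.stdAddChar_coe (N := p) j
  push_cast at this
  rw [this, zetaP, ← Complex.exp_nat_mul]
  congr 1
  ring

theorem gauss_sign (hp2 : p ≠ 2) : gaussSum (legC p) ZMod.stdAddChar = sqrtPStar p := by
  obtain ⟨m, hm⟩ : Odd p := hp.out.odd_of_ne_two hp2
  have hm0 : 0 < m := by have := hp.out.two_le; omega
  have hleg : legC p (-1) = (-1) ^ m := by
    have h0 := legC_zmod p (-1)
    have h2 := legendreSym.at_neg_one hp2
    rw [legendreSym] at h2
    push_cast at h2
    rw [h0, h2]
    rcases Nat.even_or_odd' m with ⟨t, h | h⟩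
    · rw [ZMod.χ₄_nat_one_mod_four (by omega), h, pow_mul]; norm_num
    · rw [ZMod.χ₄_nat_three_mod_four (by omega), h, pow_succ, pow_mul]; norm_num
  have hg2 := gaussSum_sq (legC_ne_one p hp2) (legC_quad p) (ZMod.isPrimitive_stdAddChar p)
  rw [ZMod.card, hleg] at hg2
  have hD2 : ((-1) ^ m * sqrtPStar p) ^ 2 = (-1 : ℂ) ^ m * p := by
    rw [mul_pow, sqrtPStar_sq hm, ← pow_mul, mul_comm m 2, pow_mul]; norm_num
  rw [← hD2, sq_eq_sq_iff_eq_or_eq_neg] at hg2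
  obtain ⟨ε, hε, hgε⟩ : ∃ ε : ℤ, (ε = 1 ∨ ε = -1) ∧ gaussSum (legC p) ZMod.stdAddChar =
      ε * ((-1) ^ m * sqrtPStar p) := by
    rcases hg2 with h | h
    · exact ⟨1, Or.inl rfl, by rw [h]; simp⟩
    · exact ⟨-1, Or.inr rfl, by rw [h]; simp⟩
  have hprim : IsPrimitiveRoot (zetaP p ^ (m + 1)) p := by
    refine zetaP_prim.pow_of_coprime _ ?_
    rw [hm, show 2 * m + 1 = m + (m + 1) by ring]
    simp
  have hdvd : cyclotomic p ℤ ∣ (∑ j ∈ Finset.range p, C (legendreSym p j) * X ^ (2 * j)) -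
      C ε * ∏ j ∈ Finset.Icc 1 m, (X ^ j - X ^ (p - j)) := by
    rw [cyclotomic_eq_minpoly hprim hp.out.pos]
    refine minpoly.isIntegrallyClosed_dvd (hprim.isIntegral hp.out.pos) ?_
    simp only [map_sub, map_sum, map_mul, map_prod, map_pow, aeval_X, aeval_C]
    rw [omega_prod hm, sub_eq_zero]
    refine Eq.trans ?_ (hgε.trans ?_)
    · rw [gaussSum, sum_zmod_range]
      refine Finset.sum_congr rfl fun j _ => ?_
      rw [legC_apply, std_eq_zeta, ← pow_mul]
      have : zetaP p ^ ((m + 1) * (2 * j)) = zetaP p ^ j := by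
        rw [show (m + 1) * (2 * j) = p * j + j by rw [hm]; ring, pow_add, pow_mul, zetaP_prim.pow_eq_one,
          one_pow, one_mul]
      rw [this]; simp
    · simp
  have := sign_eps hm hm0 ε hε hdvd
  rw [hgε, this, ← mul_assoc]
  push_cast
  rw [← pow_add, ← two_mul, pow_mul]
  norm_num
end sign2

section lift
variable {p f : ℕ} [hp : Fact p.Prime]

theorem sum_std_sq (hp2 : p ≠ 2) {d : ZMod p} (hd : d ≠ 0) :
    ∑ t : ZMod p, ZMod.stdAddChar (t ^ 2 * d) = legC p d * sqrtPStar p := by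
  have hr : ringChar (ZMod p) ≠ 2 := by rw [ZMod.ringChar_zmod_n]; exact hp2
  rw [sum_sq_eq hr (fun z => ZMod.stdAddChar (z * d))]
  have h1 : ∀ z : ZMod p, quadC (ZMod p) z = legC p z := by
    intro z
    rw [quadC_apply, legC_zmod]
    congr!
  simp only [h1, add_mul, one_mul, Finset.sum_add_distrib]
  rw [legC_tau_shift p hp2, gauss_sign hp2]
  have := AddChar.sum_mulShift d (ZMod.isPrimitive_stdAddChar p)
  rw [if_neg hd] at this
  rw [this]
  simp

theorem std_sum {ι : Type*} (s : Finset ι) (g : ι → ZMod p) :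
    (ZMod.stdAddChar (∑ i ∈ s, g i) : ℂ) = ∏ i ∈ s, ZMod.stdAddChar (g i) := by
  classical
  induction s using Finset.induction_on with
  | empty => simp
  | insert a s ha ih => rw [Finset.sum_insert ha, Finset.prod_insert ha, AddChar.map_add_eq_mul, ih]

variable {F : Type} [Field F] [Fintype F] [Algebra (ZMod p) F]

theorem discr_sq (n : ℕ) (hn : Module.finrank (ZMod p) F = n) (v : Fin n → F) :
    ∃ δ : F, algebraMap (ZMod p) F (Algebra.discr (ZMod p) v) = δ ^ 2 := by
  refine ⟨(Matrix.of fun i j : Fin n => v i ^ p ^ (j : ℕ)).det, ?_⟩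
  have hM := Matrix.det_mul (Matrix.of fun i j : Fin n => v i ^ p ^ (j : ℕ))
    (Matrix.of fun i j : Fin n => v i ^ p ^ (j : ℕ)).transpose
  rw [Matrix.det_transpose] at hM
  rw [Algebra.discr_def, RingHom.map_det, sq, ← hM]
  congr 1
  ext i j
  rw [RingHom.mapMatrix_apply, Matrix.map_apply, Algebra.traceMatrix_apply, Algebra.traceForm_apply,
    FiniteField.algebraMap_trace_eq_sum_pow, hn, Nat.card_zmod, Matrix.mul_apply,
    Finset.sum_range]
  refine Finset.sum_congr rfl fun k _ => ?_
  simp [mul_pow]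

theorem psiF_std (x : F) : psiF p F x = ZMod.stdAddChar (Algebra.trace (ZMod p) F x) := by
  rw [psiF_apply, ← std_eq_zeta, ZMod.natCast_zmod_val]

theorem quad_lift (hp2 : p ≠ 2) (hfo : Odd f) (hcard : Fintype.card F = p ^ f) :
    gaussSum (quadC F) (psiF p F) = sqrtPStar p ^ f := by
  classical
  have hfin : Module.finrank (ZMod p) F = f := by
    have := Module.card_eq_pow_finrank (K := ZMod p) (V := F)
    rw [hcard, ZMod.card] at this
    exact (Nat.pow_right_injective hp.out.two_le this).symm
  have hch : CharP F p := charP_of_injective_algebraMap (algebraMap (ZMod p) F).injective p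
  have hrF : ringChar F ≠ 2 := by rw [ringChar.eq F p]; exact hp2
  have h20 : (2 : ZMod p) ≠ 0 := by
    intro h
    have h' : ((2 : ℕ) : ZMod p) = 0 := by exact_mod_cast h
    rw [ZMod.natCast_eq_zero_iff] at h'
    exact hp2 ((Nat.prime_dvd_prime_iff_eq hp.out Nat.prime_two).1 h')
  haveI : Invertible (2 : ZMod p) := invertibleOfNonzero h20
  obtain ⟨v, hv⟩ : ∃ v : Module.Basis (Fin f) (ZMod p) F,
      ∀ i j, i ≠ j → Algebra.traceForm (ZMod p) F (v i) (v j) = 0 := by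
    rw [← hfin]
    obtain ⟨v, hv⟩ := LinearMap.BilinForm.exists_orthogonal_basis
      (B := Algebra.traceForm (ZMod p) F) ⟨fun x y => by
        simp [Algebra.traceForm_apply, mul_comm]⟩
    rw [LinearMap.isOrthoᵢ_def] at hv
    exact ⟨v, hv⟩
  set d : Fin f → ZMod p := fun i => Algebra.trace (ZMod p) F (v i * v i) with hd
  have hdisc : Algebra.discr (ZMod p) v = ∏ i, d i := by
    rw [Algebra.discr_def]
    have : Algebra.traceMatrix (ZMod p) v = Matrix.diagonal d := by
      ext i j
      rw [Algebra.traceMatrix_apply]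
      by_cases h : i = j
      · subst h; rw [Matrix.diagonal_apply_eq, Algebra.traceForm_apply]
      · rw [Matrix.diagonal_apply_ne _ h, hv i j h]
    rw [this, Matrix.det_diagonal]
  have hne : ∏ i, d i ≠ 0 := by rw [← hdisc]; exact Algebra.discr_not_zero_of_basis (ZMod p) v
  have hd0 : ∀ i, d i ≠ 0 := fun i => (Finset.prod_ne_zero_iff.1 hne) i (Finset.mem_univ _)
  have hchi : legC p (∏ i, d i) = 1 := by
    obtain ⟨δ, hδ⟩ := discr_sq (p := p) f hfin v
    have h1 := congrArg (Algebra.norm (ZMod p)) hδ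
    rw [Algebra.norm_algebraMap, map_pow, hdisc, hfin] at h1
    have h2 := congrArg (legC p) h1
    rw [map_pow, map_pow] at h2
    have hne' : (∏ i, d i) ^ f ≠ 0 := pow_ne_zero _ hne
    rw [h1] at hne'
    have h3 : Algebra.norm (ZMod p) δ ≠ 0 := by
      intro h; apply hne'; rw [h]; simp
    rcases legC_quad p (Algebra.norm (ZMod p) δ) with h | h | h
    · rw [legC_zmod] at h
      exact absurd (quadraticChar_eq_zero_iff.1 (by exact_mod_cast h)) h3
    · rw [h, one_pow] at h2
      rcases legC_quad p (∏ i, d i) with h' | h' | h'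
      · rw [h', zero_pow hfo.pos.ne'] at h2; exact absurd h2 zero_ne_one
      · exact h'
      · rw [h', hfo.neg_one_pow] at h2; norm_num at h2
    · rw [h, neg_one_sq] at h2
      rcases legC_quad p (∏ i, d i) with h' | h' | h'
      · rw [h', zero_pow hfo.pos.ne'] at h2; exact absurd h2 zero_ne_one
      · exact h'
      · rw [h', hfo.neg_one_pow] at h2; norm_num at h2
  have e1 : gaussSum (quadC F) (psiF p F) = ∑ y : F, psiF p F (y ^ 2) := by
    rw [sum_sq_eq hrF (fun z => psiF p F z)]
    simp only [add_mul, one_mul, Finset.sum_add_distrib]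
    rw [AddChar.sum_eq_zero_of_ne_one psiF_ne_one, add_zero, gaussSum]
  have e2 : ∑ y : F, psiF p F (y ^ 2) =
      ∑ t : Fin f → ZMod p, ∏ i, ZMod.stdAddChar (t i ^ 2 * d i) := by
    rw [← v.equivFun.symm.toEquiv.sum_comp]
    refine Finset.sum_congr rfl fun t _ => ?_
    rw [psiF_std]
    have : Algebra.trace (ZMod p) F ((v.equivFun.symm.toEquiv t) ^ 2) = ∑ i, t i ^ 2 * d i := by
      rw [sq, ← Algebra.traceForm_apply]
      have : v.equivFun.symm.toEquiv t = ∑ i, t i • v i := by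
        simp [Module.Basis.equivFun_symm_apply]
      rw [this, LinearMap.BilinForm.sum_left]
      refine Finset.sum_congr rfl fun i _ => ?_
      rw [LinearMap.BilinForm.sum_right, Finset.sum_eq_single i]
      · rw [LinearMap.BilinForm.smul_left, LinearMap.BilinForm.smul_right, Algebra.traceForm_apply]; ring
      · intro j _ hj
        rw [LinearMap.BilinForm.smul_left, LinearMap.BilinForm.smul_right, hv i j hj.symm]; ring
      · intro h; exact absurd (Finset.mem_univ _) h
    rw [this]
    exact std_sum _ _
  rw [e1, e2, ← Fintype.prod_sum (fun i t => (ZMod.stdAddChar (t ^ 2 * d i) : ℂ))]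
  rw [Finset.prod_congr rfl (fun i _ => sum_std_sq hp2 (hd0 i)), Finset.prod_mul_distrib, ← map_prod, hchi,
    one_mul, Finset.prod_const, Finset.card_univ, Fintype.card_fin]
end lift

theorem par_f {l r f : ℕ} [hl : Fact l.Prime] (hr : 1 ≤ r) (hf2 : 2 * f = (l ^ r).totient) :
    (l % 8 = 7 → ((f - 1) / 2) % 2 = r % 2) ∧ (l % 8 = 3 → ((f - 1) / 2) % 2 = (r + 1) % 2) := by
  rw [Nat.totient_prime_pow hl.out (by omega)] at hf2
  have hpw : ∀ k : ℕ, l % 4 = 3 → (k % 2 = 0 → l ^ k % 4 = 1) ∧ (k % 2 = 1 → l ^ k % 4 = 3) := by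
    intro k h4
    induction k with
    | zero => simp
    | succ k ih =>
      refine ⟨fun h => ?_, fun h => ?_⟩
      · rw [pow_succ, Nat.mul_mod, ih.2 (by omega), h4]
      · rw [pow_succ, Nat.mul_mod, ih.1 (by omega), h4]
  refine ⟨fun h => ?_, fun h => ?_⟩
  · have hf : f = l ^ (r - 1) * ((l - 1) / 2) := by
      have : l - 1 = 2 * ((l - 1) / 2) := by omega
      rw [this] at hf2
      linarith
    have h1 : ((l - 1) / 2) % 4 = 3 := by omega
    have h2 := hpw (r - 1) (by omega)
    have h3 : f % 4 = (l ^ (r - 1) % 4 * 3) % 4 := by rw [hf, Nat.mul_mod, h1]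
    rcases Nat.mod_two_eq_zero_or_one (r - 1) with h' | h'
    · rw [h2.1 h'] at h3; omega
    · rw [h2.2 h'] at h3; omega
  · have hf : f = l ^ (r - 1) * ((l - 1) / 2) := by
      have : l - 1 = 2 * ((l - 1) / 2) := by omega
      rw [this] at hf2
      linarith
    have h1 : ((l - 1) / 2) % 4 = 1 := by omega
    have h2 := hpw (r - 1) (by omega)
    have h3 : f % 4 = (l ^ (r - 1) % 4 * 1) % 4 := by rw [hf, Nat.mul_mod, h1]
    rcases Nat.mod_two_eq_zero_or_one (r - 1) with h' | h'
    · rw [h2.1 h'] at h3; omega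
    · rw [h2.2 h'] at h3; omega

theorem l_not_dvd {p l r f : ℕ} [hp : Fact p.Prime] [hl : Fact l.Prime] (hl3 : 3 < l) (hr : 1 ≤ r)
    (hord : orderOf (p : ZMod (l ^ r)) = f) (hf2 : 2 * f = (l ^ r).totient) : ¬ l ∣ p - 1 := by
  intro h
  rw [Nat.totient_prime_pow hl.out (by omega)] at hf2
  have h1 : (l : ℤ) ∣ (p : ℤ) - 1 := by
    have := Int.natCast_dvd_natCast.2 h
    rwa [Nat.cast_sub hp.out.one_lt.le, Nat.cast_one] at this
  have h2 := dvd_sub_pow_of_dvd_sub (R := ℤ) (p := l) h1 (r - 1)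
  rw [Nat.sub_add_cancel hr, one_pow] at h2
  have h3 : (p : ZMod (l ^ r)) ^ (l ^ (r - 1)) = 1 := by
    have h4 : (((p : ℤ) ^ l ^ (r - 1) - 1 : ℤ) : ZMod (l ^ r)) = 0 := by
      rw [ZMod.intCast_zmod_eq_zero_iff_dvd]; exact_mod_cast h2
    push_cast at h4
    exact sub_eq_zero.1 h4
  have h5 := orderOf_dvd_of_pow_eq_one h3
  rw [hord] at h5
  have hpos : 0 < l ^ (r - 1) := pow_pos hl.out.pos _
  have h6 := Nat.le_of_dvd hpos h5
  have h7 : l ^ (r - 1) * 3 ≤ l ^ (r - 1) * (l - 1) := Nat.mul_le_mul_left _ (by omega)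
  omega

theorem pstar_pow {p m f : ℕ} [hp : Fact p.Prime] (hm : p = 2 * m + 1) (hfo : Odd f) {k : ℕ}
    (hk : ((f - 1) / 2) % 2 = k % 2) :
    sqrtPStar p ^ f = (-1 : ℂ) ^ (k * ((p - 1) / 2)) * sqrtPStar p * (p : ℂ) ^ ((f - 1) / 2) := by
  obtain ⟨g, rfl⟩ := hfo
  have e : (2 * g + 1 - 1) / 2 = g := by omega
  rw [e] at hk ⊢
  rw [pow_succ, pow_mul, sqrtPStar_sq hm, mul_pow, ← pow_mul, show (p - 1) / 2 = m by omega]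
  have : (-1 : ℂ) ^ (m * g) = (-1) ^ (k * m) := by
    rw [mul_comm m g, neg_one_pow_eq_pow_mod_two, neg_one_pow_eq_pow_mod_two (k * m), Nat.mul_mod, hk, ← Nat.mul_mod]
  rw [this]; ring

theorem choose_sign {p l h : ℕ} [hl : Fact l.Prime] (hl4 : l % 4 = 3) (hh : Odd h)
    (hleg : legendreSym l p = 1) {A : ℤ} {b : ℤ} (hA : 4 * (p : ℤ) ^ h = A ^ 2 + l * b ^ 2) :
    A ≡ -2 * (p : ℤ) ^ ((l - 1 + 2 * h) / 4) [ZMOD l] ∨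
      -A ≡ -2 * (p : ℤ) ^ ((l - 1 + 2 * h) / 4) [ZMOD l] := by
  obtain ⟨k, rfl⟩ := hh
  have h1 : ((p : ℤ) : ZMod l) ^ (l / 2) = 1 := by
    rw [← legendreSym.eq_pow, hleg]; simp
  have h2 : ((A : ℤ) : ZMod l) ^ 2 = (2 * (p : ZMod l) ^ ((l - 1 + 2 * (2 * k + 1)) / 4)) ^ 2 := by
    have h3 := congrArg (Int.cast : ℤ → ZMod l) hA
    push_cast at h3 h1
    rw [mul_pow, ← pow_mul, show (l - 1 + 2 * (2 * k + 1)) / 4 * 2 = l / 2 + (2 * k + 1) by omega, pow_add, h1]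
    simp at h3
    linear_combination -h3
  simp only [← ZMod.intCast_eq_intCast_iff]
  push_cast
  rcases sq_eq_sq_iff_eq_or_eq_neg.1 h2 with h3 | h3
  · right; rw [h3]; ring
  · left; rw [h3]; ring

theorem statement8 (p l r N f : ℕ) (hp : p.Prime) (hl : l.Prime) (hl4 : l % 4 = 3)
    (hl3 : 3 < l) (hr : 1 ≤ r) (hN : N = 2 * l ^ r) (hNp : Nat.gcd N p = 1)
    (hf : orderOf (p : ZMod N) = f) (hind : f = Nat.totient N / 2)
    (F : Type) [Field F] [Fintype F] [Algebra (ZMod p) F]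
    (hcard : Fintype.card F = p ^ f)
    (χ : MulChar F ℂ) (hχord : orderOf χ = N) :
    (l % 8 = 7 →
      gaussSumN p χ 1 =
        (-1 : ℂ) ^ (r * ((p - 1) / 2)) * sqrtPStar p * (p : ℂ) ^ (((f - 1) / 2 : ℕ))) ∧
    (l % 8 = 3 →
      ∃ a b : ℤ,
        4 * (p : ℤ) ^ classNumSqrtNeg l = a ^ 2 + (l : ℤ) * b ^ 2 ∧
        a ≡ -2 * (p : ℤ) ^ ((l - 1 + 2 * classNumSqrtNeg l) / 4) [ZMOD (l : ℤ)] ∧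
        gaussSumN p χ 1 =
          (-1 : ℂ) ^ ((r + 1) * ((p - 1) / 2)) * sqrtPStar p *
            (p : ℂ) ^ (((f : ℤ) - 1) / 2 - (classNumSqrtNeg l : ℤ)) *
            (((a : ℂ) + (b : ℂ) * sqrtNeg l) / 2) ^ 2) := by
  haveI hpF : Fact p.Prime := ⟨hp⟩
  haveI hlF : Fact l.Prime := ⟨hl⟩
  subst hN
  have hlodd : Odd l := by rw [Nat.odd_iff]; omega
  have hnodd : Odd (l ^ r) := hlodd.pow
  have hn1 : 3 < l ^ r := lt_of_lt_of_le hl3 (Nat.le_self_pow (by omega) l)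
  have hcop : Nat.Coprime (2 * l ^ r) p := hNp
  have hc2 : Nat.Coprime 2 p := Nat.Coprime.coprime_mul_right hcop
  have hpn : Nat.Coprime (l ^ r) p := Nat.Coprime.coprime_mul_left hcop
  have hpl : p.Coprime l := ((Nat.coprime_pow_left_iff (by omega) _ _).1 hpn).symm
  have hpodd : Odd p := by rwa [Nat.coprime_two_left] at hc2
  obtain ⟨m, hm⟩ := hpodd
  have hp2 : 2 < p := by have := hp.two_le; omega
  have hp0 : (p : ℂ) ≠ 0 := by exact_mod_cast hp.ne_zero
  have hc2n : Nat.Coprime 2 (l ^ r) := by rwa [Nat.coprime_two_left]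
  -- orders
  have hord : orderOf (p : ZMod (l ^ r)) = f := by
    rw [← hf, orderOf_eq_orderOf_iff]
    intro k
    have key : ∀ M : ℕ, ((p : ZMod M) ^ k = 1 ↔ p ^ k ≡ 1 [MOD M]) := by
      intro M
      rw [← ZMod.natCast_eq_natCast_iff]; push_cast; rfl
    rw [key, key, ← Nat.modEq_and_modEq_iff_modEq_mul hc2n]
    have : p ^ k ≡ 1 [MOD 2] := by
      have : Odd (p ^ k) := Odd.pow ⟨m, hm⟩
      rw [Nat.odd_iff] at this
      exact this
    tauto
  have hf2 : 2 * f = (l ^ r).totient := by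
    rw [Nat.totient_mul hc2n, Nat.totient_two, one_mul] at hind
    have := Nat.totient_even (n := l ^ r) (by omega)
    rw [hind]
    exact Nat.mul_div_cancel' this.two_dvd
  have hfo := f_odd hl4 hr hf2
  have hnd := l_not_dvd (p := p) hl3 hr hord hf2
  have hgcd : Nat.gcd (p - 1) (l ^ r) = 1 := by
    apply Nat.Coprime.pow_right
    exact ((Nat.Prime.coprime_iff_not_dvd hl).2 hnd).symm
  have hch : CharP F p := charP_of_injective_algebraMap (algebraMap (ZMod p) F).injective p
  have hrF : ringChar F ≠ 2 := by rw [ringChar.eq F p]; omega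
  -- characters
  have hχN : χ ^ (2 * l ^ r) = 1 := by rw [← hχord]; exact pow_orderOf_eq_one χ
  set ψ := χ ^ (l ^ r + 1) with hψdef
  have hψn : ψ ^ (l ^ r) = 1 := by
    obtain ⟨t, ht⟩ : ∃ t, l ^ r + 1 = 2 * t := by obtain ⟨t, ht⟩ := hnodd; exact ⟨t + 1, by omega⟩
    rw [hψdef, ← pow_mul, ht, show 2 * t * l ^ r = 2 * l ^ r * t by ring, pow_mul, hχN, one_pow]
  have hψord : orderOf ψ = l ^ r := by
    apply Nat.dvd_antisymm (orderOf_dvd_of_pow_eq_one hψn)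
    have h1 : χ ^ ((l ^ r + 1) * orderOf ψ) = 1 := by
      rw [pow_mul]; exact pow_orderOf_eq_one ψ
    have h2 := orderOf_dvd_of_pow_eq_one h1
    rw [hχord] at h2
    have h3 : l ^ r ∣ (l ^ r + 1) * orderOf ψ := (Dvd.intro_left 2 rfl).trans h2
    exact (Nat.coprime_self_add_right.2 (Nat.coprime_one_right _)).dvd_of_dvd_mul_left h3
  have hq : χ ^ (l ^ r) = quadC F := by
    apply eq_quadC hrF
    apply orderOf_eq_prime
    · rw [← pow_mul, mul_comm, hχN]
    · intro h
      have := Nat.le_of_dvd (by omega) (orderOf_dvd_of_pow_eq_one h)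
      omega
  have hχψ : ψ * quadC F = χ := by
    rw [← hq, hψdef, ← pow_add, show l ^ r + 1 + l ^ r = 2 * l ^ r + 1 by ring, pow_succ, hχN, one_mul]
  have hψp : ∀ c : ZMod p, c ≠ 0 → ψ (algebraMap (ZMod p) F c) = 1 := by
    intro c hc
    have hx : algebraMap (ZMod p) F c ≠ 0 := by
      intro h; exact hc ((map_eq_zero_iff _ (algebraMap (ZMod p) F).injective).1 h)
    have h1 : ψ (algebraMap (ZMod p) F c) ^ (p - 1) = 1 := by
      rw [← map_pow, ← map_pow, ZMod.pow_card_sub_one_eq_one hc, map_one, map_one]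
    have h2 : ψ (algebraMap (ZMod p) F c) ^ (l ^ r) = 1 := by
      rw [← MulChar.pow_apply' _ (by omega), hψn, MulChar.one_apply (isUnit_iff_ne_zero.2 hx)]
    have h3 := pow_gcd_eq_one.2 ⟨h1, h2⟩
    rwa [hgcd, pow_one] at h3
  have hψc : ∀ c : ℕ, ¬ p ∣ c → ψ (c : F) = 1 := by
    intro c hc
    have := hψp (c : ZMod p) (by rwa [Ne, ZMod.natCast_eq_zero_iff])
    rwa [map_natCast] at this
  have hψm : ψ (-1) = 1 := by
    have := hψp (-1) (neg_ne_zero.2 one_ne_zero)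
    rwa [map_neg, map_one] at this
  have hψ4 : ψ 4 = 1 := by
    have := hψc 4 (by
      intro h
      have h' : p ∣ 2 ^ 2 := by norm_num; exact h
      have := Nat.le_of_dvd two_pos (hp.dvd_of_dvd_pow h')
      omega)
    exact_mod_cast this
  have hψ2 : ψ ^ 2 ≠ 1 := by
    intro h
    have := Nat.le_of_dvd two_pos (orderOf_dvd_of_pow_eq_one h)
    omega
  have hψ1 : ψ ≠ 1 := by rintro h; rw [h] at hψ2; exact hψ2 (one_pow 2)
  have hχ1 : χ ≠ 1 := by rintro h; rw [h, orderOf_one] at hχord; omega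
  have hdup := gauss_dup hrF ψ (psiF p F) psiF_prim hψ2 hψ4 (by rw [hχψ]; exact hχ1)
  rw [hχψ, quad_lift (by omega) hfo hcard, ← gaussSumN_eq] at hdup
  have hnorm := gauss_norm ψ (psiF p F) psiF_prim hψ1 hψm
  have hG0 : gaussSum ψ (psiF p F) ≠ 0 := by
    intro h
    rw [h, zero_mul, hcard] at hnorm
    push_cast at hnorm
    exact pow_ne_zero _ hp0 hnorm.symm
  have hc2l : Nat.Coprime 2 l := by rwa [Nat.coprime_two_left]
  obtain ⟨hpar7, hpar3⟩ := par_f hr hf2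
  have hleg2 := legendreSym.at_two (p := l) (by omega)
  refine ⟨fun h7 => ?_, fun h3 => ?_⟩
  · have hl2 : legendreSym l ((2 : ℕ) : ℤ) = 1 := by
      push_cast
      rw [hleg2, ZMod.χ₈_nat_eq_if_mod_eight]
      simp [h7]; omega
    rw [gauss_leg_one hl4 hr hpl hord hf2 hc2l hl2 ψ hψn] at hdup
    rw [mul_right_cancel₀ hG0 hdup]
    exact pstar_pow hm hfo (hpar7 h7)
  · have hl2 : legendreSym l ((2 : ℕ) : ℤ) = -1 := by
      push_cast
      rw [hleg2, ZMod.χ₈_nat_eq_if_mod_eight]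
      simp [h3]; omega
    rw [gauss_leg_neg hl4 hr hpl hord hf2 hc2l hl2 ψ hψn, ← gauss_conj ψ _ hψm] at hdup
    obtain ⟨hh, hhb⟩ := h_props (l := l) hl4 hl3
    have hfg := f_ge (l := l) hr hf2
    obtain ⟨e, he⟩ : ∃ e, f = 2 * e + classNumSqrtNeg l := by
      obtain ⟨a, ha⟩ := hfo
      obtain ⟨b, hb⟩ := hh
      exact ⟨a - b, by omega⟩
    obtain ⟨A, b, hAb, hG, hGc⟩ := gauss_pi hl4 hl3 hr hpl hp2 hord hf2 he hcard ψ hψord hψc hψm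
    have hnormC : ((A : ℂ) + b * sqrtNeg l) / 2 * ((A - b * sqrtNeg l) / 2) = (p : ℂ) ^ classNumSqrtNeg l := by
      have h1 := congrArg (Int.cast : ℤ → ℂ) hAb
      push_cast at h1
      linear_combination (-1 / 4 : ℂ) * h1 - (b : ℂ) ^ 2 / 4 * sqrtNeg_sq l
    have hval : gaussSumN p χ 1 = (-1 : ℂ) ^ ((r + 1) * ((p - 1) / 2)) * sqrtPStar p *
            (p : ℂ) ^ (((f : ℤ) - 1) / 2 - (classNumSqrtNeg l : ℤ)) *
            (((A : ℂ) - (b : ℂ) * sqrtNeg l) / 2) ^ 2 := by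
      have hz : (p : ℂ) ^ (((f : ℤ) - 1) / 2 - (classNumSqrtNeg l : ℤ)) =
          (p : ℂ) ^ ((f - 1) / 2) / (p : ℂ) ^ classNumSqrtNeg l := by
        rw [zpow_sub₀ hp0, zpow_natCast]
        congr 1
        rw [← zpow_natCast]
        congr 1
        have := hfo.pos
        omega
      rw [hz]
      have hph : (p : ℂ) ^ classNumSqrtNeg l ≠ 0 := pow_ne_zero _ hp0
      rw [hGc] at hdup
      apply mul_right_cancel₀ hG0
      rw [hdup, pstar_pow hm hfo (hpar3 h3), hG]
      rw [← hnormC] at hph ⊢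
      have hA1 := left_ne_zero_of_mul hph
      have hA2 := right_ne_zero_of_mul hph
      generalize ((A : ℂ) + b * sqrtNeg l) / 2 = u at hA1 hA2 ⊢
      generalize ((A : ℂ) - b * sqrtNeg l) / 2 = w at hA1 hA2 ⊢
      field_simp
    rcases choose_sign hl4 hh (leg_p hl4 hr hord hf2) hAb with hs | hs
    · refine ⟨A, -b, by rw [neg_sq]; exact hAb, hs, ?_⟩
      rw [hval]; push_cast; ring
    · refine ⟨-A, b, by rw [neg_sq]; exact hAb, hs, ?_⟩
      rw [hval]; push_cast; ring
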